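/- arXiv:2503.01575 — 2 statements merged into one kernel-verified Lean document; each statement's English description precedes it below -/
import Mathlib

section
/- Let ε>0, 0<α<1, and β∈[0, ε/(1+ε)). Let {a_n}_{n≥1} and {b_n}_{n≥1} be sequences of positive integers such that n^{1+ε} < a_n ≤ a_{n+1} and b_n ≤ a_n^β · 2^{(log₂ a_n)^α} for all n. If limsup_{n→∞} a_n^{(1/(1−β)+1)^{−n}} = ∞, then for every sequence {c_n}_{n≥1} of positive integers, the infinite product ∏_{n=1}^∞ (1 + b_n/(a_n c_n)) converges to an irrational real number. -/
open Filter

/-!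
Write `u_i` for the denominators `a_n c_n`, sorted increasingly (the product converges
absolutely, so its factors may be rearranged), `v_i` for the corresponding numerators, and put
`L_i = log₂ u_i`, `S_N = ∑_{i<N} L_i`. The product `P` exceeds its `N`-th partial product, a
fraction with denominator `2 ^ S_N`, by a positive amount of at most `P` times the tail
`∑_{i≥N} v_i / u_i`. Hence `P` is irrational as soon as `2 ^ S_N` times the tail takes
arbitrarily small values.

Let `γ = 1 - β` and `K = 1 + 1 / γ`, so that `γ K = γ + 1`. The terms are at most
`2 ^ (L_i ^ α - γ L_i)`, so one needs `S_N` below `γ L_N` by more than order `L_N ^ α`. Choose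
`N` as the first index, beyond some starting point, at which `L_N` exceeds `M θ_{N+1} K ^ N`,
where the weights `θ` increase slowly within `[1, 2)`. Summing the opposite inequalities over the
smaller indices gives `S_N ≤ γ L_N (1 - 1 / (2 (N + 2) ^ 2))`. As `N ≤ log_K L_N`, this gain
beats any multiple of `L_N ^ α`.

As long as `L_j ≥ j`, the terms from `N` on sum to `O(2 ^ (2 L_N ^ α - γ L_N))`. To cope with
slow indices `L_j < j`, fix an index `n` with `L_n / K ^ n` huge, which forces `N ≤ n`, and start
the search after the last slow index before `n`. The terms from `n` on contribute
`O(2 ^ (-δ L_n))` because `u_i ≥ (i + 1) ^ (1 + ε)` and `γ (1 + ε) > 1`, and `L_n` is much larger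
than `S_N`.
-/

section

open Finset Real

lemma irrational_of_forall_exists_int_mul_sub_lt {x : ℝ}
    (h : ∀ η > 0, ∃ d p : ℤ, 0 < |d * x - p| ∧ |d * x - p| < η) : Irrational x := by
  rintro ⟨q, rfl⟩
  have hden : (0 : ℝ) < q.den := mod_cast q.den_pos
  obtain ⟨d, p, hpos, hlt⟩ := h (1 / q.den) (by positivity)
  have hint : |d * (q : ℝ) - p| * q.den = (|d * q.num - p * q.den| : ℤ) := by
    have hq : (q : ℝ) * q.den = q.num := mod_cast q.mul_den_eq_num
    push_cast
    rw [← abs_of_pos hden, ← abs_mul, abs_of_pos hden, sub_mul, mul_assoc, hq]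
  have hone : 1 ≤ |d * (q : ℝ) - p| * q.den := by
    have := mul_pos hpos hden
    rw [hint] at this ⊢
    exact_mod_cast this
  exact hone.not_gt ((lt_div_iff₀ hden).1 hlt)

section OneAddProduct

variable {x : ℕ → ℝ} {P : ℝ}

lemma prod_range_one_add_lt_of_hasProd (hx : ∀ i, 0 < x i) (hP : HasProd (fun i ↦ 1 + x i) P)
    (N : ℕ) : ∏ i ∈ range N, (1 + x i) < P := by
  have hpos (n : ℕ) : 0 < ∏ i ∈ range n, (1 + x i) := prod_pos fun i _ ↦ by linarith [hx i]
  have hmono : StrictMono fun n ↦ ∏ i ∈ range n, (1 + x i) := strictMono_nat_of_lt_succ fun n ↦ by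
    rw [prod_range_succ]
    exact lt_mul_of_one_lt_right (hpos n) (by linarith [hx n])
  exact (hmono N.lt_succ_self).trans_le (hmono.monotone.ge_of_tendsto hP.tendsto_prod_nat _)

lemma sub_prod_range_one_add_le_of_hasProd (hx : ∀ i, 0 ≤ x i) (hs : Summable x)
    (hP : HasProd (fun i ↦ 1 + x i) P) (N : ℕ) :
    P - ∏ i ∈ range N, (1 + x i) ≤ P * ∑' i, x (i + N) := by
  set R := ∑' i, x (i + N)
  have hp (n : ℕ) : 0 ≤ ∏ i ∈ range n, (1 + x i) := prod_nonneg fun i _ ↦ by linarith [hx i]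
  have hP0 : 0 ≤ P := ge_of_tendsto' hP.tendsto_prod_nat hp
  have htail (m : ℕ) : ∏ i ∈ range m, (1 + x (i + N)) ≤ exp R :=
    (prod_one_add_le_exp_sum (range m) fun i ↦ hx (i + N)).trans <| exp_le_exp.2 <|
      ((summable_nat_add_iff N).2 hs).sum_le_tsum _ fun i _ ↦ hx (i + N)
  have hle : P ≤ (∏ i ∈ range N, (1 + x i)) * exp R := by
    refine le_of_tendsto' ((tendsto_add_atTop_iff_nat N).2 hP.tendsto_prod_nat) fun m ↦ ?_
    simp only [add_comm m N, prod_range_add]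
    simpa only [add_comm N] using mul_le_mul_of_nonneg_left (htail m) (hp N)
  have hexp : P * exp (-R) ≤ ∏ i ∈ range N, (1 + x i) := by
    rwa [exp_neg, ← div_eq_mul_inv, div_le_iff₀ (exp_pos R)]
  linarith [mul_le_mul_of_nonneg_left (add_one_le_exp (-R)) hP0]

theorem irrational_of_hasProd_one_add_div {u v : ℕ → ℕ} (hu : ∀ i, 0 < u i) (hv : ∀ i, 0 < v i)
    (hs : Summable fun i ↦ (v i : ℝ) / u i)
    (hsmall : ∀ η > 0, ∃ N, (∏ i ∈ range N, (u i : ℝ)) * ∑' i, (v (i + N) : ℝ) / u (i + N) < η)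
    (hP : HasProd (fun i ↦ 1 + (v i : ℝ) / u i) P) : Irrational P := by
  have hx (i : ℕ) : 0 < (v i : ℝ) / u i := div_pos (mod_cast hv i) (mod_cast hu i)
  have hlt := prod_range_one_add_lt_of_hasProd hx hP
  have hP0 : 0 < P := one_pos.trans (by simpa using hlt 0)
  refine irrational_of_forall_exists_int_mul_sub_lt fun η hη ↦ ?_
  obtain ⟨N, hN⟩ := hsmall (η / P) (by positivity)
  set U := ∏ i ∈ range N, (u i : ℝ)
  have hU : 0 < U := prod_pos fun i _ ↦ mod_cast hu i
  have hUp : U * ∏ i ∈ range N, (1 + (v i : ℝ) / u i) = ∏ i ∈ range N, ((u i : ℝ) + v i) := by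
    rw [← prod_mul_distrib]
    refine prod_congr rfl fun i _ ↦ ?_
    rw [mul_add, mul_one, mul_div_cancel₀ _ (mod_cast (hu i).ne')]
  refine ⟨∏ i ∈ range N, (u i : ℤ), ∏ i ∈ range N, ((u i : ℤ) + v i), ?_⟩
  push_cast
  rw [← hUp, ← mul_sub, abs_of_pos (mul_pos hU (sub_pos.2 (hlt N)))]
  refine ⟨mul_pos hU (sub_pos.2 (hlt N)), ?_⟩
  calc U * (P - ∏ i ∈ range N, (1 + (v i : ℝ) / u i))
      ≤ U * (P * ∑' i, (v (i + N) : ℝ) / u (i + N)) := by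
        gcongr
        exact sub_prod_range_one_add_le_of_hasProd (fun i ↦ (hx i).le) hs hP N
    _ = (U * ∑' i, (v (i + N) : ℝ) / u (i + N)) * P := by ring
    _ < η := (lt_div_iff₀ hP0).1 hN

end OneAddProduct

section Sorting

variable {β : Type*}

lemma exists_perm_monotone_comp_of_tendsto_atTop [LinearOrder β] [NoMaxOrder β] {f : ℕ → β}
    (hf : Tendsto f atTop atTop) : ∃ σ : Equiv.Perm ℕ, Monotone (f ∘ σ) := by
  let key (i : ℕ) : β ×ₗ ℕ := toLex (f i, i)
  let rank (i : ℕ) : ℕ := {j | key j < key i}.ncard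
  have hfin (i : ℕ) : {j | key j < key i}.Finite := by
    have hev := Nat.cofinite_eq_atTop ▸ hf.eventually_gt_atTop (f i)
    refine (eventually_cofinite.1 hev).subset fun j hj ↦ not_lt.2 ?_
    exact Prod.Lex.monotone_fst (key j) (key i) (Set.mem_ofPred.1 hj).le
  have hrank {i j : ℕ} (hij : key i < key j) : rank i < rank j :=
    Set.ncard_lt_ncard ⟨fun k hk ↦ lt_trans hk hij, fun h ↦ (Set.mem_ofPred.1 (h hij)).false⟩
      (hfin j)
  have hinj : Function.Injective rank := fun i j hij ↦ by
    rcases lt_trichotomy (key i) (key j) with h | h | h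
    · exact absurd hij (hrank h).ne
    · exact congrArg (fun k ↦ (ofLex k).2) h
    · exact absurd hij (hrank h).ne'
  have hmono {i j : ℕ} (hij : rank i ≤ rank j) : f i ≤ f j := by
    by_contra! hlt
    exact hij.not_gt (hrank (Prod.Lex.toLex_lt_toLex.2 (Or.inl hlt)))
  have : Infinite (Set.range rank) := (Set.infinite_range_of_injective hinj).to_subtype
  let e := Equiv.ofInjective rank hinj
  let o := Nat.Subtype.orderIsoOfNat (Set.range rank)
  refine ⟨o.toEquiv.trans e.symm, fun i j hij ↦ hmono ?_⟩
  simp only [Equiv.trans_apply, e, Equiv.apply_ofInjective_symm]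
  exact o.monotone hij

lemma le_comp_perm_of_monotone [Preorder β] {f g : ℕ → β} (hf : Monotone f) (hfg : ∀ i, f i ≤ g i)
    {σ : Equiv.Perm ℕ} (hσ : Monotone (g ∘ σ)) (i : ℕ) : f i ≤ g (σ i) := by
  obtain ⟨j, hji, hij⟩ : ∃ j ≤ i, i ≤ σ j := by
    by_contra! hlt
    have hcard : #(range (i + 1)) ≤ #(range i) :=
      card_le_card_of_injOn σ (fun j hj ↦ by
        simpa using hlt j (Nat.lt_succ_iff.1 (by simpa using hj))) σ.injective.injOn
    simp only [card_range] at hcard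
    omega
  exact ((hf hij).trans (hfg _)).trans (hσ hji)

end Sorting

section Asymptotics

variable {α γ δ : ℝ}

lemma eventually_rpow_le_mul (hα : α < 1) (hδ : 0 < δ) : ∀ᶠ x : ℝ in atTop, x ^ α ≤ δ * x := by
  have hlarge := (tendsto_rpow_atTop (sub_pos.2 hα)).eventually_ge_atTop (1 / δ)
  filter_upwards [hlarge, eventually_gt_atTop 0] with x hx hx0
  calc x ^ α ≤ δ * x ^ (1 - α) * x ^ α :=
        le_mul_of_one_le_left (by positivity) ((div_le_iff₀' hδ).1 hx)
    _ = δ * x := by rw [mul_assoc, ← rpow_add hx0, sub_add_cancel, rpow_one]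

lemma eventually_add_one_sq_le_two_rpow_rpow (hα : 0 < α) :
    ∀ᶠ x : ℝ in atTop, (x + 1) ^ 2 ≤ 2 ^ x ^ α := by
  have hlittle := (isLittleO_rpow_exp_pos_mul_atTop (2 / α) (log_pos one_lt_two)).comp_tendsto
    (tendsto_rpow_atTop hα)
  filter_upwards [hlittle.bound (show (0 : ℝ) < 1 / 4 by norm_num), eventually_ge_atTop 1]
    with x hx hx1
  have hsq : (x ^ α) ^ (2 / α) = x ^ 2 := by
    rw [← rpow_mul (by linarith), mul_div_cancel₀ _ hα.ne', rpow_two]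
  simp only [Function.comp_apply, hsq, ← rpow_def_of_pos two_pos] at hx
  rw [norm_of_nonneg (by positivity), norm_of_nonneg (by positivity)] at hx
  nlinarith

lemma eventually_monotoneOn_mul_sub_mul_rpow (hα₀ : 0 ≤ α) (hα₁ : α < 1) (hγ : 0 < γ) (c : ℝ) :
    ∀ᶠ t : ℝ in atTop, MonotoneOn (fun x ↦ γ * x - c * x ^ α) (Set.Ici t) := by
  have hlarge := (tendsto_rpow_atTop (sub_pos.2 hα₁)).eventually_ge_atTop (c / γ)
  filter_upwards [hlarge, eventually_gt_atTop 0] with t ht ht0 x hx y _ hxy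
  have hx0 : 0 < x := ht0.trans_le hx
  have hfactor {z : ℝ} (hz : 0 < z) : γ * z - c * z ^ α = z ^ α * (γ * z ^ (1 - α) - c) := by
    have : z = z ^ α * z ^ (1 - α) := by rw [← rpow_add hz, add_sub_cancel, rpow_one]
    nth_rewrite 1 [this]
    ring
  have hnonneg : 0 ≤ γ * x ^ (1 - α) - c :=
    sub_nonneg.2 <| ((div_le_iff₀' hγ).1 ht).trans <|
      mul_le_mul_of_nonneg_left (rpow_le_rpow ht0.le hx (by linarith)) hγ.le
  simp only [hfactor hx0, hfactor (hx0.trans_le hxy)]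
  have hy0 : 0 ≤ y ^ α := rpow_nonneg (hx0.le.trans hxy) α
  gcongr

lemma isLittleO_rpow_mul_logb_add_sq (hα : α < 1) (b c : ℝ) :
    (fun x : ℝ ↦ x ^ α * (logb b x + c) ^ 2) =o[atTop] (fun x ↦ x) := by
  have hs : 0 < (1 - α) / 2 := by linarith
  have hlog : (fun x ↦ logb b x) =o[atTop] fun x : ℝ ↦ x ^ ((1 - α) / 2) := by
    simp only [logb, div_eq_inv_mul (log _)]
    exact (isLittleO_log_rpow_atTop hs).const_mul_left _
  have hconst : (fun _ ↦ c) =o[atTop] fun x : ℝ ↦ x ^ ((1 - α) / 2) :=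
    Asymptotics.isLittleO_const_left.2 <| Or.inr <|
      tendsto_norm_atTop_atTop.comp (tendsto_rpow_atTop hs)
  refine ((Asymptotics.isBigO_refl (fun x : ℝ ↦ x ^ α) atTop).mul_isLittleO
    ((hlog.add hconst).pow two_pos)).congr' EventuallyEq.rfl ?_
  filter_upwards [eventually_gt_atTop 0] with x hx
  rw [← rpow_mul_natCast hx.le, ← rpow_add hx, Nat.cast_ofNat, div_mul_cancel₀ _ two_ne_zero,
    add_sub_cancel, rpow_one]

lemma tendsto_div_logb_add_sq_sub_rpow_atTop (hα₀ : 0 < α) (hα₁ : α < 1) (hγ : 0 < γ) {b : ℝ}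
    (hb : 1 < b) :
    Tendsto (fun x : ℝ ↦ γ * x / (2 * (logb b x + 2) ^ 2) - 2 * x ^ α) atTop atTop := by
  refine tendsto_atTop_mono' _ ?_ (tendsto_rpow_atTop hα₀)
  filter_upwards [(isLittleO_rpow_mul_logb_add_sq hα₁ b 2).bound (show 0 < γ / 6 by positivity),
    eventually_ge_atTop 1] with x hx hx1
  have hlog : 0 ≤ logb b x := logb_nonneg hb hx1
  rw [norm_of_nonneg (by positivity), norm_of_nonneg (by positivity)] at hx
  rw [le_sub_iff_add_le, le_div_iff₀ (by positivity)]
  linarith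

end Asymptotics

section Selection

/-- The increasing weights `θ_j = 2 - 1 / (j + 1) ∈ [1, 2)` of the thresholds `M θ_{j+1} K ^ j`
that select the truncation index: `θ_{j+1}` exceeds `θ_j` by a relative margin of order
`1 / j ^ 2`, while using `θ` in place of `1` costs only a factor `2`. -/
noncomputable def slackWeight (j : ℕ) : ℝ := 2 - 1 / (j + 1)

lemma one_le_slackWeight (j : ℕ) : 1 ≤ slackWeight j := by
  have : 1 / ((j : ℝ) + 1) ≤ 1 := (div_le_one (by positivity)).2 (by simp)
  rw [slackWeight]
  linarith

lemma slackWeight_le_two (j : ℕ) : slackWeight j ≤ 2 :=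
  sub_le_self _ (by positivity)

lemma slackWeight_mono : Monotone slackWeight := fun i j hij ↦ by
  unfold slackWeight
  gcongr

lemma slackWeight_le_mul_slackWeight_succ (j : ℕ) :
    slackWeight j ≤ (1 - 1 / (2 * ((j : ℝ) + 2) ^ 2)) * slackWeight (j + 1) := by
  have hdiff : slackWeight (j + 1) - slackWeight j = 1 / (((j : ℝ) + 1) * (j + 2)) := by
    simp only [slackWeight, Nat.cast_add, Nat.cast_one]
    field_simp
    ring
  have hslack : slackWeight (j + 1) / (2 * ((j : ℝ) + 2) ^ 2) ≤ 1 / (((j : ℝ) + 1) * (j + 2)) := by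
    calc slackWeight (j + 1) / (2 * ((j : ℝ) + 2) ^ 2) ≤ 2 / (2 * ((j : ℝ) + 2) ^ 2) := by
          gcongr
          exact slackWeight_le_two _
      _ = 1 / (((j : ℝ) + 2) * (j + 2)) := by field_simp
      _ ≤ 1 / (((j : ℝ) + 1) * (j + 2)) := by gcongr; norm_num
  calc slackWeight j ≤ slackWeight (j + 1) - slackWeight (j + 1) / (2 * ((j : ℝ) + 2) ^ 2) := by
        linarith
    _ = (1 - 1 / (2 * ((j : ℝ) + 2) ^ 2)) * slackWeight (j + 1) := by ring

variable {L : ℕ → ℝ} {γ K : ℝ}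

lemma sum_range_le_of_le_mul_pow {c : ℝ} {k N : ℕ} (hγK : γ * K = γ + 1) (hkN : k ≤ N)
    (hk : ∑ i ∈ range k, L i ≤ γ * c * K ^ k)
    (hL : ∀ j, k ≤ j → j < N → L j ≤ c * K ^ j) : ∑ i ∈ range N, L i ≤ γ * c * K ^ N := by
  induction N, hkN using Nat.le_induction with
  | base => exact hk
  | succ N hkN ih =>
    calc ∑ i ∈ range (N + 1), L i = ∑ i ∈ range N, L i + L N := sum_range_succ ..
      _ ≤ γ * c * K ^ N + c * K ^ N :=
        add_le_add (ih fun j hkj hjN ↦ hL j hkj (by omega)) (hL N hkN N.lt_succ_self)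
      _ = (γ + 1) * c * K ^ N := by ring
      _ = γ * c * K ^ (N + 1) := by rw [← hγK]; ring

lemma exists_sum_range_le_of_mul_pow_lt {M : ℝ} {k n : ℕ} (hγ : 0 ≤ γ) (hK : 0 ≤ K) (hM : 0 ≤ M)
    (hγK : γ * K = γ + 1) (hkn : k ≤ n) (hk : ∑ i ∈ range k, L i ≤ γ * M * K ^ k)
    (hn : 2 * M * K ^ n < L n) :
    ∃ N, k ≤ N ∧ N ≤ n ∧ M * K ^ N < L N ∧ ∑ i ∈ range N, L i ≤ 2 * γ * M * K ^ N ∧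
      ∑ i ∈ range N, L i ≤ γ * L N * (1 - 1 / (2 * ((N : ℝ) + 2) ^ 2)) := by
  classical
  let Exceeds (m : ℕ) : Prop := k ≤ m ∧ M * slackWeight (m + 1) * K ^ m < L m
  have hex : Exceeds n := by
    refine ⟨hkn, lt_of_le_of_lt ?_ hn⟩
    rw [mul_comm 2]
    gcongr
    exact slackWeight_le_two _
  obtain ⟨N, ⟨hkN, hLN⟩, hmin⟩ := Nat.findX ⟨n, hex⟩
  have hbelow (j : ℕ) (hkj : k ≤ j) (hjN : j < N) : L j ≤ M * slackWeight N * K ^ j := by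
    have hj : L j ≤ M * slackWeight (j + 1) * K ^ j := by
      by_contra! hlt
      exact hmin j hjN ⟨hkj, hlt⟩
    exact hj.trans (by gcongr; exact slackWeight_mono hjN)
  have hstart : ∑ i ∈ range k, L i ≤ γ * (M * slackWeight N) * K ^ k := by
    refine hk.trans ?_
    gcongr
    exact le_mul_of_one_le_right hM (one_le_slackWeight N)
  have hS := sum_range_le_of_le_mul_pow hγK hkN hstart hbelow
  refine ⟨N, hkN, not_lt.1 fun hnN ↦ hmin n hnN hex, ?_, ?_, ?_⟩
  · refine lt_of_le_of_lt ?_ hLN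
    gcongr
    exact le_mul_of_one_le_right hM (one_le_slackWeight _)
  · calc ∑ i ∈ range N, L i ≤ γ * (M * slackWeight N) * K ^ N := hS
      _ ≤ γ * (M * 2) * K ^ N := by gcongr; exact slackWeight_le_two N
      _ = 2 * γ * M * K ^ N := by ring
  · set s := 1 - 1 / (2 * ((N : ℝ) + 2) ^ 2)
    have hs : 0 ≤ s := by
      refine sub_nonneg.2 ((div_le_one (by positivity)).2 ?_)
      nlinarith [N.cast_nonneg (α := ℝ)]
    calc ∑ i ∈ range N, L i ≤ γ * (M * slackWeight N) * K ^ N := hS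
      _ ≤ γ * (M * (s * slackWeight (N + 1))) * K ^ N := by
        gcongr
        exact slackWeight_le_mul_slackWeight_succ N
      _ = γ * (M * slackWeight (N + 1) * K ^ N) * s := by ring
      _ ≤ γ * L N * s := by gcongr

lemma exists_sum_range_le_sq (hL : Monotone L) (n : ℕ) :
    ∃ k ≤ n, ∑ i ∈ range k, L i ≤ (k : ℝ) ^ 2 ∧ ∀ j, k ≤ j → j < n → (j : ℝ) ≤ L j := by
  induction n with
  | zero => exact ⟨0, le_rfl, by simp, by omega⟩
  | succ n ih =>
    obtain ⟨k, hkn, hk, hfast⟩ := ih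
    rcases le_or_gt (n : ℝ) (L n) with hn | hn
    · refine ⟨k, by omega, hk, fun j hkj hjn ↦ ?_⟩
      rcases Nat.lt_succ_iff_lt_or_eq.1 hjn with hjn | rfl
      exacts [hfast j hkj hjn, hn]
    · refine ⟨n + 1, le_rfl, ?_, by omega⟩
      calc ∑ i ∈ range (n + 1), L i ≤ ∑ _i ∈ range (n + 1), ((n + 1 : ℕ) : ℝ) :=
            sum_le_sum fun i hi ↦ (hL (Nat.lt_succ_iff.1 (mem_range.1 hi))).trans
              (hn.le.trans (by simp))
        _ = ((n + 1 : ℕ) : ℝ) ^ 2 := by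
          simp only [sum_const, card_range, nsmul_eq_mul, sq]

lemma exists_sq_le_mul_pow (hK : 1 < K) : ∃ C : ℝ, ∀ k : ℕ, (k : ℝ) ^ 2 ≤ C * K ^ k := by
  obtain ⟨C, -, hbound⟩ := Asymptotics.bound_of_isBigO_nat_atTop
    (isLittleO_pow_const_const_pow_of_one_lt (R := ℝ) 2 hK).isBigO
  have hK0 : 0 < K := one_pos.trans hK
  refine ⟨C, fun k ↦ ?_⟩
  simpa [abs_of_pos hK0] using hbound (x := k) (pow_pos hK0 k).ne'

theorem frequently_sum_range_le (hL : Monotone L) (hγ : 0 < γ) (hγK : γ * K = γ + 1)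
    (hunbdd : ∀ M, ∃ n, M * K ^ n < L n) {D : ℝ} (hD : 0 ≤ D) :
    ∃ᶠ N in atTop, K ^ N ≤ L N ∧
      ∑ i ∈ range N, L i ≤ γ * L N * (1 - 1 / (2 * ((N : ℝ) + 2) ^ 2)) ∧
      ∃ n ≥ N, (∀ j, N ≤ j → j < n → (j : ℝ) ≤ L j) ∧ D * ∑ i ∈ range N, L i ≤ L n := by
  have hK : 1 < K := by nlinarith
  have hK0 : 0 < K := by linarith
  obtain ⟨C, hsq⟩ := exists_sq_le_mul_pow hK
  refine frequently_atTop.2 fun N₀ ↦ ?_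
  obtain ⟨M, hM⟩ : ∃ M, max (max 1 (C / γ)) (L N₀) ≤ M := ⟨_, le_rfl⟩
  obtain ⟨⟨hM1, hCM⟩, hM₀⟩ := by simpa only [max_le_iff] using hM
  have hM0 : 0 < M := by linarith
  obtain ⟨n, hn⟩ := hunbdd (2 * M + D * (2 * γ * M))
  have hKn : 0 < K ^ n := by positivity
  have hDn : 0 ≤ D * (2 * γ * M) * K ^ n := by positivity
  rw [add_mul] at hn
  obtain ⟨k, hkn, hk, hfast⟩ := exists_sum_range_le_sq hL n
  have hstart : ∑ i ∈ range k, L i ≤ γ * M * K ^ k :=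
    hk.trans ((hsq k).trans (by gcongr; exact (div_le_iff₀' hγ).1 hCM))
  obtain ⟨N, hkN, hNn, hMN, hS, hSN⟩ :=
    exists_sum_range_le_of_mul_pow_lt hγ.le hK0.le hM0.le hγK hkn hstart (by nlinarith)
  have hKN : 1 ≤ K ^ N := one_le_pow₀ hK.le
  have hN : N₀ ≤ N := by
    by_contra! hlt
    nlinarith [hL hlt.le]
  refine ⟨N, hN, by nlinarith, hSN, n, hNn, fun j hNj ↦ hfast j (hkN.trans hNj), ?_⟩
  calc D * ∑ i ∈ range N, L i ≤ D * (2 * γ * M * K ^ n) := by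
        gcongr
        exact hS.trans (by gcongr; exact hK.le)
    _ ≤ L n := by nlinarith

end Selection

section TailBounds

variable {α γ K : ℝ} {L r : ℕ → ℝ}

lemma summable_one_div_natCast_add_one_rpow {q : ℝ} (hq : 1 < q) :
    Summable fun j : ℕ ↦ 1 / ((j : ℝ) + 1) ^ q := by
  simpa using (summable_nat_add_iff 1).2 (summable_one_div_nat_rpow.2 hq)

lemma exists_eventually_sum_Ico_le (hα₀ : 0 < α) (hα₁ : α < 1) (hγ : 0 < γ) (hL : Monotone L)
    (hLtop : Tendsto L atTop atTop) (hr : ∀ i, r i ≤ 2 ^ (L i ^ α - γ * L i)) :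
    ∃ C ≥ 0, ∀ᶠ N : ℕ in atTop, ∀ n : ℕ, (∀ j : ℕ, N ≤ j → j < n → (j : ℝ) ≤ L j) →
      ∑ j ∈ Ico N n, r j ≤ C * 2 ^ (2 * L N ^ α - γ * L N) := by
  have hs : Summable fun j : ℕ ↦ 1 / ((j : ℝ) + 1) ^ 2 := by
    simpa only [rpow_two] using summable_one_div_natCast_add_one_rpow one_lt_two
  refine ⟨∑' j : ℕ, 1 / ((j : ℝ) + 1) ^ 2, tsum_nonneg fun j ↦ by positivity, ?_⟩
  have hsq := eventually_forall_ge_atTop.2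
    (hLtop.eventually (eventually_add_one_sq_le_two_rpow_rpow hα₀))
  have hmono := hLtop.eventually (eventually_monotoneOn_mul_sub_mul_rpow hα₀.le hα₁ hγ 2)
  filter_upwards [hsq, hmono] with N hsqN hmonoN n hfast
  have hterm (j : ℕ) (hj : j ∈ Ico N n) :
      r j ≤ 1 / ((j : ℝ) + 1) ^ 2 * 2 ^ (2 * L N ^ α - γ * L N) := by
    obtain ⟨hNj, hjn⟩ := mem_Ico.1 hj
    have hj1 : ((j : ℝ) + 1) ^ 2 ≤ 2 ^ L j ^ α :=
      le_trans (by gcongr; exact hfast j hNj hjn) (hsqN j hNj)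
    have hexp : 2 * L j ^ α - γ * L j ≤ 2 * L N ^ α - γ * L N := by
      have := hmonoN Set.self_mem_Ici (hL hNj) (hL hNj)
      linarith
    rw [one_div_mul_eq_div, le_div_iff₀ (by positivity)]
    calc r j * ((j : ℝ) + 1) ^ 2 ≤ 2 ^ (L j ^ α - γ * L j) * 2 ^ L j ^ α := by
          gcongr
          exact hr j
      _ = 2 ^ (2 * L j ^ α - γ * L j) := by rw [← rpow_add two_pos]; ring_nf
      _ ≤ 2 ^ (2 * L N ^ α - γ * L N) := rpow_le_rpow_of_exponent_le one_le_two hexp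
  calc ∑ j ∈ Ico N n, r j
      ≤ (∑ j ∈ Ico N n, 1 / ((j : ℝ) + 1) ^ 2) * 2 ^ (2 * L N ^ α - γ * L N) := by
        rw [sum_mul]
        exact sum_le_sum hterm
    _ ≤ (∑' j : ℕ, 1 / ((j : ℝ) + 1) ^ 2) * 2 ^ (2 * L N ^ α - γ * L N) := by
        gcongr
        exact hs.sum_le_tsum _ fun j _ ↦ by positivity

lemma eventually_forall_ge_le_two_rpow_mul {p δ : ℝ} (hα : α < 1) (hδ : 0 < δ) (hδγ : 2 * δ ≤ γ)
    (hL : Monotone L) (hLtop : Tendsto L atTop atTop)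
    (hLlog : ∀ i : ℕ, p * logb 2 ((i : ℝ) + 1) ≤ L i) (hr : ∀ i, r i ≤ 2 ^ (L i ^ α - γ * L i)) :
    ∀ᶠ n : ℕ in atTop, ∀ j ≥ n,
      r j ≤ 2 ^ (-(δ * L n)) * (1 / ((j : ℝ) + 1) ^ ((γ - 2 * δ) * p)) := by
  filter_upwards [eventually_forall_ge_atTop.2 (hLtop.eventually (eventually_rpow_le_mul hα hδ))]
    with n hn j hnj
  have hj : (0 : ℝ) < (j : ℝ) + 1 := by positivity
  have hpow : 1 / ((j : ℝ) + 1) ^ ((γ - 2 * δ) * p) =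
      2 ^ (-((γ - 2 * δ) * (p * logb 2 ((j : ℝ) + 1)))) := by
    nth_rewrite 1 [← rpow_logb two_pos (by norm_num) hj]
    rw [one_div, ← rpow_mul two_pos.le, ← rpow_neg two_pos.le]
    ring_nf
  rw [hpow, ← rpow_add two_pos]
  refine (hr j).trans (rpow_le_rpow_of_exponent_le one_le_two ?_)
  have hlog := mul_le_mul_of_nonneg_left (hLlog j) (sub_nonneg.2 hδγ)
  have hnL := mul_le_mul_of_nonneg_left (hL hnj) hδ.le
  linarith [hn j hnj]

lemma summable_and_exists_eventually_tsum_le {p : ℝ} (hα : α < 1) (hp : 0 < p) (hγp : 1 < γ * p)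
    (hL : Monotone L) (hLtop : Tendsto L atTop atTop)
    (hLlog : ∀ i : ℕ, p * logb 2 ((i : ℝ) + 1) ≤ L i) (hr₀ : ∀ i, 0 ≤ r i)
    (hr : ∀ i, r i ≤ 2 ^ (L i ^ α - γ * L i)) :
    Summable r ∧ ∃ δ > 0, ∃ C ≥ 0, ∀ᶠ n : ℕ in atTop, ∑' i, r (i + n) ≤ C * 2 ^ (-(δ * L n)) := by
  obtain ⟨δ, hδ, hδγ, hq⟩ : ∃ δ > 0, 2 * δ ≤ γ ∧ 1 < (γ - 2 * δ) * p := by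
    have hpγ : 1 / p < γ := (div_lt_iff₀ hp).2 hγp
    have hp' : 0 < 1 / p := by positivity
    refine ⟨(γ - 1 / p) / 4, by linarith, by linarith, ?_⟩
    have : (γ - 2 * ((γ - 1 / p) / 4)) * p = (γ * p + 1) / 2 := by field_simp; ring
    linarith
  have hs := summable_one_div_natCast_add_one_rpow hq
  have hbound := eventually_forall_ge_le_two_rpow_mul hα hδ hδγ hL hLtop hLlog hr
  have hrs : Summable r := by
    obtain ⟨n, hn⟩ := hbound.exists
    refine (summable_nat_add_iff n).1 (Summable.of_nonneg_of_le (fun i ↦ hr₀ _)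
      (fun i ↦ hn (i + n) (by omega)) (((summable_nat_add_iff n).2 hs).mul_left _))
  refine ⟨hrs, δ, hδ, ∑' j : ℕ, 1 / ((j : ℝ) + 1) ^ ((γ - 2 * δ) * p),
    tsum_nonneg fun j ↦ by positivity, ?_⟩
  filter_upwards [hbound] with n hn
  calc ∑' i, r (i + n)
      ≤ ∑' i, 2 ^ (-(δ * L n)) * (1 / (((i + n : ℕ) : ℝ) + 1) ^ ((γ - 2 * δ) * p)) :=
        ((summable_nat_add_iff n).2 hrs).tsum_le_tsum (fun i ↦ hn (i + n) (by omega))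
          (((summable_nat_add_iff n).2 hs).mul_left _)
    _ = 2 ^ (-(δ * L n)) * ∑' i, 1 / (((i + n : ℕ) : ℝ) + 1) ^ ((γ - 2 * δ) * p) := tsum_mul_left
    _ ≤ 2 ^ (-(δ * L n)) * ∑' j : ℕ, 1 / ((j : ℝ) + 1) ^ ((γ - 2 * δ) * p) :=
        mul_le_mul_of_nonneg_left
          (tsum_comp_le_tsum_of_inj hs (fun j ↦ by positivity) (add_left_injective n))
          (by positivity)
    _ = _ := mul_comm _ _

lemma add_sub_le_neg_div_logb_sub_rpow {S x : ℝ} {N : ℕ} (hγ : 0 ≤ γ) (hK : 1 < K)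
    (hx : K ^ N ≤ x) (hS : S ≤ γ * x * (1 - 1 / (2 * ((N : ℝ) + 2) ^ 2))) :
    S + (2 * x ^ α - γ * x) ≤ -(γ * x / (2 * (logb K x + 2) ^ 2) - 2 * x ^ α) := by
  have hx0 : 0 < x := (pow_pos (by linarith) N).trans_le hx
  have hN : (N : ℝ) ≤ logb K x := (le_logb_iff_rpow_le hK hx0).2 (by rwa [rpow_natCast])
  have hslack : γ * x / (2 * (logb K x + 2) ^ 2) ≤ γ * x / (2 * ((N : ℝ) + 2) ^ 2) := by gcongr
  have hexpand : γ * x * (1 - 1 / (2 * ((N : ℝ) + 2) ^ 2)) =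
      γ * x - γ * x / (2 * ((N : ℝ) + 2) ^ 2) := by ring
  linarith

lemma two_rpow_mul_lt_of_le {S y z C t ρ : ℝ} (hC : 0 ≤ C) (ht : t ≤ C * 2 ^ y)
    (hSy : S + y ≤ -z) (hz : C * 2 ^ (-z) < ρ) : 2 ^ S * t < ρ := by
  calc 2 ^ S * t ≤ 2 ^ S * (C * 2 ^ y) := by gcongr
    _ = C * 2 ^ (S + y) := by rw [rpow_add two_pos]; ring
    _ ≤ C * 2 ^ (-z) := by gcongr; exact one_le_two
    _ < ρ := hz

lemma eventually_mul_two_rpow_neg_lt {ι : Type*} {l : Filter ι} {f : ι → ℝ}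
    (hf : Tendsto f l atTop) (C : ℝ) {η : ℝ} (hη : 0 < η) : ∀ᶠ i in l, C * 2 ^ (-f i) < η := by
  have h := ((tendsto_rpow_atBot_of_base_gt_one 2 one_lt_two).comp
    (tendsto_neg_atTop_atBot.comp hf)).const_mul C
  rw [mul_zero] at h
  exact h.eventually_lt_const hη

theorem summable_and_exists_two_rpow_sum_mul_tsum_lt {p : ℝ} (hα₀ : 0 < α) (hα₁ : α < 1)
    (hp : 0 < p) (hγp : 1 < γ * p) (hγK : γ * K = γ + 1) (hL : Monotone L)
    (hLlog : ∀ i : ℕ, p * logb 2 ((i : ℝ) + 1) ≤ L i) (hunbdd : ∀ M, ∃ n, M * K ^ n < L n)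
    (hr₀ : ∀ i, 0 ≤ r i) (hr : ∀ i, r i ≤ 2 ^ (L i ^ α - γ * L i)) :
    Summable r ∧ ∀ η > 0, ∃ N, 2 ^ (∑ i ∈ range N, L i) * ∑' i, r (i + N) < η := by
  have hγ : 0 < γ := pos_of_mul_pos_left (one_pos.trans hγp) hp.le
  have hK : 1 < K := by nlinarith
  have hLtop : Tendsto L atTop atTop :=
    tendsto_atTop_mono hLlog <| ((tendsto_logb_atTop one_lt_two).comp <|
      tendsto_atTop_add_const_right _ _ tendsto_natCast_atTop_atTop).const_mul_atTop hp
  obtain ⟨hrs, δ, hδ, C, hC, htail⟩ :=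
    summable_and_exists_eventually_tsum_le hα₁ hp hγp hL hLtop hLlog hr₀ hr
  obtain ⟨C', hC', hblock⟩ := exists_eventually_sum_Ico_le hα₀ hα₁ hγ hL hLtop hr
  refine ⟨hrs, fun η hη ↦ ?_⟩
  have hblock_small := eventually_mul_two_rpow_neg_lt
    ((tendsto_div_logb_add_sq_sub_rpow_atTop hα₀ hα₁ hγ hK).comp hLtop) C' (half_pos hη)
  have htail_small := eventually_mul_two_rpow_neg_lt
    (hLtop.const_mul_atTop (half_pos hδ)) C (half_pos hη)
  obtain ⟨N, ⟨hKN, hSN, n, hNn, hfast, hSn⟩, hblockN, hblock_smallN, htailN⟩ :=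
    ((frequently_sum_range_le hL hγ hγK hunbdd (D := 2 / δ) (by positivity)).and_eventually
      (hblock.and (hblock_small.and (eventually_forall_ge_atTop.2 (htail.and htail_small))))).exists
  obtain ⟨htailn, htail_smalln⟩ := htailN n hNn
  have hsplit : ∑' i, r (i + N) = ∑ j ∈ Ico N n, r j + ∑' i, r (i + n) := by
    linarith [hrs.sum_add_tsum_nat_add N, hrs.sum_add_tsum_nat_add n, sum_range_add_sum_Ico r hNn]
  have hSn' : ∑ i ∈ range N, L i + -(δ * L n) ≤ -(δ / 2 * L n) := by
    have := mul_le_mul_of_nonneg_left hSn (half_pos hδ).le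
    rw [← mul_assoc, div_mul_div_cancel₀ two_ne_zero, div_self hδ.ne', one_mul] at this
    linarith
  refine ⟨N, ?_⟩
  rw [hsplit, mul_add, ← add_halves η]
  exact add_lt_add
    (two_rpow_mul_lt_of_le hC' (hblockN n hfast)
      (add_sub_le_neg_div_logb_sub_rpow hγ.le hK hKN hSN) hblock_smallN)
    (two_rpow_mul_lt_of_le hC htailn hSn' htail_smalln)

end TailBounds

section Irrationality

variable {α β γ K p : ℝ}

theorem exists_hasProd_one_add_div_irrational_of_monotone {u v : ℕ → ℕ} (hα₀ : 0 < α) (hα₁ : α < 1)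
    (hp : 0 < p) (hγp : 1 < γ * p) (hγK : γ * K = γ + 1) (hu : Monotone u)
    (hup : ∀ i : ℕ, ((i : ℝ) + 1) ^ p ≤ u i) (hunbdd : ∀ M, ∃ n, M * K ^ n < logb 2 (u n))
    (hv : ∀ i, 0 < v i) (hvu : ∀ i, (v i : ℝ) / u i ≤ 2 ^ (logb 2 (u i) ^ α - γ * logb 2 (u i))) :
    ∃ P, HasProd (fun i ↦ 1 + (v i : ℝ) / u i) P ∧ Irrational P := by
  have hpow (i : ℕ) : 0 < ((i : ℝ) + 1) ^ p := rpow_pos_of_pos (by positivity) p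
  have hu₀ (i : ℕ) : 0 < (u i : ℝ) := (hpow i).trans_le (hup i)
  have hlog_mono : Monotone fun i ↦ logb 2 (u i) := fun i j hij ↦
    logb_le_logb_of_le one_lt_two (hu₀ i) (mod_cast hu hij)
  have hlog (i : ℕ) : p * logb 2 ((i : ℝ) + 1) ≤ logb 2 (u i) := by
    rw [← logb_rpow_eq_mul_logb_of_pos (by positivity)]
    exact logb_le_logb_of_le one_lt_two (hpow i) (hup i)
  have hprod (N : ℕ) : ∏ i ∈ range N, (u i : ℝ) = 2 ^ ∑ i ∈ range N, logb 2 (u i : ℝ) := by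
    rw [rpow_sum_of_pos two_pos]
    exact prod_congr rfl fun i _ ↦ (rpow_logb two_pos (by norm_num) (hu₀ i)).symm
  obtain ⟨hs, hsmall⟩ := summable_and_exists_two_rpow_sum_mul_tsum_lt hα₀ hα₁ hp hγp hγK
    hlog_mono hlog hunbdd (fun i ↦ by positivity) hvu
  obtain ⟨P, hP⟩ := Real.multipliable_one_add_of_summable hs
  refine ⟨P, hP, irrational_of_hasProd_one_add_div (fun i ↦ mod_cast hu₀ i) hv hs
    (fun η hη ↦ (hsmall η hη).imp fun N hN ↦ ?_) hP⟩
  rwa [hprod]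

theorem exists_hasProd_one_add_div_irrational {a u v : ℕ → ℕ} (hα₀ : 0 < α) (hα₁ : α < 1)
    (hp : 0 < p) (hγp : 1 < γ * p) (hγK : γ * K = γ + 1) (ha : Monotone a)
    (hap : ∀ i : ℕ, ((i : ℝ) + 1) ^ p ≤ a i) (hunbdd : ∀ M, ∃ n, M * K ^ n < logb 2 (a n))
    (hau : ∀ i, a i ≤ u i) (hv : ∀ i, 0 < v i)
    (hvu : ∀ i, (v i : ℝ) / u i ≤ 2 ^ (logb 2 (u i) ^ α - γ * logb 2 (u i))) :
    ∃ P, HasProd (fun i ↦ 1 + (v i : ℝ) / u i) P ∧ Irrational P := by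
  have hutop : Tendsto u atTop atTop := by
    have hpow : Tendsto (fun i : ℕ ↦ ((i : ℝ) + 1) ^ p) atTop atTop :=
      (tendsto_rpow_atTop hp).comp (tendsto_atTop_add_const_right _ _ tendsto_natCast_atTop_atTop)
    exact tendsto_natCast_atTop_iff.1
      (tendsto_atTop_mono (fun i ↦ (hap i).trans (mod_cast hau i)) hpow)
  obtain ⟨σ, hσ⟩ := exists_perm_monotone_comp_of_tendsto_atTop hutop
  have hauσ (i : ℕ) : (a i : ℝ) ≤ u (σ i) := mod_cast le_comp_perm_of_monotone ha hau hσ i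
  have ha₀ (i : ℕ) : 0 < (a i : ℝ) := (rpow_pos_of_pos (by positivity) p).trans_le (hap i)
  obtain ⟨P, hP, hirr⟩ := exists_hasProd_one_add_div_irrational_of_monotone hα₀ hα₁ hp hγp hγK
    hσ (fun i ↦ (hap i).trans (hauσ i))
    (fun M ↦ (hunbdd M).imp fun n hn ↦
      hn.trans_le (logb_le_logb_of_le one_lt_two (ha₀ n) (hauσ n)))
    (fun i ↦ hv (σ i)) (fun i ↦ hvu (σ i))
  exact ⟨P, (Equiv.hasProd_iff σ).1 hP, hirr⟩

lemma div_le_two_rpow_logb_rpow_sub {a b u : ℝ} (hα : 0 ≤ α) (hβ : 0 ≤ β) (ha : 1 ≤ a)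
    (hau : a ≤ u) (hb : b ≤ a ^ β * 2 ^ logb 2 a ^ α) :
    b / u ≤ 2 ^ (logb 2 u ^ α - (1 - β) * logb 2 u) := by
  have ha₀ : 0 < a := by linarith
  have hu₀ : 0 < u := by linarith
  rw [div_le_iff₀ hu₀]
  calc b ≤ a ^ β * 2 ^ logb 2 a ^ α := hb
    _ ≤ u ^ β * 2 ^ logb 2 u ^ α := by
      have := logb_nonneg one_lt_two ha
      have := logb_le_logb_of_le one_lt_two ha₀ hau
      gcongr
      exact one_le_two
    _ = 2 ^ (logb 2 u * β + logb 2 u ^ α) := by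
      rw [rpow_add two_pos, rpow_mul two_pos.le, rpow_logb two_pos (by norm_num) hu₀]
    _ = 2 ^ (logb 2 u ^ α - (1 - β) * logb 2 u + logb 2 u) := by ring_nf
    _ = 2 ^ (logb 2 u ^ α - (1 - β) * logb 2 u) * u := by
      rw [rpow_add two_pos _ (logb 2 u), rpow_logb two_pos (by norm_num) hu₀]

lemma exists_mul_pow_lt_logb_of_limsup_eq_top {a : ℕ → ℝ} (hK : 1 ≤ K)
    (ha : ∀ n, 1 ≤ n → 0 < a n)
    (hlimsup : limsup (fun n : ℕ ↦ ((a n ^ K ^ (-(n : ℝ)) : ℝ) : EReal)) atTop = ⊤) (M : ℝ) :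
    ∃ n, M * K ^ n < logb 2 (a (n + 1)) := by
  have hfreq : ∃ᶠ n : ℕ in atTop, (((2 : ℝ) ^ |M| : ℝ) : EReal) < (a n ^ K ^ (-(n : ℝ)) : ℝ) :=
    frequently_lt_of_lt_limsup (by isBoundedDefault) (hlimsup ▸ EReal.coe_lt_top _)
  obtain ⟨m, hm, hlt⟩ := frequently_atTop.1 hfreq 1
  obtain ⟨n, rfl⟩ := Nat.exists_eq_add_of_le' hm
  have hK₀ : 0 < K := by linarith
  have hlog := logb_lt_logb one_lt_two (by positivity) (EReal.coe_lt_coe_iff.1 hlt)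
  rw [logb_rpow two_pos (by norm_num), logb_rpow_eq_mul_logb_of_pos (ha _ hm), rpow_neg hK₀.le,
    rpow_natCast, inv_mul_eq_div, lt_div_iff₀ (by positivity)] at hlog
  refine ⟨n, lt_of_le_of_lt ?_ hlog⟩
  gcongr
  exacts [le_abs_self M, n.le_succ]

end Irrationality

lemma tendsto_prod_Icc_one_of_hasProd {M : Type*} [CommMonoid M] [TopologicalSpace M]
    {f : ℕ → M} {P : M} (h : HasProd (fun i ↦ f (i + 1)) P) :
    Tendsto (fun N ↦ ∏ n ∈ Icc 1 N, f n) atTop (nhds P) := by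
  refine h.tendsto_prod_nat.congr fun N ↦ ?_
  rw [← Ico_add_one_right_eq_Icc, prod_Ico_eq_prod_range]
  simp only [Nat.add_sub_cancel, add_comm 1]

end

/-- (Theorem `products over Q`, irrationality part.)
If `{a_n}` and `{b_n}` are positive integers with `n^(1+ε) < a_n ≤ a_{n+1}`,
`b_n ≤ a_n^β · 2^((log₂ a_n)^α)`, and `limsup a_n^((1/(1-β)+1)^(-n)) = ∞`, then
for every sequence `{c_n}` of positive integers the product `∏ (1 + b_n/(a_n c_n))`
converges to an irrational number. -/
theorem stmt_0 (ε α β : ℝ) (hε : 0 < ε) (hα : 0 < α ∧ α < 1)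
    (hβ : 0 ≤ β ∧ β < ε / (1 + ε))
    (a b : ℕ → ℕ)
    (hpos : ∀ n : ℕ, 1 ≤ n → 0 < a n ∧ 0 < b n)
    (ha : ∀ n : ℕ, 1 ≤ n → (n : ℝ) ^ (1 + ε) < (a n : ℝ) ∧ a n ≤ a (n + 1))
    (hb : ∀ n : ℕ, 1 ≤ n →
      (b n : ℝ) ≤ (a n : ℝ) ^ β * 2 ^ (Real.logb 2 (a n : ℝ) ^ α))
    (hlimsup : Filter.limsup (fun n : ℕ =>
        (((a n : ℝ) ^ ((1 / (1 - β) + 1) ^ (-(n : ℝ))) : ℝ) : EReal)) Filter.atTop = ⊤) :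
    ∀ c : ℕ → ℕ, (∀ n, 0 < c n) →
      ∃ L : ℝ,
        Tendsto (fun N => ∏ n ∈ Finset.Icc 1 N,
          (1 + (b n : ℝ) / ((a n : ℝ) * (c n : ℝ)))) atTop (nhds L) ∧
        Irrational L := by
  intro c hc
  have hp : 0 < 1 + ε := by linarith
  have hγp : 1 < (1 - β) * (1 + ε) := by linarith [(lt_div_iff₀ hp).1 hβ.2]
  have hγ : 0 < 1 - β := pos_of_mul_pos_left (one_pos.trans hγp) hp.le
  have hγK : (1 - β) * (1 / (1 - β) + 1) = 1 - β + 1 := by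
    rw [mul_add, mul_one_div_cancel hγ.ne', mul_one, add_comm]
  have hK : 1 ≤ 1 / (1 - β) + 1 := le_add_of_nonneg_left (by positivity)
  have hac (n : ℕ) : a n ≤ a n * c n := Nat.le_mul_of_pos_right _ (hc n)
  obtain ⟨P, hP, hirr⟩ := exists_hasProd_one_add_div_irrational (a := fun i ↦ a (i + 1))
    (u := fun i ↦ a (i + 1) * c (i + 1)) (v := fun i ↦ b (i + 1)) hα.1 hα.2 hp hγp hγK
    (monotone_nat_of_le_succ fun i ↦ (ha (i + 1) (by omega)).2)
    (fun i ↦ by simpa using (ha (i + 1) (by omega)).1.le)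
    (exists_mul_pow_lt_logb_of_limsup_eq_top hK (fun n hn ↦ mod_cast (hpos n hn).1) hlimsup)
    (fun i ↦ hac (i + 1)) (fun i ↦ (hpos (i + 1) (by omega)).2)
    (fun i ↦ div_le_two_rpow_logb_rpow_sub hα.1.le hβ.1 (mod_cast (hpos (i + 1) (by omega)).1)
      (mod_cast hac (i + 1)) (hb (i + 1) (by omega)))
  push_cast at hP
  exact ⟨P, tendsto_prod_Icc_one_of_hasProd hP, hirr⟩
end

section
/- Let ε>0, 0<α<1, and β∈[0, ε/(1+ε)). Let {a_n}_{n≥1} and {b_n}_{n≥1} be sequences of positive integers such that n^{1+ε} < a_n ≤ a_{n+1} and b_n ≤ a_n^β · 2^{(log₂ a_n)^α} for all n. If there exists δ>0 such that limsup_{n→∞} a_n^{((2+δ)/(1−β)+1)^{−n}} = ∞, then for every sequence {c_n}_{n≥1} of positive integers, the infinite product ∏_{n=1}^∞ (1 + b_n/(a_n c_n)) converges to a real number that is transcendental over ℚ. -/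
open Filter

/-!
Sort the numbers `a n * c n` increasingly, so that the partial products over the sorted indices are
rational approximations of the limit `L`, with the product `q` of the first sorted terms as a
denominator. The growth hypothesis produces infinitely many indices at which the next sorted term
is so large compared with `q` that the tail of the product is smaller than `q ^ (-p)` for some
`p > 2`. By Roth's theorem `L` is then not an irrational algebraic number, and the approximations
also differ from `L`, which excludes rational `L`.

Roth's theorem itself is proved by playing two estimates for the index of an auxiliary polynomial
against each other. Siegel's lemma and Chernoff's bound provide an integer polynomial in `n`
variables of large index at `(α, …, α)`, hence of large index at a point `(ξ 1, …, ξ n)` of very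
good approximations. Roth's lemma shows that the latter index is small: by induction on the number
of variables, a generalized Wronskian of the polynomial factors into polynomials in fewer variables
whose heights are controlled, and Gauss's lemma settles the case of one variable.
-/

namespace RothTheorem

open MvPolynomial

noncomputable section

section HasseDerivative

variable {σ R A : Type*} [Fintype σ] [CommSemiring R] [CommSemiring A] [Algebra R A]

/-- The product `∏ i, (ν i choose μ i)` of binomial coefficients attached to two multi-indices. -/
def multiChoose (ν μ : σ →₀ ℕ) : ℕ := ∏ i, (ν i).choose (μ i)

lemma multiChoose_eq_zero {ν μ : σ →₀ ℕ} (h : ¬ μ ≤ ν) : multiChoose ν μ = 0 := by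
  obtain ⟨i, hi⟩ := not_forall.mp (mt Finsupp.le_def.mpr h)
  exact Finset.prod_eq_zero (Finset.mem_univ i) (Nat.choose_eq_zero_of_lt (not_le.mp hi))

lemma multiChoose_zero_right (ν : σ →₀ ℕ) : multiChoose ν 0 = 1 := by
  simp [multiChoose]

lemma multiChoose_mul_multiChoose_sub (ν μ l : σ →₀ ℕ) :
    multiChoose ν μ * multiChoose (ν - μ) l = multiChoose (l + μ) μ * multiChoose ν (l + μ) := by
  simp only [multiChoose, ← Finset.prod_mul_distrib]
  refine Finset.prod_congr rfl fun i _ => ?_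
  have := Nat.choose_mul (n := ν i) (k := l i + μ i) (s := μ i) (by omega)
  rw [Finsupp.add_apply, Finsupp.tsub_apply, mul_comm (Nat.choose _ _) (Nat.choose (ν i) _), this,
    Nat.add_sub_cancel]

lemma multiChoose_mul_succ (l μ : σ →₀ ℕ) (j : σ) :
    multiChoose (l + (μ + Finsupp.single j 1)) μ * (l j + 1) =
      (μ j + 1) * multiChoose (l + (μ + Finsupp.single j 1)) (μ + Finsupp.single j 1) := by
  classical
  set κ := μ + Finsupp.single j 1 with hκ
  have hfactor : ∀ i ∈ Finset.univ.erase j,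
      ((l + κ) i).choose (μ i) = ((l + κ) i).choose (κ i) := fun i hi => by
    simp [hκ, (Finset.ne_of_mem_erase hi).symm]
  have hj : ((l + κ) j).choose (μ j) * (l j + 1) = (μ j + 1) * ((l + κ) j).choose (κ j) := by
    have := Nat.choose_succ_right_eq (l j + (μ j + 1)) (μ j)
    simp only [hκ, Finsupp.add_apply, Finsupp.single_eq_same]
    rw [mul_comm (μ j + 1), this]
    congr 1
    omega
  simp only [multiChoose]
  rw [← Finset.mul_prod_erase _ _ (Finset.mem_univ j),
    ← Finset.mul_prod_erase _ (fun i => ((l + κ) i).choose (κ i)) (Finset.mem_univ j),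
    Finset.prod_congr rfl hfactor, mul_right_comm, hj, mul_assoc]

/-- The divided partial derivative `(1 / μ!) ∂^μ`, given on monomials by
`X ^ ν ↦ (ν choose μ) X ^ (ν - μ)` so that it makes sense over any semiring. -/
def hasseDeriv (μ : σ →₀ ℕ) : MvPolynomial σ R →ₗ[R] MvPolynomial σ R :=
  (basisMonomials σ R).constr R fun ν => monomial (ν - μ) (multiChoose ν μ : R)

lemma hasseDeriv_monomial (μ ν : σ →₀ ℕ) (c : R) :
    hasseDeriv μ (monomial ν c) = monomial (ν - μ) (c * multiChoose ν μ) := by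
  have h : (monomial ν c : MvPolynomial σ R) = c • basisMonomials σ R ν := by
    simp [smul_monomial]
  rw [h, map_smul, hasseDeriv, Module.Basis.constr_basis, smul_monomial, smul_eq_mul]

lemma coeff_hasseDeriv (μ l : σ →₀ ℕ) (P : MvPolynomial σ R) :
    coeff l (hasseDeriv μ P) = multiChoose (l + μ) μ * coeff (l + μ) P := by
  classical
  induction P using MvPolynomial.induction_on' with
  | monomial ν c =>
    rw [hasseDeriv_monomial, coeff_monomial, coeff_monomial]
    by_cases h : μ ≤ ν
    · by_cases hν : ν = l + μ
      · rw [if_pos (by simp [hν]), if_pos hν, hν, mul_comm]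
      · rw [if_neg fun h' => hν (by rw [← h', tsub_add_cancel_of_le h]), if_neg hν, mul_zero]
    · have hν : ν ≠ l + μ := by
        rintro rfl
        exact h le_add_self
      rw [multiChoose_eq_zero h, if_neg hν]
      simp
  | add p q hp hq => rw [map_add, coeff_add, hp, hq, coeff_add, mul_add]

lemma hasseDeriv_zero (P : MvPolynomial σ R) : hasseDeriv 0 P = P := by
  ext l
  rw [coeff_hasseDeriv, add_zero, multiChoose_zero_right, Nat.cast_one, one_mul]

lemma pderiv_hasseDeriv (j : σ) (μ : σ →₀ ℕ) (P : MvPolynomial σ R) :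
    pderiv j (hasseDeriv μ P) = (μ j + 1) • hasseDeriv (μ + Finsupp.single j 1) P := by
  ext l
  have key := congrArg (Nat.cast (R := R)) (multiChoose_mul_succ l μ j)
  push_cast at key
  rw [coeff_pderiv, coeff_smul, coeff_hasseDeriv, coeff_hasseDeriv, nsmul_eq_mul,
    show l + Finsupp.single j 1 + μ = l + (μ + Finsupp.single j 1) by abel,
    mul_right_comm, key]
  push_cast
  rw [mul_assoc]

/-- The substitution `X ↦ X + ξ`, which moves the point `ξ` to the origin. The coefficients of
`translate ξ P` are the Taylor coefficients of `P` at `ξ`; `ξ` may lie in an `R`-algebra. -/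
def translate (ξ : σ → A) : MvPolynomial σ R →ₐ[R] MvPolynomial σ A :=
  aeval fun i => X i + C (ξ i)

omit [Fintype σ] in
lemma X_add_C_pow (i : σ) (a : A) (k : ℕ) :
    (X i + C a : MvPolynomial σ A) ^ k =
      ∑ j ∈ Finset.range (k + 1), monomial (Finsupp.single i j) (a ^ (k - j) * k.choose j) := by
  rw [add_pow]
  refine Finset.sum_congr rfl fun j _ => ?_
  rw [X_pow_eq_monomial, ← C_pow, ← map_natCast (C : A →+* MvPolynomial σ A), mul_assoc, ← C_mul,
    mul_comm, C_mul_monomial, mul_one]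

lemma coeff_prod_X_add_C_pow (ξ : σ → A) (l ν : σ →₀ ℕ) :
    coeff l (∏ i, (X i + C (ξ i)) ^ ν i : MvPolynomial σ A) =
      multiChoose ν l * ∏ i, ξ i ^ (ν i - l i) := by
  classical
  have hmonomial : ∀ k : σ → ℕ,
      ∏ i, monomial (Finsupp.single i (k i)) (ξ i ^ (ν i - k i) * ((ν i).choose (k i) : A)) =
        monomial (Finsupp.equivFunOnFinite.symm k)
          (∏ i, (ξ i ^ (ν i - k i) * ((ν i).choose (k i) : A))) := fun k => by
    rw [← MvPolynomial.monomial_sum_prod]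
    congr 1
    conv_rhs => rw [← Finsupp.univ_sum_single (Finsupp.equivFunOnFinite.symm k)]
    rfl
  simp only [X_add_C_pow, Finset.prod_univ_sum, coeff_sum, hmonomial, coeff_monomial]
  simp only [Equiv.symm_apply_eq, Finset.sum_ite_eq', Fintype.mem_piFinset, Finset.mem_range,
    Finsupp.equivFunOnFinite_apply, Finset.prod_mul_distrib, ← Nat.cast_prod]
  split_ifs with h
  · exact mul_comm _ _
  · have hl : ¬ l ≤ ν := fun hle => h fun i => Nat.lt_succ_of_le (hle i)
    rw [multiChoose_eq_zero hl, Nat.cast_zero, zero_mul]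

lemma coeff_translate_monomial (ξ : σ → A) (l ν : σ →₀ ℕ) (c : R) :
    coeff l (translate ξ (monomial ν c)) =
      algebraMap R A c * (multiChoose ν l * ∏ i, ξ i ^ (ν i - l i)) := by
  rw [translate, aeval_monomial, MvPolynomial.algebraMap_apply, coeff_C_mul,
    Finsupp.prod_fintype _ _ fun _ => pow_zero _, coeff_prod_X_add_C_pow]

lemma coeff_translate (ξ : σ → A) (l : σ →₀ ℕ) (P : MvPolynomial σ R) :
    coeff l (translate ξ P) = ∑ ν ∈ P.support,
      algebraMap R A (coeff ν P) * (multiChoose ν l * ∏ i, ξ i ^ (ν i - l i)) := by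
  conv_lhs => rw [P.as_sum]
  simp only [map_sum, coeff_sum, coeff_translate_monomial]

lemma coeff_translate_hasseDeriv (ξ : σ → A) (μ l : σ →₀ ℕ) (P : MvPolynomial σ R) :
    coeff l (translate ξ (hasseDeriv μ P)) =
      multiChoose (l + μ) μ * coeff (l + μ) (translate ξ P) := by
  induction P using MvPolynomial.induction_on' with
  | monomial ν c =>
    have hexp : ∀ i, (ν - μ) i - l i = ν i - (l + μ) i := fun i => by
      rw [Finsupp.add_apply, Finsupp.tsub_apply]
      omega
    have hchoose := congrArg (Nat.cast (R := A)) (multiChoose_mul_multiChoose_sub ν μ l)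
    push_cast at hchoose
    simp only [hasseDeriv_monomial, coeff_translate_monomial, hexp, map_mul, map_natCast]
    rw [mul_assoc, ← mul_assoc (multiChoose ν μ : A), hchoose]
    ring
  | add p q hp hq => rw [map_add, map_add, map_add, coeff_add, hp, hq, coeff_add, mul_add]

end HasseDerivative

section Wronskian

variable {σ R : Type*} [CommRing R]

lemma coeff_X_mul_pderiv (j : σ) (P : MvPolynomial σ R) (l : σ →₀ ℕ) :
    coeff l (X j * pderiv j P) = l j * coeff l P := by
  classical
  rw [coeff_X_mul']
  split_ifs with hl
  · have hj : 1 ≤ l j := Nat.one_le_iff_ne_zero.mpr (Finsupp.mem_support_iff.mp hl)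
    rw [coeff_pderiv, tsub_add_cancel_of_le (Finsupp.single_le_iff.mpr hj), Finsupp.tsub_apply,
      Finsupp.single_eq_same, Nat.cast_sub hj, Nat.cast_one, sub_add_cancel, mul_comm]
  · rw [Finsupp.notMem_support_iff.mp hl, Nat.cast_zero, zero_mul]

variable [IsDomain R] [CharZero R]

lemma degree_eq_of_forall_mul_pderiv_eq (m : MonomialOrder σ) {f g : MvPolynomial σ R}
    (hf : f ≠ 0) (hg : g ≠ 0) (h : ∀ j, g * pderiv j f = pderiv j g * f) :
    m.degree f = m.degree g := by
  have hle (j : σ) (P : MvPolynomial σ R) :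
      m.toSyn (m.degree (X j * pderiv j P)) ≤ m.toSyn (m.degree P) := by
    refine m.degree_le_degree_of_support_subset fun l hl => ?_
    rw [mem_support_iff, coeff_X_mul_pderiv] at hl
    exact mem_support_iff.mpr (right_ne_zero_of_mul hl)
  refine Finsupp.ext fun j => ?_
  have hleft := m.coeff_mul_of_add_of_degree_le le_rfl (hle j f) (f := g)
  have hright := m.coeff_mul_of_add_of_degree_le (hle j g) le_rfl (g := f)
  rw [mul_left_comm, h j, ← mul_assoc, hright, coeff_X_mul_pderiv, coeff_X_mul_pderiv] at hleft
  have hlead : m.leadingCoeff g * m.leadingCoeff f ≠ 0 :=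
    mul_ne_zero (m.leadingCoeff_ne_zero_iff.mpr hg) (m.leadingCoeff_ne_zero_iff.mpr hf)
  have hcast : (m.degree f j : R) = m.degree g j :=
    mul_right_cancel₀ hlead (by unfold MonomialOrder.leadingCoeff; linear_combination -hleft)
  exact_mod_cast hcast

lemma exists_leadingCoeff_smul_eq_smul (m : MonomialOrder σ) {f g : MvPolynomial σ R}
    (hg : g ≠ 0) (h : ∀ j, g * pderiv j f = pderiv j g * f) :
    ∃ c : R, m.leadingCoeff g • f = c • g := by
  refine ⟨coeff (m.degree g) f, sub_eq_zero.mp (by_contra fun hne => ?_)⟩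
  -- The difference satisfies the same equations, so its degree is that of `g`, where it vanishes.
  have hdeg := degree_eq_of_forall_mul_pderiv_eq m hne hg fun j => by
    rw [map_sub, Derivation.map_smul, Derivation.map_smul]
    simp only [smul_eq_C_mul]
    linear_combination C (m.leadingCoeff g) * h j
  refine m.leadingCoeff_ne_zero_iff.mpr hne ?_
  rw [MonomialOrder.leadingCoeff, hdeg, coeff_sub, coeff_smul, coeff_smul, smul_eq_mul,
    smul_eq_mul, MonomialOrder.leadingCoeff, mul_comm, sub_self]

variable [Fintype σ]

/-- The generalized Wronskian matrix `(∂_{μ i} φ k)` of the polynomials `φ`. -/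
def wronskianMatrix {ι κ : Type*} (μ : ι → σ →₀ ℕ) (φ : κ → MvPolynomial σ R) :
    Matrix ι κ (MvPolynomial σ R) :=
  Matrix.of fun i k => hasseDeriv (μ i) (φ k)

/-- The cofactors of the last row of a square generalized Wronskian. -/
def lastRowCofactor {s : ℕ} (μ : Fin s → σ →₀ ℕ) (φ : Fin (s + 1) → MvPolynomial σ R)
    (k : Fin (s + 1)) : MvPolynomial σ R :=
  (-1) ^ (s + k : ℕ) * (wronskianMatrix μ fun k' => φ (k.succAbove k')).det

omit [IsDomain R] [CharZero R] in
lemma sum_lastRowCofactor_mul {s : ℕ} (μ : Fin s → σ →₀ ℕ) (ν : σ →₀ ℕ)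
    (φ : Fin (s + 1) → MvPolynomial σ R) :
    ∑ k, lastRowCofactor μ φ k * hasseDeriv ν (φ k) =
      (wronskianMatrix (Fin.snoc μ ν) φ).det := by
  rw [Matrix.det_succ_row _ (Fin.last s)]
  refine Finset.sum_congr rfl fun k _ => ?_
  have hlast : wronskianMatrix (Fin.snoc μ ν) φ (Fin.last s) k = hasseDeriv ν (φ k) := by
    simp [wronskianMatrix]
  rw [lastRowCofactor, mul_right_comm, hlast, Fin.val_last]
  congr 2
  ext i k'
  simp [wronskianMatrix]

omit [IsDomain R] [CharZero R] in
lemma sum_pderiv_mul_hasseDeriv_eq_zero {κ : Type*} [Fintype κ] {s : ℕ}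
    {c φ : κ → MvPolynomial σ R}
    (hc : ∀ ν : σ →₀ ℕ, ∑ j, ν j ≤ s → ∑ k, c k * hasseDeriv ν (φ k) = 0)
    (j : σ) (ν : σ →₀ ℕ) (hν : ∑ j, ν j < s) :
    ∑ k, pderiv j (c k) * hasseDeriv ν (φ k) = 0 := by
  classical
  have hzero := congrArg (pderiv j) (hc ν hν.le)
  have hsucc := hc (ν + Finsupp.single j 1) (by
    simp only [Finsupp.add_apply, Finset.sum_add_distrib, Finsupp.single_apply,
      Finset.sum_ite_eq, Finset.mem_univ, if_true]
    exact hν)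
  simp only [map_sum, map_zero, Derivation.leibniz, pderiv_hasseDeriv, smul_eq_mul, mul_smul_comm,
    Finset.sum_add_distrib, ← Finset.smul_sum, hsucc, smul_zero, zero_add] at hzero
  simpa only [mul_comm] using hzero

omit [CharZero R] in
lemma mul_pderiv_eq_pderiv_mul_of_forall_sum_eq_zero {s : ℕ} {μ : Fin s → σ →₀ ℕ}
    (hμ : ∀ i, ∑ j, μ i j ≤ i) {c φ : Fin (s + 1) → MvPolynomial σ R}
    (hdet : (wronskianMatrix μ fun k => φ k.castSucc).det ≠ 0)
    (hc : ∀ ν : σ →₀ ℕ, ∑ j, ν j ≤ s → ∑ k, c k * hasseDeriv ν (φ k) = 0)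
    (j : σ) (k : Fin (s + 1)) :
    c (Fin.last s) * pderiv j (c k) = pderiv j (c (Fin.last s)) * c k := by
  let e k := c (Fin.last s) * pderiv j (c k) - pderiv j (c (Fin.last s)) * c k
  have he_last : e (Fin.last s) = 0 := by simp only [e]; ring
  have he_kernel (i : Fin s) : ∑ k, hasseDeriv (μ i) (φ k) * e k = 0 := by
    have h0 := hc (μ i) ((hμ i).trans i.2.le)
    have h1 := sum_pderiv_mul_hasseDeriv_eq_zero hc j (μ i) ((hμ i).trans_lt i.2)
    calc ∑ k, hasseDeriv (μ i) (φ k) * e k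
        = c (Fin.last s) * ∑ k, pderiv j (c k) * hasseDeriv (μ i) (φ k) -
          pderiv j (c (Fin.last s)) * ∑ k, c k * hasseDeriv (μ i) (φ k) := by
          rw [Finset.mul_sum, Finset.mul_sum, ← Finset.sum_sub_distrib]
          exact Finset.sum_congr rfl fun k _ => by simp only [e]; ring
      _ = 0 := by rw [h0, h1, mul_zero, mul_zero, sub_zero]
  have he_init : (fun k : Fin s => e k.castSucc) = 0 := by
    refine Matrix.eq_zero_of_mulVec_eq_zero hdet (funext fun i => ?_)
    have := he_kernel i
    rwa [Fin.sum_univ_castSucc, he_last, mul_zero, add_zero] at this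
  exact sub_eq_zero.mp (Fin.lastCases he_last (congrFun he_init) k)

variable [LinearOrder σ]

theorem exists_det_wronskianMatrix_ne_zero {s : ℕ} {φ : Fin s → MvPolynomial σ R}
    (hφ : LinearIndependent R φ) :
    ∃ μ : Fin s → σ →₀ ℕ, (∀ i, ∑ j, μ i j ≤ i) ∧ (wronskianMatrix μ φ).det ≠ 0 := by
  induction s with
  | zero => exact ⟨fun _ => 0, fun i => i.elim0, by simp⟩
  | succ s ih =>
    obtain ⟨μ, hμ, hdet⟩ := ih (hφ.comp _ (Fin.castSucc_injective s))
    by_contra! hall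
    let c := lastRowCofactor μ φ
    have hlast : c (Fin.last s) ≠ 0 := by
      refine mul_ne_zero (pow_ne_zero _ (neg_ne_zero.mpr one_ne_zero)) ?_
      simpa only [Fin.succAbove_last, Function.comp_def] using hdet
    have hc (ν : σ →₀ ℕ) (hν : ∑ j, ν j ≤ s) : ∑ k, c k * hasseDeriv ν (φ k) = 0 := by
      rw [sum_lastRowCofactor_mul]
      refine hall _ fun i => ?_
      refine Fin.lastCases (by simpa using hν) (fun i => by simpa using hμ i) i
    -- The cofactors satisfy `c_last ∂c_k = ∂c_last c_k`, hence are proportional to `c_last`.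
    let m : MonomialOrder σ := MonomialOrder.lex
    choose r hr using fun k => exists_leadingCoeff_smul_eq_smul m hlast fun j =>
      mul_pderiv_eq_pderiv_mul_of_forall_sum_eq_zero hμ hdet hc j k
    have hr_last : r (Fin.last s) = m.leadingCoeff (c (Fin.last s)) :=
      (smul_left_injective R hlast (hr _)).symm
    have hsum : ∑ k, r k • φ k = 0 := by
      refine (mul_eq_zero.mp ?_).resolve_left hlast
      have h0 := hc 0 (by simp)
      simp only [hasseDeriv_zero] at h0
      rw [Finset.mul_sum, ← smul_zero (m.leadingCoeff (c (Fin.last s))), ← h0, Finset.smul_sum]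
      exact Finset.sum_congr rfl fun k _ => by
        rw [← smul_mul_assoc, hr k, smul_mul_assoc, mul_smul_comm]
    exact m.leadingCoeff_ne_zero_iff.mpr hlast
      (hr_last ▸ Fintype.linearIndependent_iff.mp hφ r hsum _)

end Wronskian

section Support

variable {σ R A : Type*} [CommSemiring R] {S T : Set σ} {P Q : MvPolynomial σ R}

lemma mem_supported_iff_forall_support :
    P ∈ supported R S ↔ ∀ ν ∈ P.support, ∀ i ∉ S, ν i = 0 := by
  rw [mem_supported]
  constructor
  · intro h ν hν i hi
    by_contra hne
    exact hi (h (mem_vars_iff_mem_support i |>.mpr ⟨ν, hν, Finsupp.mem_support_iff.mpr hne⟩))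
  · intro h i hi
    obtain ⟨ν, hν, hiν⟩ := (mem_vars_iff_mem_support i).mp hi
    by_contra hS
    exact Finsupp.mem_support_iff.mp hiν (h ν hν i hS)

lemma mem_supported_of_support_subset (h : Q ∈ supported R S) (hPQ : P.support ⊆ Q.support) :
    P ∈ supported R S :=
  mem_supported_iff_forall_support.mpr fun ν hν =>
    mem_supported_iff_forall_support.mp h ν (hPQ hν)

lemma coeff_add_mul_of_disjoint (hST : Disjoint S T) (hP : P ∈ supported R S)
    (hQ : Q ∈ supported R T) {a b : σ →₀ ℕ} (ha : ∀ i ∉ S, a i = 0) (hb : ∀ i ∉ T, b i = 0) :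
    coeff (a + b) (P * Q) = coeff a P * coeff b Q := by
  classical
  rw [coeff_mul, Finset.sum_eq_single (a, b)]
  · rintro ⟨c, d⟩ hcd hne
    by_contra h
    have hc := mem_supported_iff_forall_support.mp hP c
      (mem_support_iff.mpr (left_ne_zero_of_mul h))
    have hd := mem_supported_iff_forall_support.mp hQ d
      (mem_support_iff.mpr (right_ne_zero_of_mul h))
    have key (i : σ) : c i = a i ∧ d i = b i := by
      have hi := DFunLike.congr_fun (Finset.HasAntidiagonal.mem_antidiagonal.mp hcd) i
      simp only [Finsupp.add_apply] at hi
      by_cases hiS : i ∈ S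
      · have hiT := Set.disjoint_left.mp hST hiS
        have := hd i hiT
        have := hb i hiT
        omega
      · have := hc i hiS
        have := ha i hiS
        omega
    exact hne (Prod.ext (Finsupp.ext fun i => (key i).1) (Finsupp.ext fun i => (key i).2))
  · intro h
    exact (h (by rw [Finset.HasAntidiagonal.mem_antidiagonal])).elim

lemma coeff_single_aeval_X (f : Polynomial R) (j : σ) (k : ℕ) :
    coeff (Finsupp.single j k) (Polynomial.aeval (X j : MvPolynomial σ R) f) = f.coeff k := by
  classical
  induction f using Polynomial.induction_on' with
  | add p q hp hq => rw [map_add, coeff_add, hp, hq, Polynomial.coeff_add]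
  | monomial m c =>
    rw [Polynomial.aeval_monomial, algebraMap_eq, X_pow_eq_monomial, C_mul_monomial, mul_one,
      coeff_monomial, Polynomial.coeff_monomial]
    simp only [(Finsupp.single_injective j).eq_iff]

variable [CommSemiring A] [Algebra R A]

lemma translate_aeval_X (ξ : σ → A) (j : σ) (f : Polynomial R) :
    translate ξ (Polynomial.aeval (X j : MvPolynomial σ R) f) =
      Polynomial.aeval (X j : MvPolynomial σ A)
        (Polynomial.taylor (ξ j) (f.map (algebraMap R A))) := by
  rw [← Polynomial.aeval_algHom_apply, Polynomial.taylor_apply, Polynomial.aeval_comp,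
    Polynomial.aeval_map_algebraMap]
  simp [translate, MvPolynomial.algebraMap_eq]

lemma translate_mem_supported [Finite σ] (hP : P ∈ supported R S) (ξ : σ → A) :
    translate ξ P ∈ supported A S := by
  cases nonempty_fintype σ
  refine mem_supported_iff_forall_support.mpr fun l hl i hi => ?_
  rw [mem_support_iff, coeff_translate] at hl
  obtain ⟨ν, hν, hterm⟩ := Finset.exists_ne_zero_of_sum_ne_zero hl
  have hlν : l ≤ ν := by
    by_contra hle
    simp [multiChoose_eq_zero hle] at hterm
  have := mem_supported_iff_forall_support.mp hP ν hν i hi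
  exact Nat.eq_zero_of_le_zero (this ▸ hlν i)

section HasseDerivative

variable [Fintype σ]

lemma degreeOf_hasseDeriv_le (μ : σ →₀ ℕ) (P : MvPolynomial σ R) (i : σ) :
    degreeOf i (hasseDeriv μ P) ≤ degreeOf i P := by
  refine degreeOf_le_iff.mpr fun ν hν => ?_
  rw [mem_support_iff, coeff_hasseDeriv] at hν
  have := (degreeOf_le_iff (n := i)).mp le_rfl _
    (mem_support_iff.mpr (right_ne_zero_of_mul hν))
  exact le_self_add.trans this

lemma hasseDeriv_mem_supported (hP : P ∈ supported R S) (μ : σ →₀ ℕ) :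
    hasseDeriv μ P ∈ supported R S := by
  refine mem_supported_iff_forall_support.mpr fun ν hν i hi => ?_
  rw [mem_support_iff, coeff_hasseDeriv] at hν
  have := mem_supported_iff_forall_support.mp hP _
    (mem_support_iff.mpr (right_ne_zero_of_mul hν)) i hi
  exact (Nat.add_eq_zero_iff.mp this).1

lemma hasseDeriv_eq_zero_of_notMem (hP : P ∈ supported R S) {μ : σ →₀ ℕ} {i : σ} (hi : i ∉ S)
    (hμ : μ i ≠ 0) : hasseDeriv μ P = 0 := by
  ext l
  rw [coeff_hasseDeriv, coeff_zero]
  by_contra hne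
  have := mem_supported_iff_forall_support.mp hP _
    (mem_support_iff.mpr (right_ne_zero_of_mul hne)) i hi
  exact hμ (Nat.add_eq_zero_iff.mp this).2

lemma hasseDeriv_monomial_mul_monomial {a b u v : σ →₀ ℕ} (c d : R)
    (h : ∀ i, (b i = 0 ∧ v i = 0) ∨ (a i = 0 ∧ u i = 0)) :
    hasseDeriv (a + b) (monomial u c * monomial v d) =
      hasseDeriv a (monomial u c) * hasseDeriv b (monomial v d) := by
  have hexp : u + v - (a + b) = (u - a) + (v - b) := by
    ext i
    simp only [Finsupp.tsub_apply, Finsupp.add_apply]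
    rcases h i with h | h <;> omega
  have hchoose : multiChoose (u + v) (a + b) = multiChoose u a * multiChoose v b := by
    rw [multiChoose, multiChoose, multiChoose, ← Finset.prod_mul_distrib]
    refine Finset.prod_congr rfl fun i _ => ?_
    rcases h i with h | h <;> simp [h.1, h.2]
  rw [monomial_mul, hasseDeriv_monomial, hasseDeriv_monomial, hasseDeriv_monomial, monomial_mul,
    hexp, hchoose, Nat.cast_mul]
  congr 1
  ring

lemma hasseDeriv_mul_of_disjoint (hST : Disjoint S T) (hP : P ∈ supported R S)
    (hQ : Q ∈ supported R T) {a b : σ →₀ ℕ} (ha : ∀ i ∉ S, a i = 0) (hb : ∀ i ∉ T, b i = 0) :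
    hasseDeriv (a + b) (P * Q) = hasseDeriv a P * hasseDeriv b Q := by
  conv_lhs => rw [P.as_sum, Q.as_sum]
  conv_rhs => rw [P.as_sum, Q.as_sum]
  simp only [Finset.sum_mul_sum, map_sum]
  refine Finset.sum_congr rfl fun u hu => Finset.sum_congr rfl fun v hv =>
    hasseDeriv_monomial_mul_monomial _ _ fun i => ?_
  by_cases hi : i ∈ S
  · have hiT := Set.disjoint_left.mp hST hi
    exact .inl ⟨hb i hiT, mem_supported_iff_forall_support.mp hQ v hv i hiT⟩
  · exact .inr ⟨ha i hi, mem_supported_iff_forall_support.mp hP u hu i hi⟩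

end HasseDerivative
end Support

section Determinant

variable {σ R ι : Type*} [CommRing R] [Fintype ι] [DecidableEq ι]

lemma det_mem_supported {S : Set σ} {M : Matrix ι ι (MvPolynomial σ R)}
    (h : ∀ i k, M i k ∈ supported R S) : M.det ∈ supported R S := by
  rw [Matrix.det_apply]
  refine Subalgebra.sum_mem _ fun π _ => ?_
  rw [Units.smul_def]
  exact Subalgebra.zsmul_mem _ (Subalgebra.prod_mem _ fun k _ => h _ _) _

lemma degreeOf_det_le {i : σ} {d : ℕ} {M : Matrix ι ι (MvPolynomial σ R)}
    (h : ∀ a b, degreeOf i (M a b) ≤ d) : degreeOf i M.det ≤ Fintype.card ι * d := by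
  rw [Matrix.det_apply]
  refine (degreeOf_sum_le i _ _).trans (Finset.sup_le fun π _ => ?_)
  have hprod : degreeOf i (∏ b, M (π b) b) ≤ Fintype.card ι * d :=
    (degreeOf_prod_le i _ _).trans ((Finset.sum_le_card_nsmul _ _ d fun b _ => h _ _).trans_eq
      (by rw [Finset.card_univ, smul_eq_mul]))
  rcases Int.units_eq_one_or (Equiv.Perm.sign π) with hπ | hπ <;> rw [hπ]
  · rwa [one_smul]
  · rwa [Units.neg_smul, one_smul, degreeOf_neg]

end Determinant

section CoefficientNorm

variable {σ R : Type*} [SeminormedCommRing R]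

/-- The length of a polynomial: the sum of the norms of its coefficients. -/
def l1Norm (P : MvPolynomial σ R) : ℝ := ∑ ν ∈ P.support, ‖coeff ν P‖

lemma l1Norm_eq_sum_of_support_subset {P : MvPolynomial σ R} {T : Finset (σ →₀ ℕ)}
    (h : P.support ⊆ T) : l1Norm P = ∑ ν ∈ T, ‖coeff ν P‖ :=
  Finset.sum_subset h fun ν _ hν => by rw [notMem_support_iff.mp hν, norm_zero]

lemma l1Norm_nonneg (P : MvPolynomial σ R) : 0 ≤ l1Norm P :=
  Finset.sum_nonneg fun _ _ => norm_nonneg _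

lemma norm_coeff_le_l1Norm (P : MvPolynomial σ R) (ν : σ →₀ ℕ) : ‖coeff ν P‖ ≤ l1Norm P := by
  by_cases hν : ν ∈ P.support
  · exact Finset.single_le_sum (f := fun ν => ‖coeff ν P‖) (fun _ _ => norm_nonneg _) hν
  · rw [notMem_support_iff.mp hν, norm_zero]
    exact l1Norm_nonneg P

lemma l1Norm_zero : l1Norm (0 : MvPolynomial σ R) = 0 := by
  simp [l1Norm]

lemma l1Norm_add_le (P Q : MvPolynomial σ R) : l1Norm (P + Q) ≤ l1Norm P + l1Norm Q := by
  classical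
  rw [l1Norm_eq_sum_of_support_subset (T := P.support ∪ Q.support) support_add,
    l1Norm_eq_sum_of_support_subset (P := P) (T := P.support ∪ Q.support)
      Finset.subset_union_left,
    l1Norm_eq_sum_of_support_subset (P := Q) (T := P.support ∪ Q.support)
      Finset.subset_union_right, ← Finset.sum_add_distrib]
  exact Finset.sum_le_sum fun ν _ => by
    rw [coeff_add]
    exact norm_add_le _ _

lemma l1Norm_sum_le {ι : Type*} (s : Finset ι) (f : ι → MvPolynomial σ R) :
    l1Norm (∑ i ∈ s, f i) ≤ ∑ i ∈ s, l1Norm (f i) :=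
  Finset.le_sum_of_subadditive _ l1Norm_zero.le l1Norm_add_le _ _

lemma l1Norm_monomial (ν : σ →₀ ℕ) (c : R) : l1Norm (monomial ν c) = ‖c‖ := by
  classical
  rw [l1Norm_eq_sum_of_support_subset (T := {ν}) support_monomial_subset, Finset.sum_singleton,
    coeff_monomial, if_pos rfl]

lemma l1Norm_mul_le (P Q : MvPolynomial σ R) : l1Norm (P * Q) ≤ l1Norm P * l1Norm Q := by
  conv_lhs => rw [P.as_sum, Q.as_sum]
  rw [Finset.sum_mul_sum]
  refine (l1Norm_sum_le _ _).trans ?_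
  rw [l1Norm, l1Norm, Finset.sum_mul_sum]
  refine Finset.sum_le_sum fun u _ => (l1Norm_sum_le _ _).trans (Finset.sum_le_sum fun v _ => ?_)
  rw [monomial_mul, l1Norm_monomial]
  exact norm_mul_le _ _

lemma l1Norm_neg (P : MvPolynomial σ R) : l1Norm (-P) = l1Norm P := by
  simp only [l1Norm, support_neg, coeff_neg, norm_neg]

lemma l1Norm_le_of_coeff_eq_coeff_add {P Q : MvPolynomial σ R} {β : σ →₀ ℕ}
    (h : ∀ ν ∈ P.support, coeff ν P = coeff (ν + β) Q) : l1Norm P ≤ l1Norm Q := by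
  classical
  calc l1Norm P = ∑ ν ∈ P.support.map (addRightEmbedding β), ‖coeff ν Q‖ := by
        rw [Finset.sum_map]
        exact Finset.sum_congr rfl fun ν hν => by rw [h ν hν, addRightEmbedding_apply]
    _ ≤ l1Norm Q := by
        rw [l1Norm_eq_sum_of_support_subset (P := Q) Finset.subset_union_left]
        exact Finset.sum_le_sum_of_subset_of_nonneg Finset.subset_union_right
          fun _ _ _ => norm_nonneg _

variable [NormOneClass R]

lemma l1Norm_one : l1Norm (1 : MvPolynomial σ R) = 1 := by
  rw [← C_1, C_apply, l1Norm_monomial, norm_one]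

lemma l1Norm_prod_le {ι : Type*} (s : Finset ι) (f : ι → MvPolynomial σ R) :
    l1Norm (∏ i ∈ s, f i) ≤ ∏ i ∈ s, l1Norm (f i) := by
  classical
  induction s using Finset.induction_on with
  | empty => rw [Finset.prod_empty, Finset.prod_empty, l1Norm_one]
  | insert a s ha ih =>
    rw [Finset.prod_insert ha, Finset.prod_insert ha]
    exact (l1Norm_mul_le _ _).trans (mul_le_mul_of_nonneg_left ih (l1Norm_nonneg _))

lemma l1Norm_det_le {ι : Type*} [Fintype ι] [DecidableEq ι] {K : ℝ}
    {M : Matrix ι ι (MvPolynomial σ R)} (h : ∀ i k, l1Norm (M i k) ≤ K) :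
    l1Norm M.det ≤ (Fintype.card ι).factorial * K ^ Fintype.card ι := by
  have hterm (π : Equiv.Perm ι) :
      l1Norm (Equiv.Perm.sign π • ∏ k, M (π k) k) ≤ K ^ Fintype.card ι := by
    have hprod : l1Norm (∏ k, M (π k) k) ≤ K ^ Fintype.card ι :=
      (l1Norm_prod_le _ _).trans ((Finset.prod_le_prod (fun _ _ => l1Norm_nonneg _)
        fun _ _ => h _ _).trans_eq (by rw [Finset.prod_const, Finset.card_univ]))
    rcases Int.units_eq_one_or (Equiv.Perm.sign π) with hπ | hπ <;> rw [hπ]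
    · rwa [one_smul]
    · rwa [Units.neg_smul, one_smul, l1Norm_neg]
  rw [Matrix.det_apply]
  refine (l1Norm_sum_le _ _).trans ((Finset.sum_le_card_nsmul _ _ _ fun π _ => hterm π).trans_eq ?_)
  rw [Finset.card_univ, Fintype.card_perm, nsmul_eq_mul]

variable [Fintype σ]

lemma multiChoose_le_two_pow {ν : σ →₀ ℕ} {d : ℕ} (h : ∀ i, ν i ≤ d) (μ : σ →₀ ℕ) :
    multiChoose ν μ ≤ 2 ^ (Fintype.card σ * d) := by
  have hfactor : ∀ i ∈ Finset.univ, (ν i).choose (μ i) ≤ 2 ^ d := fun i _ =>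
    (Nat.choose_le_two_pow _ _).trans (Nat.pow_le_pow_right two_pos (h i))
  refine (Finset.prod_le_prod' hfactor).trans_eq ?_
  rw [Finset.prod_const, Finset.card_univ, ← pow_mul, mul_comm]

lemma l1Norm_hasseDeriv_le {P : MvPolynomial σ R} {d : ℕ} (hd : ∀ i, degreeOf i P ≤ d)
    (μ : σ →₀ ℕ) : l1Norm (hasseDeriv μ P) ≤ 2 ^ (Fintype.card σ * d) * l1Norm P := by
  conv_lhs => rw [P.as_sum]
  rw [map_sum]
  refine (l1Norm_sum_le _ _).trans ?_
  rw [l1Norm, Finset.mul_sum]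
  refine Finset.sum_le_sum fun ν hν => ?_
  have hchoose : (multiChoose ν μ : ℝ) ≤ 2 ^ (Fintype.card σ * d) := mod_cast
    multiChoose_le_two_pow (fun i => degreeOf_le_iff.mp (hd i) ν hν) μ
  rw [hasseDeriv_monomial, l1Norm_monomial, mul_comm]
  refine (norm_mul_le _ _).trans (mul_le_mul_of_nonneg_right ?_ (norm_nonneg _))
  exact ((Nat.norm_cast_le _).trans_eq (by rw [norm_one, mul_one])).trans hchoose

end CoefficientNorm

lemma one_le_l1Norm {σ : Type*} {P : MvPolynomial σ ℤ} (h : P ≠ 0) : 1 ≤ l1Norm P := by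
  obtain ⟨ν, hν⟩ := ne_zero_iff.mp h
  refine le_trans ?_ (norm_coeff_le_l1Norm P ν)
  rw [Int.norm_eq_abs]
  exact_mod_cast Int.one_le_abs hν

section Index

variable {σ R A : Type*} [Fintype σ]

/-- The degree of the exponent `l` when the variable `X i` is given the weight `1 / r i`. -/
def scaledDegree (r : σ → ℕ) (l : σ →₀ ℕ) : ℝ := ∑ i, (l i : ℝ) / r i

lemma scaledDegree_nonneg (r : σ → ℕ) (l : σ →₀ ℕ) : 0 ≤ scaledDegree r l :=
  Finset.sum_nonneg fun _ _ => by positivity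

lemma scaledDegree_zero (r : σ → ℕ) : scaledDegree r 0 = 0 := by
  simp [scaledDegree]

lemma scaledDegree_add (r : σ → ℕ) (l μ : σ →₀ ℕ) :
    scaledDegree r (l + μ) = scaledDegree r l + scaledDegree r μ := by
  simp only [scaledDegree, Finsupp.add_apply, Nat.cast_add, add_div, Finset.sum_add_distrib]

lemma scaledDegree_single (r : σ → ℕ) (j : σ) (k : ℕ) :
    scaledDegree r (Finsupp.single j k) = k / r j := by
  classical
  rw [scaledDegree, Finset.sum_eq_single j (fun i _ hi => by simp [hi.symm]) (by simp),
    Finsupp.single_eq_same]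

lemma scaledDegree_smul (s : ℕ) (r : σ → ℕ) (l : σ →₀ ℕ) :
    scaledDegree (s • r) l = scaledDegree r l / s := by
  simp only [scaledDegree, Finset.sum_div, Pi.smul_apply, smul_eq_mul, Nat.cast_mul, div_div,
    mul_comm]

lemma scaledDegree_le {r : σ → ℕ} {l : σ →₀ ℕ} {q : ℝ} (hq : 0 < q)
    (h : ∀ i, l i ≠ 0 → q ≤ r i) : scaledDegree r l ≤ (∑ i, l i : ℕ) / q := by
  rw [Nat.cast_sum, Finset.sum_div]
  refine Finset.sum_le_sum fun i _ => ?_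
  by_cases hi : l i = 0
  · simp [hi]
  · exact div_le_div_of_nonneg_left (Nat.cast_nonneg _) hq (h i hi)

section CommSemiring

variable [CommSemiring R] [CommSemiring A] [Algebra R A] {r : σ → ℕ} {ξ : σ → A} {t u : ℝ}
  {P Q : MvPolynomial σ R}

/-- `IndexGE r ξ t P` says that the index of `P` at the point `ξ` with respect to the degrees `r`
is at least `t`: the Taylor coefficients of `P` at `ξ` of scaled degree less than `t` vanish. -/
def IndexGE (r : σ → ℕ) (ξ : σ → A) (t : ℝ) (P : MvPolynomial σ R) : Prop :=
  ∀ l, scaledDegree r l < t → coeff l (translate ξ P) = 0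

lemma indexGE_of_nonpos (ht : t ≤ 0) : IndexGE r ξ t P := fun l hl =>
  absurd hl (ht.trans (scaledDegree_nonneg r l)).not_gt

lemma IndexGE.mono (h : IndexGE r ξ t P) (hut : u ≤ t) : IndexGE r ξ u P := fun l hl =>
  h l (hl.trans_le hut)

lemma IndexGE.smul (h : IndexGE r ξ t P) (c : R) : IndexGE r ξ t (c • P) := fun l hl => by
  rw [map_smul, coeff_smul, h l hl, smul_zero]

lemma IndexGE.of_smul [NoZeroDivisors A] {c : R} (hc : algebraMap R A c ≠ 0)
    (h : IndexGE r ξ t (c • P)) : IndexGE r ξ t P := fun l hl => by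
  have := h l hl
  rw [map_smul, coeff_smul, Algebra.smul_def] at this
  exact (mul_eq_zero.mp this).resolve_left hc

lemma IndexGE.sum {ι : Type*} {s : Finset ι} {f : ι → MvPolynomial σ R}
    (h : ∀ i ∈ s, IndexGE r ξ t (f i)) : IndexGE r ξ t (∑ i ∈ s, f i) := fun l hl => by
  rw [map_sum, coeff_sum]
  exact Finset.sum_eq_zero fun i hi => h i hi l hl

lemma IndexGE.mul (hP : IndexGE r ξ t P) (hQ : IndexGE r ξ u Q) :
    IndexGE r ξ (t + u) (P * Q) := fun l hl => by
  classical
  rw [map_mul, coeff_mul]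
  refine Finset.sum_eq_zero fun ⟨a, b⟩ hab => ?_
  rw [← Finset.HasAntidiagonal.mem_antidiagonal.mp hab, scaledDegree_add] at hl
  rcases lt_or_ge (scaledDegree r a) t with ha | ha
  · rw [hP a ha, zero_mul]
  · rw [hQ b (by linarith), mul_zero]

lemma IndexGE.prod {ι : Type*} {s : Finset ι} {t : ι → ℝ} {f : ι → MvPolynomial σ R}
    (h : ∀ i ∈ s, IndexGE r ξ (t i) (f i)) : IndexGE r ξ (∑ i ∈ s, t i) (∏ i ∈ s, f i) := by
  classical
  induction s using Finset.induction_on with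
  | empty => exact indexGE_of_nonpos (Finset.sum_empty).le
  | insert a s ha ih =>
    rw [Finset.sum_insert ha, Finset.prod_insert ha]
    exact (h a (Finset.mem_insert_self a s)).mul
      (ih fun i hi => h i (Finset.mem_insert_of_mem hi))

lemma IndexGE.hasseDeriv (h : IndexGE r ξ t P) (μ : σ →₀ ℕ) :
    IndexGE r ξ (t - scaledDegree r μ) (hasseDeriv μ P) := fun l hl => by
  rw [coeff_translate_hasseDeriv, h _ (by rw [scaledDegree_add]; linarith), mul_zero]

lemma not_indexGE_mul_of_disjoint [NoZeroDivisors A] {S T : Set σ} (hST : Disjoint S T)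
    (hPS : P ∈ supported R S) (hQT : Q ∈ supported R T) (hP : ¬ IndexGE r ξ t P)
    (hQ : ¬ IndexGE r ξ u Q) : ¬ IndexGE r ξ (t + u) (P * Q) := by
  simp only [IndexGE, not_forall] at hP hQ ⊢
  obtain ⟨a, hat, ha⟩ := hP
  obtain ⟨b, hbu, hb⟩ := hQ
  have hPS' := translate_mem_supported hPS ξ
  have hQT' := translate_mem_supported hQT ξ
  refine ⟨a + b, by rw [scaledDegree_add]; exact add_lt_add hat hbu, ?_⟩
  rw [map_mul, coeff_add_mul_of_disjoint hST hPS' hQT'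
    (mem_supported_iff_forall_support.mp hPS' a (mem_support_iff.mpr ha))
    (mem_supported_iff_forall_support.mp hQT' b (mem_support_iff.mpr hb))]
  exact mul_ne_zero ha hb

lemma indexGE_smul_iff {s : ℕ} (hs : 0 < s) : IndexGE (s • r) ξ t P ↔ IndexGE r ξ (s * t) P := by
  simp only [IndexGE, scaledDegree_smul, div_lt_iff₀' (Nat.cast_pos.mpr hs : (0 : ℝ) < s)]

end CommSemiring

lemma IndexGE.det [CommRing R] [CommRing A] [Algebra R A] {r : σ → ℕ} {ξ : σ → A} {ι : Type*}
    [Fintype ι] [DecidableEq ι] {t : ι → ℝ} {M : Matrix ι ι (MvPolynomial σ R)}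
    (h : ∀ i k, IndexGE r ξ (t k) (M i k)) : IndexGE r ξ (∑ k, t k) M.det := by
  rw [Matrix.det_apply']
  refine IndexGE.sum fun π _ => ?_
  rw [← zsmul_eq_mul, ← Int.cast_smul_eq_zsmul R]
  exact (IndexGE.prod fun k _ => h (π k) k).smul _

end Index

section Factors

variable {σ R : Type*} [SeminormedCommRing R] {S T : Set σ}
  {U V W : MvPolynomial σ R} {D : R}

/-- Keeping the coefficients of `D • W = U * V` at the exponents `ν + β`, for one exponent `β` of
`V`, turns `U` into a proportional polynomial whose coefficients are coefficients of `W`. -/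
def factorPart (U W : MvPolynomial σ R) (β : σ →₀ ℕ) : MvPolynomial σ R :=
  ∑ ν ∈ U.support, monomial ν (coeff (ν + β) W)

lemma coeff_factorPart_of_mem {ν : σ →₀ ℕ} (hν : ν ∈ U.support) (W : MvPolynomial σ R)
    (β : σ →₀ ℕ) : coeff ν (factorPart U W β) = coeff (ν + β) W := by
  classical
  simp only [factorPart, coeff_sum, coeff_monomial, Finset.sum_ite_eq', if_pos hν]

lemma coeff_factorPart_of_notMem {ν : σ →₀ ℕ} (hν : ν ∉ U.support) (W : MvPolynomial σ R)
    (β : σ →₀ ℕ) : coeff ν (factorPart U W β) = 0 := by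
  classical
  simp only [factorPart, coeff_sum, coeff_monomial, Finset.sum_ite_eq', if_neg hν]

lemma support_factorPart_subset (U W : MvPolynomial σ R) (β : σ →₀ ℕ) :
    (factorPart U W β).support ⊆ U.support := fun ν hν => by
  by_contra h
  exact mem_support_iff.mp hν (coeff_factorPart_of_notMem h W β)

lemma l1Norm_factorPart_le (U W : MvPolynomial σ R) (β : σ →₀ ℕ) :
    l1Norm (factorPart U W β) ≤ l1Norm W :=
  l1Norm_le_of_coeff_eq_coeff_add fun _ hν =>
    coeff_factorPart_of_mem (support_factorPart_subset U W β hν) W β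

lemma degreeOf_factorPart_le (U W : MvPolynomial σ R) (β : σ →₀ ℕ) (i : σ) :
    degreeOf i (factorPart U W β) ≤ degreeOf i W := by
  refine degreeOf_le_iff.mpr fun ν hν => ?_
  have hνW : ν + β ∈ W.support := by
    rw [mem_support_iff,
      ← coeff_factorPart_of_mem (support_factorPart_subset U W β hν) W β]
    exact mem_support_iff.mp hν
  exact le_self_add.trans ((degreeOf_le_iff (n := i)).mp le_rfl _ hνW)

lemma smul_factorPart (hST : Disjoint S T) (hU : U ∈ supported R S) (hV : V ∈ supported R T)
    (h : D • W = U * V) {β : σ →₀ ℕ} (hβ : β ∈ V.support) :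
    D • factorPart U W β = coeff β V • U := by
  ext ν
  rw [coeff_smul, coeff_smul]
  by_cases hν : ν ∈ U.support
  · rw [coeff_factorPart_of_mem hν, ← coeff_smul, h, coeff_add_mul_of_disjoint hST hU hV
      (mem_supported_iff_forall_support.mp hU ν hν) (mem_supported_iff_forall_support.mp hV β hβ),
      smul_eq_mul, mul_comm]
  · rw [coeff_factorPart_of_notMem hν, notMem_support_iff.mp hν, smul_zero, smul_zero]

lemma exists_factor_of_smul_eq_mul [IsDomain R] (hST : Disjoint S T) (hU : U ∈ supported R S)
    (hV : V ∈ supported R T) (hU0 : U ≠ 0) (hV0 : V ≠ 0) (h : D • W = U * V) :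
    ∃ U₁ ∈ supported R S, U₁ ≠ 0 ∧ l1Norm U₁ ≤ l1Norm W ∧
      (∀ i, degreeOf i U₁ ≤ degreeOf i W) ∧ ∃ c : R, D • U₁ = c • U := by
  obtain ⟨β, hβ⟩ := support_nonempty.mpr hV0
  have hβ0 := mem_support_iff.mp hβ
  have hsmul := smul_factorPart hST hU hV h hβ
  refine ⟨factorPart U W β, mem_supported_of_support_subset hU (support_factorPart_subset U W β),
    fun h0 => ?_, l1Norm_factorPart_le U W β, degreeOf_factorPart_le U W β, _, hsmul⟩
  rw [h0, smul_zero] at hsmul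
  exact smul_ne_zero hβ0 hU0 hsmul.symm

end Factors

section Gauss

lemma isPrimitive_den_mul_X_sub_num (x : ℚ) :
    (Polynomial.C (x.den : ℤ) * Polynomial.X - Polynomial.C x.num).IsPrimitive := by
  intro d hd
  rw [Polynomial.C_dvd_iff_dvd_coeff] at hd
  have hnum : d ∣ x.num := by simpa [-eq_intCast] using hd 0
  have hden : d ∣ (x.den : ℤ) := by simpa [Polynomial.coeff_C, -eq_intCast] using hd 1
  have hcoprime : IsCoprime x.num (x.den : ℤ) := by
    rw [Int.isCoprime_iff_nat_coprime]
    simpa using x.reduced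
  exact hcoprime.isUnit_of_dvd' hnum hden

lemma map_den_mul_X_sub_num (x : ℚ) :
    (Polynomial.C (x.den : ℤ) * Polynomial.X - Polynomial.C x.num).map (algebraMap ℤ ℚ) =
      Polynomial.C (x.den : ℚ) * (Polynomial.X - Polynomial.C x) := by
  have hnum : Polynomial.C (x.num : ℚ) = Polynomial.C (x.den : ℚ) * Polynomial.C x := by
    rw [← Polynomial.C_mul, Rat.den_mul_eq_num]
  rw [Polynomial.map_sub, Polynomial.map_mul, Polynomial.map_C, Polynomial.map_C, Polynomial.map_X,
    mul_sub, ← hnum]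
  simp only [map_natCast, algebraMap_int_eq, eq_intCast]

lemma isPrimitive_pow {R : Type*} [CommRing R] [NormalizedGCDMonoid R]
    {f : Polynomial R} (hf : f.IsPrimitive) (k : ℕ) : (f ^ k).IsPrimitive := by
  induction k with
  | zero => simpa only [pow_zero] using Polynomial.isPrimitive_one
  | succ k ih => simpa only [pow_succ] using ih.mul hf

lemma den_pow_rootMultiplicity_dvd_leadingCoeff (f : Polynomial ℤ) (x : ℚ) :
    (x.den : ℤ) ^ (f.map (algebraMap ℤ ℚ)).rootMultiplicity x ∣ f.leadingCoeff := by
  set k := (f.map (algebraMap ℤ ℚ)).rootMultiplicity x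
  have hden : (x.den : ℤ) ≠ 0 := mod_cast x.den_ne_zero
  have hunit : IsUnit (Polynomial.C (x.den : ℚ) ^ k) :=
    (Polynomial.isUnit_C.mpr (Nat.cast_ne_zero.mpr x.den_ne_zero).isUnit).pow k
  have hprim : ((Polynomial.C (x.den : ℤ) * Polynomial.X - Polynomial.C x.num) ^ k).IsPrimitive :=
    isPrimitive_pow (isPrimitive_den_mul_X_sub_num x) k
  have hdvd : (Polynomial.C (x.den : ℤ) * Polynomial.X - Polynomial.C x.num) ^ k ∣ f := by
    rw [Polynomial.IsPrimitive.Int.dvd_iff_map_cast_dvd_map_cast _ _ hprim, ← algebraMap_int_eq,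
      Polynomial.map_pow, map_den_mul_X_sub_num, mul_pow, hunit.mul_left_dvd]
    exact Polynomial.pow_rootMultiplicity_dvd _ x
  have hlead : (Polynomial.C (x.den : ℤ) * Polynomial.X - Polynomial.C x.num).leadingCoeff =
      (x.den : ℤ) := by
    rw [sub_eq_add_neg, ← Polynomial.C_neg, Polynomial.leadingCoeff_linear hden]
  simpa only [Polynomial.leadingCoeff_pow, hlead] using
    Polynomial.leadingCoeff_dvd_leadingCoeff hdvd

lemma coeff_taylor_rootMultiplicity_ne_zero {K : Type*} [CommRing K] {f : Polynomial K} (hf : f ≠ 0)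
    (x : K) : (Polynomial.taylor x f).coeff (f.rootMultiplicity x) ≠ 0 := by
  obtain ⟨g, hg, hdvd⟩ := Polynomial.exists_eq_pow_rootMultiplicity_mul_and_not_dvd f hf x
  have hX : Polynomial.taylor x (Polynomial.X - Polynomial.C x) = Polynomial.X := by
    simp [Polynomial.taylor_apply]
  conv in (Polynomial.taylor x f) => rw [hg]
  rw [Polynomial.taylor_mul, Polynomial.taylor_pow, hX, Polynomial.coeff_X_pow_mul', if_pos le_rfl,
    Nat.sub_self, Polynomial.taylor_coeff_zero]
  exact fun h => hdvd (Polynomial.dvd_iff_isRoot.mpr h)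

variable {σ : Type*}

lemma exists_aeval_X_eq_of_mem_supported_singleton {R : Type*} [CommRing R] {j : σ}
    {V : MvPolynomial σ R} (hV : V ∈ supported R {j}) :
    ∃ f : Polynomial R, Polynomial.aeval (X j : MvPolynomial σ R) f = V := by
  rwa [supported_eq_adjoin_X, Set.image_singleton, Algebra.adjoin_singleton_eq_range_aeval] at hV

theorem not_indexGE_of_mem_supported_singleton [Fintype σ] {r : σ → ℕ} {ξ : σ → ℚ} {j : σ} {u : ℝ}
    {V : MvPolynomial σ ℤ} (hV : V ∈ supported ℤ {j}) (hV0 : V ≠ 0) (hr : 0 < r j)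
    (hlog : Real.log (l1Norm V) < u * (r j * Real.log (ξ j).den)) : ¬ IndexGE r ξ u V := by
  obtain ⟨f, rfl⟩ := exists_aeval_X_eq_of_mem_supported_singleton hV
  have hf : f ≠ 0 := by
    rintro rfl
    exact hV0 (map_zero _)
  set k := (f.map (algebraMap ℤ ℚ)).rootMultiplicity (ξ j)
  have hpow : ((ξ j).den : ℝ) ^ k ≤ l1Norm (Polynomial.aeval (X j : MvPolynomial σ ℤ) f) := by
    refine le_trans ?_ (norm_coeff_le_l1Norm _ (Finsupp.single j f.natDegree))
    rw [coeff_single_aeval_X, Int.norm_eq_abs]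
    exact_mod_cast Int.le_of_dvd (abs_pos.mpr (Polynomial.leadingCoeff_ne_zero.mpr hf))
      ((dvd_abs _ _).mpr (den_pow_rootMultiplicity_dvd_leadingCoeff f (ξ j)))
  have hklog : k * Real.log (ξ j).den < u * r j * Real.log (ξ j).den := by
    rw [← Real.log_pow, mul_assoc]
    exact (Real.log_le_log (by have := (ξ j).den_pos; positivity) hpow).trans_lt hlog
  intro h
  refine coeff_taylor_rootMultiplicity_ne_zero
    ((Polynomial.map_ne_zero_iff (algebraMap ℤ ℚ).injective_int).mpr hf) (ξ j) ?_
  rw [← coeff_single_aeval_X _ j, ← translate_aeval_X]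
  refine h _ ?_
  rw [scaledDegree_single, div_lt_iff₀ (Nat.cast_pos.mpr hr)]
  exact lt_of_mul_lt_mul_right hklog (Real.log_natCast_nonneg _)

end Gauss

section SeparatedSum

variable {σ R : Type*} [CommRing R] {S T : Set σ} {P : MvPolynomial σ R} {s : ℕ}

/-- A presentation of a nonzero multiple `denom • P` of `P` as a sum of `s` products of a polynomial
in the variables `S` and a polynomial in the variables `T`. -/
structure SeparatedSum (S T : Set σ) (P : MvPolynomial σ R) (s : ℕ) where
  /-- The multiplier of `P`. -/
  denom : R
  denom_ne_zero : denom ≠ 0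
  /-- The factors in the variables `S`. -/
  left : Fin s → MvPolynomial σ R
  /-- The factors in the variables `T`. -/
  right : Fin s → MvPolynomial σ R
  left_mem k : left k ∈ supported R S
  right_mem k : right k ∈ supported R T
  smul_eq_sum : denom • P = ∑ k, left k * right k

namespace SeparatedSum

/-- The same presentation with the two groups of variables exchanged. -/
def symm (h : SeparatedSum S T P s) : SeparatedSum T S P s where
  denom := h.denom
  denom_ne_zero := h.denom_ne_zero
  left := h.right
  right := h.left
  left_mem := h.right_mem
  right_mem := h.left_mem
  smul_eq_sum := by simp only [h.smul_eq_sum, mul_comm]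

lemma exists_lt_of_not_linearIndependent [IsDomain R] (h : SeparatedSum S T P s)
    (hdep : ¬ LinearIndependent R h.left) : ∃ s' < s, Nonempty (SeparatedSum S T P s') := by
  obtain ⟨g, hg, i, hi⟩ := Fintype.not_linearIndependent_iff.mp hdep
  cases s with
  | zero => exact i.elim0
  | succ s =>
    -- Multiplying by `g i` lets us eliminate `left i` with the linear relation `g`.
    have hsum : ∑ k, h.left k * (g i • h.right k - g k • h.right i) = (g i * h.denom) • P := by
      have hzero : ∑ k, h.left k * g k • h.right i = (∑ k, g k • h.left k) * h.right i := by
        simp only [Finset.sum_mul, smul_mul_assoc, mul_smul_comm]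
      simp_rw [mul_sub, Finset.sum_sub_distrib]
      rw [hzero, hg, zero_mul, sub_zero, mul_smul, h.smul_eq_sum, Finset.smul_sum]
      simp only [mul_smul_comm]
    exact ⟨s, Nat.lt_succ_self s, ⟨{
      denom := g i * h.denom
      denom_ne_zero := mul_ne_zero hi h.denom_ne_zero
      left := fun k => h.left (i.succAbove k)
      right := fun k => g i • h.right (i.succAbove k) - g (i.succAbove k) • h.right i
      left_mem := fun k => h.left_mem _
      right_mem := fun k => Subalgebra.sub_mem _ (Subalgebra.smul_mem _ (h.right_mem _) _)
        (Subalgebra.smul_mem _ (h.right_mem _) _)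
      smul_eq_sum := by
        rw [← hsum, Fin.sum_univ_succAbove _ i, sub_self, mul_zero, zero_add] }⟩⟩

lemma exists_linearIndependent [IsDomain R] (h : SeparatedSum S T P s) :
    ∃ s' ≤ s, ∃ h' : SeparatedSum S T P s',
      LinearIndependent R h'.left ∧ LinearIndependent R h'.right := by
  induction s using Nat.strong_induction_on with
  | _ s ih =>
    by_cases hleft : LinearIndependent R h.left
    · by_cases hright : LinearIndependent R h.right
      · exact ⟨s, le_rfl, h, hleft, hright⟩
      · obtain ⟨s', hs', ⟨h'⟩⟩ := h.symm.exists_lt_of_not_linearIndependent hright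
        obtain ⟨s'', hs'', h''⟩ := ih s' hs' h'.symm
        exact ⟨s'', hs''.trans hs'.le, h''⟩
    · obtain ⟨s', hs', ⟨h'⟩⟩ := h.exists_lt_of_not_linearIndependent hleft
      obtain ⟨s'', hs'', h''⟩ := ih s' hs' h'
      exact ⟨s'', hs''.trans hs'.le, h''⟩

end SeparatedSum

lemma nonempty_separatedSum_of_mem_supported_insert [Nontrivial R] {j : σ} {d : ℕ}
    (hP : P ∈ supported R (insert j S)) (hd : degreeOf j P ≤ d) :
    Nonempty (SeparatedSum S {j} P (d + 1)) := by
  classical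
  have hleft (k : ℕ) :
      ∑ ν ∈ P.support with ν j = k, monomial (ν.erase j) (coeff ν P) ∈ supported R S := by
    refine Subalgebra.sum_mem _ fun ν hν => ?_
    refine mem_supported_iff_forall_support.mpr fun ν' hν' i hi => ?_
    obtain rfl := Finset.mem_singleton.mp (support_monomial_subset hν')
    by_cases hij : i = j
    · rw [hij, Finsupp.erase_same]
    · rw [Finsupp.erase_ne hij]
      have hi' : i ∉ insert j S := by
        simp only [Set.mem_insert_iff, hij, hi, or_self, not_false_eq_true]
      exact mem_supported_iff_forall_support.mp hP ν (Finset.mem_filter.mp hν).1 i hi'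
  have hright (k : ℕ) : (X j : MvPolynomial σ R) ^ k ∈ supported R {j} :=
    Subalgebra.pow_mem _ (X_mem_supported.mpr (Set.mem_singleton j)) k
  have hterm (k : ℕ) :
      (∑ ν ∈ P.support with ν j = k, monomial (ν.erase j) (coeff ν P)) * X j ^ k =
        ∑ ν ∈ P.support with ν j = k, monomial ν (coeff ν P) := by
    rw [Finset.sum_mul]
    refine Finset.sum_congr rfl fun ν hν => ?_
    rw [X_pow_eq_monomial, monomial_mul, mul_one, ← (Finset.mem_filter.mp hν).2,
      Finsupp.erase_add_single]
  have hdegree : ∀ ν ∈ P.support, ν j ∈ Finset.range (d + 1) := fun ν hν =>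
    Finset.mem_range_succ_iff.mpr (degreeOf_le_iff.mp hd ν hν)
  have hsum : (1 : R) • P = ∑ k : Fin (d + 1),
      (∑ ν ∈ P.support with ν j = (k : ℕ), monomial (ν.erase j) (coeff ν P)) * X j ^ (k : ℕ) := by
    simp only [one_smul, hterm]
    rw [Fin.sum_univ_eq_sum_range
      (fun k => ∑ ν ∈ P.support with ν j = k, monomial ν (coeff ν P)) _,
      Finset.sum_fiberwise_of_maps_to hdegree, ← P.as_sum]
  exact ⟨{
    denom := 1
    denom_ne_zero := one_ne_zero
    left := fun k => ∑ ν ∈ P.support with ν j = (k : ℕ), monomial (ν.erase j) (coeff ν P)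
    right := fun k => X j ^ (k : ℕ)
    left_mem := fun k => hleft k
    right_mem := fun k => hright k
    smul_eq_sum := hsum }⟩

section Wronskian

variable [Fintype σ]

lemma eq_zero_of_det_wronskianMatrix_ne_zero {φ : Fin s → MvPolynomial σ R}
    (hφ : ∀ k, φ k ∈ supported R S) {μ : Fin s → σ →₀ ℕ} (hdet : (wronskianMatrix μ φ).det ≠ 0)
    (i : Fin s) {a : σ} (ha : a ∉ S) : μ i a = 0 := by
  by_contra hne
  exact hdet (Matrix.det_eq_zero_of_row_eq_zero i fun k =>
    hasseDeriv_eq_zero_of_notMem (hφ k) ha hne)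

lemma SeparatedSum.smul_det_hasseDeriv (h : SeparatedSum S T P s) (hST : Disjoint S T)
    {μ ν : Fin s → σ →₀ ℕ} (hμ : ∀ i, ∀ a ∉ S, μ i a = 0) (hν : ∀ i, ∀ a ∉ T, ν i a = 0) :
    h.denom ^ s • (Matrix.of fun i k => hasseDeriv (μ i + ν k) P).det =
      (wronskianMatrix μ h.left).det * (wronskianMatrix ν h.right).det := by
  have hmul : wronskianMatrix μ h.left * (wronskianMatrix ν h.right).transpose =
      (C h.denom : MvPolynomial σ R) • Matrix.of fun i k => hasseDeriv (μ i + ν k) P := by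
    ext1 i k
    simp only [Matrix.mul_apply, Matrix.smul_apply, Matrix.of_apply, Matrix.transpose_apply,
      wronskianMatrix, smul_eq_mul, ← MvPolynomial.smul_eq_C_mul, ← map_smul, h.smul_eq_sum,
      map_sum, hasseDeriv_mul_of_disjoint hST (h.left_mem _) (h.right_mem _) (hμ i) (hν k)]
  rw [← Matrix.det_transpose (wronskianMatrix ν h.right), ← Matrix.det_mul, hmul, Matrix.det_smul,
    Fintype.card_fin, ← C_pow, MvPolynomial.smul_eq_C_mul]

variable [LinearOrder σ] [IsDomain R] [CharZero R]

theorem exists_smul_det_hasseDeriv_eq_mul {j : σ} (hj : j ∉ S) (hP0 : P ≠ 0)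
    (hP : P ∈ supported R (insert j S)) :
    ∃ s, 0 < s ∧ s ≤ degreeOf j P + 1 ∧ ∃ μ ν : Fin s → σ →₀ ℕ,
      (∀ i, ∀ a ∉ S, μ i a = 0) ∧ (∀ i, ∀ a ∉ ({j} : Set σ), ν i a = 0) ∧
      (∀ i, ∑ a, μ i a ≤ i) ∧ (∀ i, ∑ a, ν i a ≤ i) ∧
      ∃ D : R, D ≠ 0 ∧ ∃ U ∈ supported R S, U ≠ 0 ∧ ∃ V ∈ supported R {j}, V ≠ 0 ∧
        D • (Matrix.of fun i k => hasseDeriv (μ i + ν k) P).det = U * V := by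
  obtain ⟨h₀⟩ := nonempty_separatedSum_of_mem_supported_insert hP le_rfl
  obtain ⟨s, hs, h, hleft, hright⟩ := h₀.exists_linearIndependent
  obtain ⟨μ, hμ, hdetμ⟩ := exists_det_wronskianMatrix_ne_zero hleft
  obtain ⟨ν, hν, hdetν⟩ := exists_det_wronskianMatrix_ne_zero hright
  have hμS := fun i a => eq_zero_of_det_wronskianMatrix_ne_zero h.left_mem hdetμ i (a := a)
  have hνj := fun i a => eq_zero_of_det_wronskianMatrix_ne_zero h.right_mem hdetν i (a := a)
  have hs0 : s ≠ 0 := by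
    rintro rfl
    exact smul_ne_zero h.denom_ne_zero hP0 (by simpa using h.smul_eq_sum)
  exact ⟨s, Nat.pos_of_ne_zero hs0, hs, μ, ν, hμS, hνj, hμ, hν,
    h.denom ^ s, pow_ne_zero s h.denom_ne_zero, (wronskianMatrix μ h.left).det,
    det_mem_supported fun i k => hasseDeriv_mem_supported (h.left_mem k) _, hdetμ,
    (wronskianMatrix ν h.right).det,
    det_mem_supported fun i k => hasseDeriv_mem_supported (h.right_mem k) _, hdetν,
    h.smul_det_hasseDeriv (Set.disjoint_singleton_right.mpr hj) hμS hνj⟩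

end Wronskian
end SeparatedSum

section RothHypotheses

variable {σ : Type*} [LinearOrder σ] {r : σ → ℕ} {ξ : σ → ℚ} {ρ ρ' T : ℝ} {R s : ℕ}

/-- The standing hypotheses of Roth's lemma on the degrees `r`, a bound `R` for them, and the
approximations `ξ`: the degrees decrease at the rate `ρ`, and the quantities
`r i * log (den (ξ i))` are bounded below by `T`. -/
structure RothHypotheses (ρ : ℝ) (r : σ → ℕ) (R : ℕ) (ξ : σ → ℚ) (T : ℝ) : Prop where
  pos i : 0 < r i
  le i : r i ≤ R
  le_mul i j : i < j → r j ≤ ρ * r i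
  le_mul_log i : T ≤ r i * Real.log (ξ i).den

lemma RothHypotheses.mono (h : RothHypotheses ρ r R ξ T) (hρ : ρ ≤ ρ') :
    RothHypotheses ρ' r R ξ T where
  pos := h.pos
  le := h.le
  le_mul i j hij := (h.le_mul i j hij).trans (by gcongr)
  le_mul_log := h.le_mul_log

lemma RothHypotheses.nsmul (h : RothHypotheses ρ r R ξ T) (hs : 0 < s) :
    RothHypotheses ρ (s • r) (s * R) ξ (s * T) where
  pos i := Nat.mul_pos hs (h.pos i)
  le i := Nat.mul_le_mul_left s (h.le i)
  le_mul i j hij := by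
    have := mul_le_mul_of_nonneg_left (h.le_mul i j hij) s.cast_nonneg
    simpa only [Pi.smul_apply, smul_eq_mul, Nat.cast_mul, mul_left_comm ρ] using this
  le_mul_log i := by
    have := mul_le_mul_of_nonneg_left (h.le_mul_log i) s.cast_nonneg
    simpa only [Pi.smul_apply, smul_eq_mul, Nat.cast_mul, mul_assoc] using this

end RothHypotheses

section RothLemma

lemma mul_sq_div_le_sum_max {s r : ℕ} (hr : 0 < r) (hs : s ≤ r + 1) {τ : ℝ} (hτ0 : 0 ≤ τ)
    (hτ1 : τ ≤ 1) : s * (τ ^ 2 / 32) ≤ ∑ k : Fin s, max 0 (τ / 2 - (k : ℕ) / r) := by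
  have hr' : (1 : ℝ) ≤ r := by exact_mod_cast hr
  have hs' : (s : ℝ) ≤ r + 1 := by exact_mod_cast hs
  rw [Fin.sum_univ_eq_sum_range (fun k => max 0 (τ / 2 - (k : ℝ) / r)) s]
  set m := min s (⌊τ * r / 4⌋₊ + 1)
  have hterm : ∀ k ∈ Finset.range m, τ / 4 ≤ max 0 (τ / 2 - (k : ℝ) / r) := fun k hk => by
    have hk' : k ≤ ⌊τ * r / 4⌋₊ :=
      Nat.lt_succ_iff.mp ((Finset.mem_range.mp hk).trans_le (min_le_right _ _))
    have hkr : (k : ℝ) / r ≤ τ / 4 := by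
      rw [div_le_iff₀ (by linarith), ← mul_div_right_comm]
      exact (Nat.le_floor_iff (by positivity)).mp hk'
    exact le_max_of_le_right (by linarith)
  have hm : s * τ / 8 ≤ (m : ℝ) := by
    have hfloor := Nat.lt_floor_add_one (τ * r / 4)
    have : (0 : ℝ) ≤ s := s.cast_nonneg
    push_cast [m]
    exact le_min (by nlinarith) (by nlinarith)
  calc s * (τ ^ 2 / 32) = s * τ / 8 * (τ / 4) := by ring
    _ ≤ m * (τ / 4) := by gcongr
    _ ≤ ∑ k ∈ Finset.range m, max 0 (τ / 2 - (k : ℝ) / r) := by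
      simpa using Finset.card_nsmul_le_sum _ _ _ hterm
    _ ≤ ∑ k ∈ Finset.range s, max 0 (τ / 2 - (k : ℝ) / r) :=
      Finset.sum_le_sum_of_subset_of_nonneg (Finset.range_mono (min_le_left _ _))
        fun _ _ _ => le_max_left _ _

variable {σ : Type*} [Fintype σ] {S : Set σ} {j : σ} {r : σ → ℕ} {ξ : σ → ℚ}
  {P : MvPolynomial σ ℤ} {τ ρ : ℝ} {R s : ℕ}

lemma log_l1Norm_det_hasseDeriv_le (hP0 : P ≠ 0) (hdeg : ∀ i, degreeOf i P ≤ R) (hs : s ≤ R + 1)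
    (μ ν : Fin s → σ →₀ ℕ) :
    Real.log (l1Norm (Matrix.of fun i k => hasseDeriv (μ i + ν k) P).det) ≤
      s * ((Fintype.card σ + 1) * R + Real.log (l1Norm P)) := by
  have hL : 0 < l1Norm P := zero_lt_one.trans_le (one_le_l1Norm hP0)
  set W := (Matrix.of fun i k => hasseDeriv (μ i + ν k) P).det
  by_cases hW : W = 0
  · have := Real.log_nonneg (one_le_l1Norm hP0)
    rw [hW, l1Norm_zero, Real.log_zero]
    positivity
  have hpow : l1Norm W ≤ (2 ^ ((Fintype.card σ + 1) * R) * l1Norm P) ^ s := by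
    have hdet := l1Norm_det_le (M := Matrix.of fun i k => hasseDeriv (μ i + ν k) P)
      fun i k => l1Norm_hasseDeriv_le hdeg (μ i + ν k)
    rw [Fintype.card_fin] at hdet
    have hfact : (s.factorial : ℝ) ≤ (2 ^ R) ^ s := by
      exact_mod_cast s.factorial_le_pow.trans
        (Nat.pow_le_pow_left (hs.trans Nat.lt_two_pow_self) s)
    calc l1Norm W ≤ s.factorial * (2 ^ (Fintype.card σ * R) * l1Norm P) ^ s := hdet
      _ ≤ (2 ^ R) ^ s * (2 ^ (Fintype.card σ * R) * l1Norm P) ^ s := by gcongr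
      _ = _ := by rw [← mul_pow, ← mul_assoc, ← pow_add, add_mul, one_mul, add_comm R]
  calc Real.log (l1Norm W) ≤ Real.log ((2 ^ ((Fintype.card σ + 1) * R) * l1Norm P) ^ s) :=
      Real.log_le_log (zero_lt_one.trans_le (one_le_l1Norm hW)) hpow
    _ = s * (((Fintype.card σ + 1) * R) * Real.log 2 + Real.log (l1Norm P)) := by
      rw [Real.log_pow, Real.log_mul (by positivity) hL.ne', Real.log_pow]
      push_cast
      ring
    _ ≤ s * ((Fintype.card σ + 1) * R + Real.log (l1Norm P)) := by
      have hlog2 : Real.log 2 ≤ 1 := by linarith [Real.log_two_lt_d9]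
      exact mul_le_mul_of_nonneg_left (add_le_add_left (mul_le_of_le_one_right
        (by positivity) hlog2) _) s.cast_nonneg

lemma IndexGE.hasseDeriv_add (hr : ∀ i, 0 < r i) (hρ : 0 < ρ) (hρr : ∀ i ∈ S, r j ≤ ρ * r i)
    (hρτ : ρ ≤ τ / 2) (hP : IndexGE r ξ τ P) {μ ν : σ →₀ ℕ} {k : ℕ} (hμ : ∀ i ∉ S, μ i = 0)
    (hν : ∀ i ∉ ({j} : Set σ), ν i = 0) (hμr : ∑ i, μ i ≤ r j) (hνk : ∑ i, ν i ≤ k) :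
    IndexGE r ξ (max 0 (τ / 2 - k / r j)) (RothTheorem.hasseDeriv (μ + ν) P) := by
  have hrj : (0 : ℝ) < r j := by exact_mod_cast hr j
  have hdμ : scaledDegree r μ ≤ τ / 2 := by
    refine (scaledDegree_le (q := r j / ρ) (by positivity) fun i hi => ?_).trans ?_
    · rw [div_le_iff₀' hρ]
      exact hρr i (not_imp_comm.mp (hμ i) hi)
    · calc ((∑ i, μ i : ℕ) : ℝ) / (r j / ρ) ≤ r j / (r j / ρ) := by gcongr
        _ = ρ := div_div_cancel₀ hrj.ne'
        _ ≤ τ / 2 := hρτ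
  have hdν : scaledDegree r ν ≤ k / r j := by
    refine (scaledDegree_le hrj fun i hi => ?_).trans (by gcongr)
    rw [Set.mem_singleton_iff.mp (not_imp_comm.mp (hν i) hi)]
  rcases max_choice 0 (τ / 2 - k / r j) with hmax | hmax <;> rw [hmax]
  · exact indexGE_of_nonpos le_rfl
  · refine (hP.hasseDeriv (μ + ν)).mono ?_
    rw [scaledDegree_add]
    linarith

variable [LinearOrder σ]

/- A nonzero multiple of `U * V` is the generalized Wronskian of a decomposition of `P` into a sum
of `s` products. -/
lemma exists_mul_indexGE (hj : j ∉ S) (hP0 : P ≠ 0) (hP : P ∈ supported ℤ (insert j S))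
    (hdeg : ∀ i, degreeOf i P ≤ r i) (hr : ∀ i, 0 < r i) (hrR : ∀ i, r i ≤ R) (hρ : 0 < ρ)
    (hρr : ∀ i ∈ S, r j ≤ ρ * r i) (hρτ : ρ ≤ τ / 2) (hτ1 : τ ≤ 1) (hPτ : IndexGE r ξ τ P) :
    ∃ s : ℕ, 0 < s ∧ ∃ U ∈ supported ℤ S, U ≠ 0 ∧ ∃ V ∈ supported ℤ {j}, V ≠ 0 ∧
      (∀ i, degreeOf i U ≤ s * r i) ∧
      Real.log (l1Norm U) ≤ s * ((Fintype.card σ + 1) * R + Real.log (l1Norm P)) ∧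
      Real.log (l1Norm V) ≤ s * ((Fintype.card σ + 1) * R + Real.log (l1Norm P)) ∧
      IndexGE r ξ (s * (τ ^ 2 / 32)) (U * V) := by
  obtain ⟨s, hs0, hs, μ, ν, hμ, hν, hμi, hνi, D, hD, U, hU, hU0, V, hV, hV0, hDUV⟩ :=
    exists_smul_det_hasseDeriv_eq_mul hj hP0 hP
  have hsr : s ≤ r j + 1 := hs.trans (Nat.add_le_add_right (hdeg j) 1)
  have hW := log_l1Norm_det_hasseDeriv_le hP0 (fun i => (hdeg i).trans (hrR i))
    (hsr.trans (Nat.add_le_add_right (hrR j) 1)) μ ν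
  have hdegW (i : σ) :
      degreeOf i (Matrix.of fun i k => hasseDeriv (μ i + ν k) P).det ≤ s * r i := by
    have := degreeOf_det_le (M := Matrix.of fun i k => hasseDeriv (μ i + ν k) P)
      fun a b => (degreeOf_hasseDeriv_le (μ a + ν b) P i).trans (hdeg i)
    rwa [Fintype.card_fin] at this
  have hindexW : IndexGE r ξ (s * (τ ^ 2 / 32))
      (Matrix.of fun i k => hasseDeriv (μ i + ν k) P).det := by
    refine (IndexGE.det fun i k => ?_).mono
      (mul_sq_div_le_sum_max (hr j) hsr (by linarith) hτ1)
    exact hPτ.hasseDeriv_add hr hρ hρr hρτ (hμ i) (hν k)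
      ((hμi i).trans (Nat.lt_succ_iff.mp (i.2.trans_le hsr))) (hνi k)
  generalize (Matrix.of fun i k => hasseDeriv (μ i + ν k) P).det = W at *
  have hdisj : Disjoint S {j} := Set.disjoint_singleton_right.mpr hj
  obtain ⟨U₁, hU₁, hU₁0, hU₁L, hU₁deg, c, hcU⟩ :=
    exists_factor_of_smul_eq_mul hdisj hU hV hU0 hV0 hDUV
  obtain ⟨V₁, hV₁, hV₁0, hV₁L, -, d, hdV⟩ :=
    exists_factor_of_smul_eq_mul hdisj.symm hV hU hV0 hU0 (hDUV.trans (mul_comm U V))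
  have hlog {Q : MvPolynomial σ ℤ} (hQ : Q ≠ 0) (hQW : l1Norm Q ≤ l1Norm W) :=
    (Real.log_le_log (zero_lt_one.trans_le (one_le_l1Norm hQ)) hQW).trans hW
  have hmul : (D * D) • (U₁ * V₁) = (c * d * D) • W := by
    rw [← smul_mul_smul_comm, hcU, hdV, smul_mul_smul_comm, ← hDUV, smul_smul]
  refine ⟨s, hs0, U₁, hU₁, hU₁0, V₁, hV₁, hV₁0, fun i => (hU₁deg i).trans (hdegW i),
    hlog hU₁0 hU₁L, hlog hV₁0 hV₁L, ?_⟩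
  refine IndexGE.of_smul (c := D * D) (by simpa using hD) ?_
  rw [hmul]
  exact hindexW.smul _

variable {T C : ℝ}

/-- The conclusion of Roth's lemma, with constants `ρ` and `C`, for polynomials in the variables
`S`: a nonzero polynomial with small coefficients has index less than `τ` at every point
satisfying the hypotheses of the lemma. -/
def IndexLTOn (S : Set σ) (τ ρ C : ℝ) : Prop :=
  ∀ ⦃r : σ → ℕ⦄ ⦃R : ℕ⦄ ⦃ξ : σ → ℚ⦄ ⦃T : ℝ⦄ ⦃P : MvPolynomial σ ℤ⦄, RothHypotheses ρ r R ξ T →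
    P ∈ supported ℤ S → P ≠ 0 → (∀ i, degreeOf i P ≤ r i) →
    C * (Real.log (l1Norm P) + R) ≤ T → ¬ IndexGE r ξ τ P

lemma indexLTOn_empty (hτ : 0 < τ) : IndexLTOn (∅ : Set σ) τ ρ C := by
  intro r R ξ T P _ hP hP0 _ _ hPτ
  rw [supported_empty] at hP
  obtain ⟨c, rfl⟩ := Algebra.mem_bot.mp hP
  have hc := hPτ 0 (by rwa [scaledDegree_zero])
  rw [AlgHom.commutes, MvPolynomial.algebraMap_apply, coeff_C, if_pos rfl] at hc
  rw [(algebraMap ℤ ℚ).injective_int (hc.trans (map_zero _).symm), map_zero] at hP0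
  exact hP0 rfl

lemma IndexLTOn.insert (hτ0 : 0 < τ) (hτ1 : τ ≤ 1) (hC : 0 < C) (hρ : 0 < ρ)
    (hS : IndexLTOn S (τ ^ 2 / 64) ρ C) (hj : ∀ i ∈ S, i < j) :
    IndexLTOn (insert j S) τ (min ρ (τ / 2))
      (max C (τ ^ 2 / 64)⁻¹ * (Fintype.card σ + 2)) := by
  intro r R ξ T P hr hP hP0 hdeg hT hPτ
  have hR : (0 : ℝ) < R := by exact_mod_cast (hr.pos j).trans_le (hr.le j)
  have hL := Real.log_nonneg (one_le_l1Norm hP0)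
  have hjS : j ∉ S := fun h => (hj j h).false
  obtain ⟨s, hs, U, hU, hU0, V, hV, hV0, hdegU, hlogU, hlogV, hUV⟩ := exists_mul_indexGE
    hjS hP0 hP hdeg hr.pos hr.le (by positivity) (fun i hi => hr.le_mul i j (hj i hi))
    (min_le_right _ _) hτ1 hPτ
  set M := (Fintype.card σ + 1) * R + Real.log (l1Norm P)
  have hM : max C (τ ^ 2 / 64)⁻¹ * (M + R) ≤ T := le_trans (by
    rw [mul_assoc]
    gcongr
    nlinarith [(Fintype.card σ).cast_nonneg (α := ℝ)]) hT
  have hUindex : ¬ IndexGE r ξ (s * (τ ^ 2 / 64)) U := by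
    rw [← indexGE_smul_iff hs]
    refine hS ((hr.mono (min_le_left _ _)).nsmul hs) hU hU0 hdegU ?_
    calc C * (Real.log (l1Norm U) + (s * R : ℕ)) ≤ C * (s * M + (s * R : ℕ)) := by gcongr
      _ = s * (C * (M + R)) := by
        push_cast
        ring
      _ ≤ s * (max C (τ ^ 2 / 64)⁻¹ * (M + R)) := by gcongr; exact le_max_left _ _
      _ ≤ s * T := by gcongr
  have hVindex : ¬ IndexGE r ξ (s * (τ ^ 2 / 64)) V := by
    refine not_indexGE_of_mem_supported_singleton hV hV0 (hr.pos j) ?_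
    have hMT : (τ ^ 2 / 64)⁻¹ * M < T := by
      calc (τ ^ 2 / 64)⁻¹ * M < (τ ^ 2 / 64)⁻¹ * (M + R) := by gcongr; linarith
        _ ≤ max C (τ ^ 2 / 64)⁻¹ * (M + R) := by gcongr; exact le_max_right _ _
        _ ≤ T := hM
    calc Real.log (l1Norm V) ≤ s * M := hlogV
      _ < s * (τ ^ 2 / 64 * (r j * Real.log (ξ j).den)) := by
        gcongr
        exact (inv_mul_lt_iff₀ (by positivity)).mp (hMT.trans_le (hr.le_mul_log j))
      _ = s * (τ ^ 2 / 64) * (r j * Real.log (ξ j).den) := by ring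
  exact not_indexGE_mul_of_disjoint (Set.disjoint_singleton_right.mpr hjS) hU hV hUindex hVindex
    (hUV.mono (by linarith))

/- Induction on the set of variables, splitting off the largest one: the factor `U` of the
determinant is treated by induction and the factor `V` by Gauss's lemma. -/
theorem exists_indexLTOn (S : Finset σ) :
    ∀ τ : ℝ, 0 < τ → ∃ ρ : ℝ, 0 < ρ ∧ ∃ C : ℝ, 0 < C ∧ IndexLTOn (S : Set σ) τ ρ C := by
  induction S using Finset.induction_on_max with
  | empty =>
    intro τ hτ
    rw [Finset.coe_empty]
    exact ⟨1, one_pos, 1, one_pos, indexLTOn_empty hτ⟩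
  | insert j S hj ih =>
    intro τ hτ
    have hτ' : 0 < min τ 1 := lt_min hτ one_pos
    obtain ⟨ρ, hρ, C, hC, hS⟩ := ih (min τ 1 ^ 2 / 64) (by positivity)
    rw [Finset.coe_insert]
    exact ⟨_, by positivity, _, by positivity, fun _ _ _ _ _ hr hP hP0 hdeg hT hPτ =>
      hS.insert hτ' (min_le_right _ _) hC hρ hj hr hP hP0 hdeg hT (hPτ.mono (min_le_left _ _))⟩

end RothLemma

section Box

variable {σ : Type*} [Fintype σ] [DecidableEq σ] {r : σ → ℕ}

/-- The exponents of the monomials whose degree in each variable `i` is at most `r i`. -/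
def box (r : σ → ℕ) : Finset (σ →₀ ℕ) :=
  (Finset.Iic r).map Finsupp.equivFunOnFinite.symm.toEmbedding

lemma mem_box {l : σ →₀ ℕ} : l ∈ box r ↔ ∀ i, l i ≤ r i := by
  simp only [box, Finset.mem_map_equiv, Equiv.symm_symm, Finset.mem_Iic]
  rfl

lemma sum_box_prod {A : Type*} [CommSemiring A] (f : σ → ℕ → A) :
    ∑ l ∈ box r, ∏ i, f i (l i) = ∏ i, ∑ k ∈ Finset.range (r i + 1), f i k := by
  simp only [Nat.range_succ_eq_Iic]
  rw [Finset.prod_univ_sum, box, Finset.sum_map]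
  rfl

lemma card_box : (box r).card = ∏ i, (r i + 1) := by
  simpa using sum_box_prod (r := r) fun _ _ => (1 : ℕ)

lemma card_box_le {R : ℕ} (hr : ∀ i, r i ≤ R) : (box r).card ≤ 2 ^ (Fintype.card σ * R) := by
  rw [card_box, mul_comm, pow_mul, ← Finset.card_univ]
  exact Finset.prod_le_pow_card _ _ _ fun i _ =>
    (Nat.succ_le_succ (hr i)).trans Nat.lt_two_pow_self

lemma sum_exp_half_sub_div_le {r : ℕ} (hr : 0 < r) (x : ℝ) :
    ∑ k ∈ Finset.range (r + 1), Real.exp (x * (1 / 2 - k / r)) ≤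
      (r + 1) * Real.exp (x ^ 2 / 8) := by
  have hr' : (0 : ℝ) < r := by exact_mod_cast hr
  have hflip : ∑ k ∈ Finset.range (r + 1), Real.exp (-(x * (1 / 2 - k / r))) =
      ∑ k ∈ Finset.range (r + 1), Real.exp (x * (1 / 2 - k / r)) := by
    rw [← Finset.sum_flip]
    refine Finset.sum_congr rfl fun k hk => ?_
    rw [Nat.cast_sub (Finset.mem_range_succ_iff.mp hk)]
    congr 1
    field_simp
    ring
  have hcosh : ∀ k ∈ Finset.range (r + 1),
      Real.cosh (x * (1 / 2 - k / r)) ≤ Real.exp (x ^ 2 / 8) := fun k hk => by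
    have hk0 : (0 : ℝ) ≤ k / r := by positivity
    have hk1 : (k : ℝ) / r ≤ 1 :=
      div_le_one_of_le₀ (by exact_mod_cast Finset.mem_range_succ_iff.mp hk) hr'.le
    have hsq : (1 / 2 - (k : ℝ) / r) ^ 2 ≤ 1 / 4 := by nlinarith
    refine (Real.cosh_le_exp_half_sq _).trans (Real.exp_le_exp.mpr ?_)
    rw [mul_pow]
    nlinarith [sq_nonneg x]
  calc ∑ k ∈ Finset.range (r + 1), Real.exp (x * (1 / 2 - k / r))
      = ∑ k ∈ Finset.range (r + 1), Real.cosh (x * (1 / 2 - k / r)) := by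
        simp only [Real.cosh_eq, ← Finset.sum_div, Finset.sum_add_distrib, hflip]
        ring
    _ ≤ (r + 1) * Real.exp (x ^ 2 / 8) := by
        simpa using Finset.sum_le_card_nsmul _ _ _ hcosh

/- Chernoff's bound for the sum of the independent variables `l i / r i`, uniformly distributed
on `{0, 1 / r i, …, 1}`. -/
lemma card_box_filter_scaledDegree_lt_le (hr : ∀ i, 0 < r i) {ε : ℝ} (hε : 0 ≤ ε) :
    ({l ∈ box r | scaledDegree r l < Fintype.card σ / 2 - ε * Fintype.card σ}.card : ℝ) ≤
      (box r).card * Real.exp (-(2 * ε ^ 2 * Fintype.card σ)) := by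
  set n := Fintype.card σ with hn
  have hmarkov : ({l ∈ box r | scaledDegree r l < n / 2 - ε * n}.card : ℝ) ≤
      ∑ l ∈ box r, Real.exp (4 * ε * (n / 2 - ε * n - scaledDegree r l)) := by
    rw [Finset.card_filter, Nat.cast_sum]
    refine Finset.sum_le_sum fun l _ => ?_
    split_ifs with h
    · rw [Nat.cast_one]
      exact Real.one_le_exp (mul_nonneg (by positivity) (by linarith))
    · rw [Nat.cast_zero]
      exact (Real.exp_pos _).le
  have hfactor (l : σ →₀ ℕ) : Real.exp (4 * ε * (n / 2 - ε * n - scaledDegree r l)) =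
      Real.exp (-(4 * ε ^ 2 * n)) * ∏ i, Real.exp (4 * ε * (1 / 2 - l i / r i)) := by
    rw [← Real.exp_sum, ← Real.exp_add, ← Finset.mul_sum, Finset.sum_sub_distrib, scaledDegree,
      Finset.sum_const, Finset.card_univ, nsmul_eq_mul, ← hn]
    congr 1
    ring
  calc ({l ∈ box r | scaledDegree r l < n / 2 - ε * n}.card : ℝ)
      ≤ Real.exp (-(4 * ε ^ 2 * n)) *
          ∏ i, ∑ k ∈ Finset.range (r i + 1), Real.exp (4 * ε * (1 / 2 - k / r i)) := by
        simpa only [hfactor, ← Finset.mul_sum,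
          sum_box_prod fun i k => Real.exp (4 * ε * (1 / 2 - k / r i))] using hmarkov
    _ ≤ Real.exp (-(4 * ε ^ 2 * n)) * ∏ i, ((r i + 1) * Real.exp ((4 * ε) ^ 2 / 8)) := by
        gcongr with i
        exact sum_exp_half_sub_div_le (hr i) _
    _ = (box r).card * Real.exp (-(2 * ε ^ 2 * n)) := by
        rw [Finset.prod_mul_distrib, Finset.prod_const, Finset.card_univ, ← hn, ← Real.exp_nat_mul,
          card_box, mul_left_comm, ← Real.exp_add]
        push_cast
        congr 2
        ring

end Box

section AuxiliaryPolynomial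

lemma exists_sum_smul_eq_mul {A : Type*} [CommRing A] {α : A} (hα : IsIntegral ℤ α) :
    ∃ (s : Finset A) (c : s → ℤ) (M : s → s → ℤ),
      ∑ x, c x • (x : A) = 1 ∧ ∀ x, ∑ y, M x y • (y : A) = α * x := by
  obtain ⟨s, hs⟩ := hα.fg_adjoin_singleton
  have hmem (x : A) : x ∈ Algebra.adjoin ℤ {α} ↔ ∃ f : s → ℤ, ∑ y, f y • (y : A) = x := by
    rw [← Submodule.mem_span_finset', hs, Subalgebra.mem_toSubmodule]
  obtain ⟨c, hc⟩ := (hmem 1).mp (one_mem _)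
  have hmul (x : s) : ∃ f : s → ℤ, ∑ y, f y • (y : A) = α * x := by
    have hx : (x : A) ∈ Subalgebra.toSubmodule (Algebra.adjoin ℤ {α}) :=
      hs ▸ Submodule.subset_span x.2
    exact (hmem _).mp (mul_mem (Algebra.self_mem_adjoin_singleton ℤ α) hx)
  choose M hM using hmul
  exact ⟨s, c, M, hc, hM⟩

lemma exists_pow_eq_sum_smul {A : Type*} [CommRing A] {α : A} (hα : IsIntegral ℤ α) :
    ∃ (s : Finset A) (c : ℕ → s → ℤ) (B : ℝ), 1 ≤ B ∧ (∀ k, α ^ k = ∑ x, c k x • (x : A)) ∧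
      ∀ k x, |(c k x : ℝ)| ≤ B ^ (k + 1) := by
  obtain ⟨s, c₀, M, hc₀, hM⟩ := exists_sum_smul_eq_mul hα
  let c : ℕ → s → ℤ := Nat.rec c₀ fun _ c y => ∑ x, c x * M x y
  have hsucc (k : ℕ) (y : s) : c (k + 1) y = ∑ x, c k x * M x y := rfl
  set B : ℝ := 1 + (∑ x, |(c₀ x : ℝ)| + ∑ y, ∑ x, |(M x y : ℝ)|)
  have hc₀pos : 0 ≤ ∑ x, |(c₀ x : ℝ)| := by positivity
  have hMpos : 0 ≤ ∑ y, ∑ x, |(M x y : ℝ)| := by positivity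
  have hc₀B (x : s) : |(c₀ x : ℝ)| ≤ B := by
    have := Finset.single_le_sum (fun x _ => abs_nonneg (c₀ x : ℝ)) (Finset.mem_univ x)
    linarith
  have hMB (y : s) : ∑ x, |(M x y : ℝ)| ≤ B := by
    have := Finset.single_le_sum (f := fun y => ∑ x, |(M x y : ℝ)|) (fun y _ => by positivity)
      (Finset.mem_univ y)
    linarith
  refine ⟨s, c, B, by linarith, fun k => ?_, fun k => ?_⟩
  · induction k with
    | zero => exact (pow_zero α).trans hc₀.symm
    | succ k ih =>
      simp only [hsucc, pow_succ', ih, Finset.mul_sum, mul_smul_comm, ← hM, Finset.smul_sum,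
        smul_smul, Finset.sum_smul]
      exact Finset.sum_comm
  · induction k with
    | zero => exact fun x => (hc₀B x).trans_eq (by rw [zero_add, pow_one])
    | succ k ih =>
      intro y
      calc |(c (k + 1) y : ℝ)| ≤ ∑ x, B ^ (k + 1) * |(M x y : ℝ)| := by
            rw [hsucc, Int.cast_sum]
            refine (Finset.abs_sum_le_sum_abs _ _).trans (Finset.sum_le_sum fun x _ => ?_)
            rw [Int.cast_mul, abs_mul]
            gcongr
            exact ih x
        _ ≤ B ^ (k + 1 + 1) := by
            rw [← Finset.mul_sum, pow_succ B (k + 1)]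
            gcongr
            exact hMB y

open Matrix in
lemma exists_ne_zero_mulVec_eq_zero {ι κ : Type*} [Fintype ι] [Fintype κ] [Nonempty κ]
    {M : Matrix ι κ ℤ} {K : ℝ} (hK : 1 ≤ K) (hM : ∀ i j, |(M i j : ℝ)| ≤ K)
    (hcard : 2 * Fintype.card ι ≤ Fintype.card κ) :
    ∃ t : κ → ℤ, t ≠ 0 ∧ M *ᵥ t = 0 ∧ ∀ j, |(t j : ℝ)| ≤ Fintype.card κ * K := by
  have hκ : (1 : ℝ) ≤ Fintype.card κ := by exact_mod_cast Fintype.card_pos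
  rcases isEmpty_or_nonempty ι with hι | hι
  · exact ⟨1, one_ne_zero, Subsingleton.elim _ _, fun j => by
      simpa using one_le_mul_of_one_le_of_one_le hκ hK⟩
  let _ : SeminormedAddCommGroup (Matrix ι κ ℤ) := Matrix.seminormedAddCommGroup
  have hι0 : 0 < Fintype.card ι := Fintype.card_pos
  obtain ⟨t, ht0, ht, htM⟩ := Int.Matrix.exists_ne_zero_int_vec_norm_le M (by omega) hι0
  have hMK : max 1 ‖M‖ ≤ K := max_le hK <|
    (Matrix.norm_le_iff (by linarith)).mpr fun i j => (Int.norm_eq_abs _).trans_le (hM i j)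
  have hexponent : (Fintype.card ι : ℝ) / (Fintype.card κ - Fintype.card ι) ≤ 1 := by
    have hcard' : (2 : ℝ) * Fintype.card ι ≤ Fintype.card κ := by exact_mod_cast hcard
    have hι0' : (0 : ℝ) < Fintype.card ι := by exact_mod_cast hι0
    rw [div_le_one (by linarith)]
    linarith
  refine ⟨t, ht0, ht, fun j => ?_⟩
  calc |(t j : ℝ)| = ‖t j‖ := (Int.norm_eq_abs _).symm
    _ ≤ ‖t‖ := norm_le_pi_norm t j
    _ ≤ _ := htM
    _ ≤ (Fintype.card κ * max 1 ‖M‖) ^ (1 : ℝ) := by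
      gcongr
      exact one_le_mul_of_one_le_of_one_le hκ (le_max_left _ _)
    _ = Fintype.card κ * max 1 ‖M‖ := Real.rpow_one _
    _ ≤ Fintype.card κ * K := by gcongr

lemma abs_multiChoose_mul_le {σ ι : Type*} [Fintype σ] {R : ℕ} {c : ℕ → ι → ℤ} {B : ℝ}
    (hB : 1 ≤ B) (hc : ∀ k x, |(c k x : ℝ)| ≤ B ^ (k + 1)) {ν : σ →₀ ℕ}
    (hν : ∀ i, ν i ≤ R) (l : σ →₀ ℕ) (x : ι) :
    |((multiChoose ν l * c (∑ i, (ν i - l i)) x : ℤ) : ℝ)| ≤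
      2 ^ (Fintype.card σ * R) * B ^ (Fintype.card σ * R + 1) := by
  have hsum : ∑ i, (ν i - l i) ≤ Fintype.card σ * R := by
    rw [← smul_eq_mul]
    exact Finset.sum_le_card_nsmul _ _ _ fun i _ => (Nat.sub_le _ _).trans (hν i)
  push_cast
  rw [abs_mul, Nat.abs_cast]
  gcongr
  · exact_mod_cast multiChoose_le_two_pow hν l
  · exact (hc _ _).trans (pow_le_pow_right₀ hB (Nat.succ_le_succ hsum))

variable {σ : Type*} [Fintype σ] [DecidableEq σ] {r : σ → ℕ} {R : ℕ} {t : ℝ} {A : Type*}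
  [CommRing A] {α : A} {s : Finset A} {c : ℕ → s → ℤ} {B : ℝ}

lemma coeff_translate_sum_monomial (hα : ∀ k, α ^ k = ∑ x, c k x • (x : A)) (u : box r → ℤ)
    (l : σ →₀ ℕ) :
    coeff l (translate (fun _ => α) (∑ ν : box r, monomial ν.1 (u ν))) =
      ∑ x, (∑ ν : box r, multiChoose ν.1 l * c (∑ i, (ν.1 i - l i)) x * u ν) • (x : A) := by
  simp only [map_sum, coeff_sum, coeff_translate_monomial, Finset.sum_smul,
    Finset.prod_pow_eq_pow_sum]
  rw [Finset.sum_comm]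
  refine Finset.sum_congr rfl fun ν _ => ?_
  rw [hα, Finset.mul_sum, Finset.mul_sum]
  refine Finset.sum_congr rfl fun x _ => ?_
  simp only [zsmul_eq_mul, Int.cast_mul, Int.cast_natCast, algebraMap_int_eq, eq_intCast]
  ring

lemma exists_indexGE_of_two_mul_card_le (hr : ∀ i, r i ≤ R) (hB : 1 ≤ B)
    (hα : ∀ k, α ^ k = ∑ x, c k x • (x : A)) (hc : ∀ k x, |(c k x : ℝ)| ≤ B ^ (k + 1))
    (hcard : 2 * ({l ∈ box r | scaledDegree r l < t}.card * s.card) ≤ (box r).card) :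
    ∃ P : MvPolynomial σ ℤ, P ≠ 0 ∧ (∀ i, degreeOf i P ≤ r i) ∧
      l1Norm P ≤ (8 * B) ^ (Fintype.card σ * R + 1) ∧ IndexGE r (fun _ => α) t P := by
  set n := Fintype.card σ
  set small := {l ∈ box r | scaledDegree r l < t}
  let M : Matrix (small × s) (box r) ℤ := fun p ν =>
    multiChoose ν.1 p.1.1 * c (∑ i, (ν.1 i - p.1.1 i)) p.2
  have hnonempty : Nonempty (box r) := ⟨0, mem_box.mpr fun i => Nat.zero_le _⟩
  have hM (p : small × s) (ν : box r) : |(M p ν : ℝ)| ≤ 2 ^ (n * R) * B ^ (n * R + 1) :=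
    abs_multiChoose_mul_le hB hc (fun i => (mem_box.mp ν.2 i).trans (hr i)) _ _
  obtain ⟨u, hu0, hu, huM⟩ := exists_ne_zero_mulVec_eq_zero
    (one_le_mul_of_one_le_of_one_le (one_le_pow₀ one_le_two) (one_le_pow₀ hB)) hM
    (by simpa using hcard)
  have hbox : ((box r).card : ℝ) ≤ 2 ^ (n * R) := by exact_mod_cast card_box_le hr
  set P : MvPolynomial σ ℤ := ∑ ν : box r, monomial ν (u ν)
  have hcoeff (ν : box r) : coeff ν P = u ν := by
    simp only [P, coeff_sum, coeff_monomial]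
    simp
  refine ⟨P, ?_, fun i => ?_, ?_, fun l hl => ?_⟩
  · obtain ⟨ν, hν⟩ := Function.ne_iff.mp hu0
    exact ne_zero_iff.mpr ⟨ν, (hcoeff ν).trans_ne hν⟩
  · refine (degreeOf_sum_le i _ _).trans (Finset.sup_le fun ν _ => ?_)
    exact degreeOf_le_iff.mpr fun ν' hν' =>
      Finset.mem_singleton.mp (support_monomial_subset hν') ▸ mem_box.mp ν.2 i
  · calc l1Norm P ≤ ∑ ν : box r, ‖u ν‖ := by
          simpa only [l1Norm_monomial] using l1Norm_sum_le Finset.univ fun ν => monomial ν.1 (u ν)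
      _ ≤ (box r).card * ((box r).card * (2 ^ (n * R) * B ^ (n * R + 1))) := by
          simpa [Int.norm_eq_abs] using
            Finset.sum_le_card_nsmul Finset.univ (fun ν => |(u ν : ℝ)|) _ fun ν _ => huM ν
      _ ≤ 2 ^ (n * R) * (2 ^ (n * R) * (2 ^ (n * R) * B ^ (n * R + 1))) := by gcongr
      _ = (2 * 2 * 2 * B) ^ (n * R) * B := by simp only [mul_pow, pow_succ B]; ring
      _ ≤ (8 * B) ^ (n * R + 1) := by
          rw [pow_succ, show (2 : ℝ) * 2 * 2 = 8 by norm_num]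
          gcongr
          linarith
  · rw [coeff_translate_sum_monomial hα]
    refine Finset.sum_eq_zero fun x _ => ?_
    by_cases hlr : l ∈ box r
    · have hrow : ∑ ν, M (⟨l, Finset.mem_filter.mpr ⟨hlr, hl⟩⟩, x) ν * u ν = 0 := congrFun hu _
      rw [hrow, zero_smul]
    · rw [Finset.sum_eq_zero fun ν _ => ?_, zero_smul]
      rw [multiChoose_eq_zero fun h => hlr (mem_box.mpr fun i => (h i).trans (mem_box.mp ν.2 i)),
        Nat.cast_zero, zero_mul, zero_mul]

theorem exists_indexGE_half_sub {α : A} (hα : IsIntegral ℤ α) {ε : ℝ} (hε : 0 < ε) :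
    ∃ n : ℕ, 0 < n ∧ ∃ C : ℝ, 0 < C ∧
      ∀ {r : Fin n → ℕ} {R : ℕ}, (∀ i, 0 < r i) → (∀ i, r i ≤ R) →
        ∃ P : MvPolynomial (Fin n) ℤ, P ≠ 0 ∧ (∀ i, degreeOf i P ≤ r i) ∧
          Real.log (l1Norm P) ≤ C * R ∧ IndexGE r (fun _ => α) (n / 2 - ε * n) P := by
  obtain ⟨s, c, B, hB, hpow, hc⟩ := exists_pow_eq_sum_smul hα
  obtain ⟨n, hn⟩ := exists_nat_gt (s.card / ε ^ 2)
  have hnpos : 0 < n := by exact_mod_cast (by positivity : (0 : ℝ) ≤ s.card / ε ^ 2).trans_lt hn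
  have hlog : 0 < Real.log (8 * B) := Real.log_pos (by linarith)
  have hexp : 2 * s.card ≤ Real.exp (2 * ε ^ 2 * n) := by
    rw [div_lt_iff₀ (by positivity)] at hn
    linarith [Real.add_one_le_exp (2 * ε ^ 2 * n)]
  refine ⟨n, hnpos, (n + 1) * Real.log (8 * B), by positivity, fun {r R} hr hrR => ?_⟩
  have hcard : 2 * ({l ∈ box r | scaledDegree r l < n / 2 - ε * n}.card * s.card) ≤
      (box r).card := by
    rw [← Nat.cast_le (α := ℝ)]
    have hsmall := card_box_filter_scaledDegree_lt_le hr hε.le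
    rw [Fintype.card_fin, Real.exp_neg, ← div_eq_mul_inv, le_div_iff₀ (Real.exp_pos _)] at hsmall
    push_cast
    nlinarith
  obtain ⟨P, hP0, hdeg, hnorm, hP⟩ := exists_indexGE_of_two_mul_card_le hrR hB hpow hc hcard
  have hR : (1 : ℝ) ≤ R := by exact_mod_cast (hr ⟨0, hnpos⟩).trans_le (hrR _)
  refine ⟨P, hP0, hdeg, ?_, hP⟩
  calc Real.log (l1Norm P) ≤ Real.log ((8 * B) ^ (n * R + 1)) :=
        Real.log_le_log (one_pos.trans_le (one_le_l1Norm hP0)) (by simpa using hnorm)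
    _ = (n * R + 1) * Real.log (8 * B) := by rw [Real.log_pow]; push_cast; ring
    _ ≤ (n + 1) * Real.log (8 * B) * R := by nlinarith

end AuxiliaryPolynomial

section TaylorCoefficients

variable {σ : Type*}

lemma translate_translate {R A : Type*} [CommSemiring R] [CommSemiring A] [Algebra R A]
    (ξ η : σ → A) (P : MvPolynomial σ R) :
    translate η (translate ξ P) = translate (ξ + η) P := by
  suffices ((translate η).restrictScalars R).comp (translate ξ) = translate (R := R) (ξ + η) from
    DFunLike.congr_fun this P
  refine algHom_ext fun i => ?_
  simp only [translate, AlgHom.comp_apply, AlgHom.restrictScalars_apply, aeval_X, map_add,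
    algHom_C, MvPolynomial.algebraMap_eq, Pi.add_apply]
  ring

lemma l1Norm_pow_le {A : Type*} [SeminormedCommRing A] [NormOneClass A] (P : MvPolynomial σ A)
    (k : ℕ) : l1Norm (P ^ k) ≤ l1Norm P ^ k := by
  simpa only [Finset.prod_const, Finset.card_range] using
    l1Norm_prod_le (Finset.range k) fun _ => P

lemma degreeOf_translate_le [Finite σ] {S A : Type*} [CommSemiring S] [CommSemiring A] [Algebra S A]
    (ξ : σ → A) (P : MvPolynomial σ S) (i : σ) :
    degreeOf i (translate ξ P) ≤ degreeOf i P := by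
  cases nonempty_fintype σ
  refine degreeOf_le_iff.mpr fun l hl => ?_
  rw [mem_support_iff, coeff_translate] at hl
  obtain ⟨ν, hν, hne⟩ := Finset.exists_ne_zero_of_sum_ne_zero hl
  have hle : l ≤ ν := by
    by_contra h
    rw [multiChoose_eq_zero h, Nat.cast_zero, zero_mul, mul_zero] at hne
    exact hne rfl
  exact (hle i).trans (degreeOf_le_iff.mp le_rfl ν hν)

lemma cast_coeff_translate [Finite σ] (ξ : σ → ℚ) (l : σ →₀ ℕ) (P : MvPolynomial σ ℤ) :
    ((coeff l (translate ξ P) : ℚ) : ℝ) = coeff l (translate (fun i => (ξ i : ℝ)) P) := by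
  cases nonempty_fintype σ
  simp only [coeff_translate, algebraMap_int_eq, eq_intCast]
  push_cast
  rfl

variable [Fintype σ] {R : ℕ}

lemma l1Norm_translate_le {P : MvPolynomial σ ℤ} (hP : ∀ i, degreeOf i P ≤ R) {K : ℝ} {ξ : σ → ℝ}
    (hξ : ∀ i, 1 + |ξ i| ≤ K) : l1Norm (translate ξ P) ≤ l1Norm P * K ^ (Fintype.card σ * R) := by
  conv_lhs => rw [P.as_sum]
  rw [map_sum, l1Norm.eq_def P, Finset.sum_mul]
  refine (l1Norm_sum_le _ _).trans (Finset.sum_le_sum fun ν hν => ?_)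
  have hX (i : σ) : l1Norm ((X i + C (ξ i) : MvPolynomial σ ℝ) ^ ν i) ≤ K ^ R := by
    have hK : 1 ≤ K := (le_add_of_nonneg_right (abs_nonneg _)).trans (hξ i)
    have hlin : l1Norm (X i + C (ξ i) : MvPolynomial σ ℝ) ≤ K := by
      refine (l1Norm_add_le _ _).trans (le_trans (le_of_eq ?_) (hξ i))
      rw [X, C_apply, l1Norm_monomial, l1Norm_monomial, norm_one, Real.norm_eq_abs]
    calc l1Norm ((X i + C (ξ i) : MvPolynomial σ ℝ) ^ ν i)
        ≤ l1Norm (X i + C (ξ i) : MvPolynomial σ ℝ) ^ ν i := l1Norm_pow_le _ _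
      _ ≤ K ^ ν i := pow_le_pow_left₀ (l1Norm_nonneg _) hlin _
      _ ≤ K ^ R := pow_le_pow_right₀ hK (degreeOf_le_iff.mp (hP i) ν hν)
  rw [translate, aeval_monomial, MvPolynomial.algebraMap_apply, ← algebraMap_eq,
    Finsupp.prod_fintype _ _ fun _ => pow_zero _]
  refine (l1Norm_mul_le _ _).trans (mul_le_mul ?_ ?_ (l1Norm_nonneg _) (norm_nonneg _))
  · rw [algebraMap_eq, C_apply, l1Norm_monomial, algebraMap_int_eq, eq_intCast]
    exact (Int.norm_cast_real _).le
  · refine (l1Norm_prod_le _ _).trans ?_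
    rw [mul_comm, pow_mul, ← Finset.card_univ, ← Finset.prod_const]
    exact Finset.prod_le_prod (fun _ _ => l1Norm_nonneg _) fun i _ => hX i

lemma norm_coeff_translate_le {A : Type*} [NormedField A] {Q : MvPolynomial σ A}
    (hQ : ∀ i, degreeOf i Q ≤ R) {η : σ → A} {μ : σ →₀ ℕ} {b : ℝ} (hb : 0 ≤ b)
    (h : ∀ l ∈ Q.support, μ ≤ l → ∏ i, ‖η i‖ ^ (l i - μ i) ≤ b) :
    ‖coeff μ (translate η Q)‖ ≤ l1Norm Q * (2 ^ (Fintype.card σ * R) * b) := by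
  rw [coeff_translate, l1Norm, Finset.sum_mul]
  refine (norm_sum_le _ _).trans (Finset.sum_le_sum fun l hl => ?_)
  rw [Algebra.algebraMap_self_apply, norm_mul, norm_mul, norm_prod]
  simp only [norm_pow]
  gcongr ?_ * ?_
  by_cases hμ : μ ≤ l
  · have hchoose : ‖(multiChoose l μ : A)‖ ≤ 2 ^ (Fintype.card σ * R) := by
      refine (Nat.norm_cast_le _).trans ?_
      rw [norm_one, mul_one]
      exact_mod_cast multiChoose_le_two_pow (fun i => degreeOf_le_iff.mp (hQ i) l hl) μ
    gcongr
    exact h l hl hμ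
  · rw [multiChoose_eq_zero hμ, Nat.cast_zero, norm_zero, zero_mul]
    positivity

lemma exists_int_eq_den_pow_mul_pow (x : ℚ) {e d : ℕ} (h : e ≤ d) :
    ∃ z : ℤ, (x.den : ℚ) ^ d * x ^ e = z := by
  refine ⟨(x.den : ℤ) ^ (d - e) * x.num ^ e, ?_⟩
  rw [← Nat.sub_add_cancel h, pow_add, mul_assoc, ← mul_pow, Rat.den_mul_eq_num,
    Nat.sub_add_cancel h]
  push_cast
  rfl

lemma one_le_prod_den_pow_mul_abs_coeff_translate {r : σ → ℕ} {ξ : σ → ℚ} {l : σ →₀ ℕ}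
    {P : MvPolynomial σ ℤ} (hP : ∀ i, degreeOf i P ≤ r i) (hl : coeff l (translate ξ P) ≠ 0) :
    1 ≤ (∏ i, ((ξ i).den : ℚ) ^ r i) * |coeff l (translate ξ P)| := by
  have hterm (ν) (hν : ν ∈ P.support) (i : σ) :=
    exists_int_eq_den_pow_mul_pow (ξ i)
      ((Nat.sub_le _ (l i)).trans (degreeOf_le_iff.mp (hP i) ν hν))
  choose! z hz using hterm
  have hint : (∏ i, ((ξ i).den : ℚ) ^ r i) * coeff l (translate ξ P) =
      (∑ ν ∈ P.support, coeff ν P * (multiChoose ν l * ∏ i, z ν i) : ℤ) := by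
    rw [coeff_translate, Finset.mul_sum, Int.cast_sum]
    refine Finset.sum_congr rfl fun ν hν => ?_
    push_cast
    rw [← Finset.prod_congr rfl fun i _ => hz ν hν i, Finset.prod_mul_distrib, algebraMap_int_eq,
      eq_intCast]
    ring
  have hden : 0 < ∏ i, ((ξ i).den : ℚ) ^ r i :=
    Finset.prod_pos fun i _ => pow_pos (by exact_mod_cast (ξ i).den_pos) _
  have hne : (∏ i, ((ξ i).den : ℚ) ^ r i) * coeff l (translate ξ P) ≠ 0 := mul_ne_zero hden.ne' hl
  rw [← abs_of_pos hden, ← abs_mul]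
  rw [hint] at hne ⊢
  exact_mod_cast Int.one_le_abs (Int.cast_ne_zero.mp hne)

end TaylorCoefficients

section TaylorBounds

variable {σ : Type*} [Fintype σ] {r : σ → ℕ} {κ T : ℝ}

lemma prod_abs_pow_le_exp {q η : σ → ℝ} (hr : ∀ i, 0 < r i) (hκ : 0 ≤ κ)
    (hT : ∀ i, T ≤ r i * q i) (hη : ∀ i, |η i| ≤ Real.exp (-(κ * q i))) (k : σ →₀ ℕ) :
    ∏ i, |η i| ^ k i ≤ Real.exp (-(κ * T * scaledDegree r k)) := by
  rw [scaledDegree, Finset.mul_sum, ← Finset.sum_neg_distrib, Real.exp_sum]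
  refine Finset.prod_le_prod (fun i _ => by positivity) fun i _ => ?_
  refine (pow_le_pow_left₀ (abs_nonneg _) (hη i) _).trans ?_
  rw [← Real.exp_nat_mul, Real.exp_le_exp, mul_neg, neg_le_neg_iff]
  have hr' : (0 : ℝ) < r i := by exact_mod_cast hr i
  calc κ * T * (k i / r i) ≤ κ * (r i * q i) * (k i / r i) := by gcongr; exact hT i
    _ = k i * (κ * q i) := by field_simp

variable {α : ℝ} {ξ : σ → ℚ} {R : ℕ} {t u T' : ℝ} {P : MvPolynomial σ ℤ} {μ : σ →₀ ℕ}

lemma abs_coeff_translate_le (hr : ∀ i, 0 < r i) (hrR : ∀ i, r i ≤ R)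
    (hP : ∀ i, degreeOf i P ≤ r i) (hα : IndexGE r (fun _ => α) t P) (hμ : scaledDegree r μ ≤ u)
    (hκ : 0 ≤ κ) (hT0 : 0 ≤ T) (hT : ∀ i, T ≤ r i * Real.log (ξ i).den)
    (hξ : ∀ i, |α - ξ i| ≤ Real.exp (-(κ * Real.log (ξ i).den))) :
    |coeff μ (translate (fun i => (ξ i : ℝ)) P)| ≤
      l1Norm P * (2 * (1 + |α|)) ^ (Fintype.card σ * R) * Real.exp (-(κ * T * (t - u))) := by
  have hPR (i : σ) : degreeOf i P ≤ R := (hP i).trans (hrR i)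
  have hshift : translate (fun i => (ξ i : ℝ)) P =
      translate (fun i => (ξ i : ℝ) - α) (translate (fun _ => α) P) := by
    rw [translate_translate]
    congr 2 with i
    rw [Pi.add_apply, add_sub_cancel]
  have hterm (l) (hl : l ∈ (translate (fun _ => α) P).support) (hμl : μ ≤ l) :
      ∏ i, ‖(ξ i : ℝ) - α‖ ^ (l i - μ i) ≤ Real.exp (-(κ * T * (t - u))) := by
    have hlt : t ≤ scaledDegree r l := not_lt.mp fun h => mem_support_iff.mp hl (hα l h)
    have hsub : scaledDegree r l = scaledDegree r (l - μ) + scaledDegree r μ := by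
      rw [← scaledDegree_add, tsub_add_cancel_of_le hμl]
    refine (prod_abs_pow_le_exp hr hκ hT (fun i => abs_sub_comm α (ξ i) ▸ hξ i) (l - μ)).trans ?_
    gcongr
    linarith
  rw [hshift, ← Real.norm_eq_abs]
  calc _ ≤ l1Norm (translate (fun _ => α) P) *
        (2 ^ (Fintype.card σ * R) * Real.exp (-(κ * T * (t - u)))) :=
        norm_coeff_translate_le (fun i => (degreeOf_translate_le _ _ i).trans (hPR i))
          (Real.exp_pos _).le hterm
    _ ≤ (l1Norm P * (1 + |α|) ^ (Fintype.card σ * R)) *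
        (2 ^ (Fintype.card σ * R) * Real.exp (-(κ * T * (t - u)))) := by
        gcongr
        exact l1Norm_translate_le hPR fun _ => le_rfl
    _ = _ := by rw [mul_pow]; ring

lemma mul_sub_le_log_l1Norm_add (hr : ∀ i, 0 < r i) (hrR : ∀ i, r i ≤ R)
    (hP : ∀ i, degreeOf i P ≤ r i) (hα : IndexGE r (fun _ => α) t P) (hμ : scaledDegree r μ ≤ u)
    (hμ0 : coeff μ (translate ξ P) ≠ 0) (hκ : 0 ≤ κ) (hT0 : 0 ≤ T)
    (hT : ∀ i, T ≤ r i * Real.log (ξ i).den) (hT' : ∀ i, r i * Real.log (ξ i).den ≤ T')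
    (hξ : ∀ i, |α - ξ i| ≤ Real.exp (-(κ * Real.log (ξ i).den))) :
    κ * T * (t - u) ≤
      Real.log (l1Norm P) + Fintype.card σ * (R * Real.log (2 * (1 + |α|)) + T') := by
  have : 0 < 2 * (1 + |α|) := by positivity
  have hPpos : 0 < l1Norm P := one_pos.trans_le <| one_le_l1Norm fun h => hμ0 (by simp [h])
  have hden (i : σ) : 0 < ((ξ i).den : ℝ) := by exact_mod_cast (ξ i).den_pos
  have hlower : 1 ≤ (∏ i, ((ξ i).den : ℝ) ^ r i) *
      |coeff μ (translate (fun i => (ξ i : ℝ)) P)| := by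
    rw [← cast_coeff_translate]
    exact_mod_cast one_le_prod_den_pow_mul_abs_coeff_translate hP hμ0
  have hprod : Real.log (∏ i, ((ξ i).den : ℝ) ^ r i) ≤ Fintype.card σ * T' := by
    rw [Real.log_prod fun i _ => (pow_pos (hden i) _).ne', ← nsmul_eq_mul]
    exact Finset.sum_le_card_nsmul _ _ _ fun i _ => (Real.log_pow _ _).trans_le (hT' i)
  have hupper := Real.log_nonneg <| hlower.trans <| mul_le_mul_of_nonneg_left
    (abs_coeff_translate_le hr hrR hP hα hμ hκ hT0 hT hξ) (by positivity)
  rw [Real.log_mul (Finset.prod_pos fun i _ => pow_pos (hden i) _).ne' (by positivity),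
    Real.log_mul (by positivity) (Real.exp_pos _).ne', Real.log_mul hPpos.ne' (by positivity),
    Real.log_pow, Real.log_exp] at hupper
  push_cast at hupper
  linarith

end TaylorBounds

section ChoiceOfDegrees

lemma exists_seq_den_growth {p : ℚ → Prop} (h : ∀ M : ℕ, ∃ x : ℚ, M < x.den ∧ p x) (Q c : ℝ) :
    ∃ ξ : ℕ → ℚ, (∀ k, p (ξ k)) ∧ (∀ k, Q ≤ Real.log (ξ k).den) ∧
      ∀ i j, i < j → c * Real.log (ξ i).den ≤ Real.log (ξ j).den := by
  obtain ⟨ξ, hξ, hgrowth⟩ := exists_seq_of_forall_finset_exists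
    (fun x : ℚ => p x ∧ Q ≤ Real.log x.den)
    (fun x y => c * Real.log x.den ≤ Real.log y.den) fun s _ => by
      set b := |Q| + ∑ x ∈ s, |c * Real.log x.den|
      obtain ⟨y, hy, hpy⟩ := h ⌈Real.exp b⌉₊
      have hby : b ≤ Real.log y.den :=
        (Real.le_log_iff_exp_le (by exact_mod_cast y.den_pos)).mpr
          ((Nat.le_ceil _).trans (by exact_mod_cast hy.le))
      refine ⟨y, ⟨hpy, ?_⟩, fun x hx => ?_⟩
      · have : 0 ≤ ∑ x ∈ s, |c * Real.log x.den| := Finset.sum_nonneg fun _ _ => abs_nonneg _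
        linarith [le_abs_self Q]
      · have := Finset.single_le_sum (f := fun x : ℚ => |c * Real.log x.den|)
          (fun _ _ => abs_nonneg _) hx
        linarith [le_abs_self (c * Real.log x.den), abs_nonneg Q]
  exact ⟨ξ, fun k => (hξ k).1, fun k => (hξ k).2, hgrowth⟩

lemma exists_rothHypotheses {σ : Type*} [Finite σ] [LinearOrder σ] {ξ : σ → ℚ} {ρ ε Q : ℝ}
    (hρ : 0 < ρ) (hε : 0 < ε) (hQ : 0 < Q) (hξQ : ∀ i, Q ≤ Real.log (ξ i).den)
    (hξ : ∀ i j, i < j → 2 / ρ * Real.log (ξ i).den ≤ Real.log (ξ j).den) :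
    ∃ (T : ℝ) (r : σ → ℕ) (R : ℕ), 0 < T ∧ RothHypotheses ρ r R ξ T ∧ R * Q ≤ 2 * T ∧
      ∀ i, r i * Real.log (ξ i).den ≤ (1 + ε) * T := by
  cases nonempty_fintype σ
  set q : σ → ℝ := fun i => Real.log (ξ i).den
  have hq (i : σ) : 0 < q i := hQ.trans_le (hξQ i)
  have : 0 ≤ ∑ i, q i := Finset.sum_nonneg fun i _ => (hq i).le
  obtain ⟨T, hT0, hT⟩ : ∃ T, 0 < T ∧ ∀ i, q i ≤ T ∧ q i ≤ ε * T := by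
    refine ⟨1 + (1 + ε⁻¹) * ∑ i, q i, by positivity, fun i => ?_⟩
    have hi : q i ≤ ∑ i, q i :=
      Finset.single_le_sum (fun i _ => (hq i).le) (Finset.mem_univ i)
    constructor
    · have : 0 ≤ ε⁻¹ * ∑ i, q i := by positivity
      linarith
    · rw [mul_add, ← mul_assoc, mul_add, mul_inv_cancel₀ hε.ne']
      have : 0 ≤ ε * ∑ i, q i := by positivity
      linarith
  have hle (i : σ) : T ≤ ⌈T / q i⌉₊ * q i := (div_le_iff₀ (hq i)).mp (Nat.le_ceil _)
  have hlt (i : σ) : ⌈T / q i⌉₊ * q i ≤ T + q i := by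
    have := mul_le_mul_of_nonneg_right (Nat.ceil_lt_add_one (div_pos hT0 (hq i)).le).le (hq i).le
    rwa [add_mul, div_mul_cancel₀ _ (hq i).ne', one_mul] at this
  refine ⟨T, fun i => ⌈T / q i⌉₊, ⌊2 * T / Q⌋₊, hT0,
    ⟨fun i => Nat.ceil_pos.mpr (div_pos hT0 (hq i)),
    fun i => Nat.le_floor ?_, fun i j hij => ?_, hle⟩, ?_, fun i => ?_⟩
  · rw [le_div_iff₀ hQ]
    calc (⌈T / q i⌉₊ : ℝ) * Q ≤ ⌈T / q i⌉₊ * q i := by gcongr; exact hξQ i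
      _ ≤ 2 * T := by linarith [hlt i, (hT i).1]
  · refine le_of_mul_le_mul_right ?_ (hq j)
    have hqij : 2 * q i ≤ ρ * q j := by
      have := mul_le_mul_of_nonneg_left (hξ i j hij) hρ.le
      rwa [← mul_assoc, mul_div_cancel₀ _ hρ.ne'] at this
    calc (⌈T / q j⌉₊ : ℝ) * q j ≤ 2 * T := by linarith [hlt j, (hT j).1]
      _ ≤ ⌈T / q i⌉₊ * (2 * q i) := by linarith [hle i]
      _ ≤ ⌈T / q i⌉₊ * (ρ * q j) := by gcongr
      _ = ρ * ⌈T / q i⌉₊ * q j := by ring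
  · exact (le_div_iff₀ hQ).mp (Nat.floor_le (by positivity))
  · linarith [hlt i, (hT i).2]

end ChoiceOfDegrees

section DiophantineApproximation

lemma exists_den_gt_of_liouvilleWith {x p κ : ℝ} (h : LiouvilleWith p x) (hp : 1 < p)
    (hκ : 0 < κ) (hκp : κ < p) (M : ℕ) :
    ∃ ξ : ℚ, M < ξ.den ∧ |x - ξ| ≤ Real.exp (-(κ * Real.log ξ.den)) := by
  set δ : ℝ := |M.factorial * x - round (M.factorial * x)|
  have hδ : 0 < δ :=
    abs_pos.mpr <| sub_ne_zero.mpr <| (h.nat_mul M.factorial_ne_zero).ne_cast_int hp _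
  have hsmall : ∀ᶠ n : ℕ in atTop, M.factorial * (n : ℝ) ^ (-κ) < δ := by
    have := ((tendsto_rpow_neg_atTop hκ).comp tendsto_natCast_atTop_atTop).const_mul
      (M.factorial : ℝ)
    rw [mul_zero] at this
    exact this.eventually_lt_const hδ
  obtain ⟨n, ⟨m, -, hm⟩, hnδ, hn⟩ :=
    ((h.frequently_lt_rpow_neg hκp).and_eventually (hsmall.and (eventually_gt_atTop 0))).exists
  set ξ : ℚ := (m : ℚ) / (n : ℤ) with hξ
  have hcast : (ξ : ℝ) = m / n := by rw [hξ]; push_cast; rfl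
  rw [← hcast] at hm
  refine ⟨ξ, ?_, ?_⟩
  · by_contra! hle
    obtain ⟨k, hk⟩ := Nat.dvd_factorial ξ.den_pos hle
    have hint : (M.factorial : ℝ) * ξ = (ξ.num * k : ℤ) := by
      have : (M.factorial : ℚ) * ξ = ξ.num * k := by
        rw [hk, ← Rat.den_mul_eq_num]
        push_cast
        ring
      exact_mod_cast congrArg (Rat.cast : ℚ → ℝ) this
    have hround := round_le (M.factorial * x) (ξ.num * k)
    rw [← hint, ← mul_sub, abs_mul, Nat.abs_cast] at hround
    have := mul_le_mul_of_nonneg_left hm.le (Nat.cast_nonneg (α := ℝ) M.factorial)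
    linarith
  · have hden : (0 : ℝ) < ξ.den := by exact_mod_cast ξ.den_pos
    have hdvd : ξ.den ∣ n := by
      rw [hξ, ← Rat.divInt_eq_div]
      exact_mod_cast Rat.den_dvd m n
    refine hm.le.trans ?_
    rw [mul_comm, ← mul_neg, ← Real.rpow_def_of_pos hden]
    exact Real.rpow_le_rpow_of_nonpos hden (by exact_mod_cast Nat.le_of_dvd hn hdvd) (by linarith)

lemma exists_rothHypotheses_of_liouvilleWith {x p κ ρ ε Q : ℝ} (h : LiouvilleWith p x)
    (hp : 1 < p) (hκ : 0 < κ) (hκp : κ < p) (n : ℕ) (hρ : 0 < ρ) (hε : 0 < ε) (hQ : 0 < Q) :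
    ∃ (ξ : Fin n → ℚ) (T : ℝ) (r : Fin n → ℕ) (R : ℕ),
      (∀ i, |x - ξ i| ≤ Real.exp (-(κ * Real.log (ξ i).den))) ∧ 0 < T ∧
      RothHypotheses ρ r R ξ T ∧ R * Q ≤ 2 * T ∧
      ∀ i, r i * Real.log (ξ i).den ≤ (1 + ε) * T := by
  obtain ⟨ξ, hξx, hξQ, hξ⟩ :=
    exists_seq_den_growth (exists_den_gt_of_liouvilleWith h hp hκ hκp) Q (2 / ρ)
  obtain ⟨T, r, R, hrest⟩ := exists_rothHypotheses (ξ := fun i : Fin n => ξ i)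
    hρ hε hQ (fun i => hξQ i) fun i j hij => hξ i j hij
  exact ⟨fun i => ξ i, T, r, R, fun i => hξx i, hrest⟩

theorem not_liouvilleWith_of_isIntegral {α p : ℝ} (hα : IsIntegral ℤ α) (hp : 2 < p) :
    ¬ LiouvilleWith p α := by
  intro hαp
  obtain ⟨κ, hκ, hκp⟩ := exists_between hp
  obtain ⟨ε, hε, hεκ⟩ : ∃ ε, 0 < ε ∧ ε * (8 * (κ + 1)) = κ - 2 :=
    ⟨(κ - 2) / (8 * (κ + 1)), div_pos (by linarith) (by linarith), div_mul_cancel₀ _ (by linarith)⟩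
  obtain ⟨n, hn, C₀, hC₀, hauxiliary⟩ := exists_indexGE_half_sub hα hε
  have hn' : (0 : ℝ) < n := by exact_mod_cast hn
  obtain ⟨ρ, hρ, C, hC, hroth⟩ :=
    exists_indexLTOn (Finset.univ : Finset (Fin n)) (ε * n) (by positivity)
  set E := Real.log (2 * (1 + |α|))
  have hE : 0 ≤ E := Real.log_nonneg (by linarith [abs_nonneg α])
  obtain ⟨Q, hQ, hQC, hQE⟩ : ∃ Q, 0 < Q ∧ C * (C₀ + 1) * 2 ≤ Q ∧ (C₀ + n * E) / (ε * n) ≤ Q :=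
    ⟨C * (C₀ + 1) * 2 + (C₀ + n * E) / (ε * n), by positivity,
      le_add_of_nonneg_right (by positivity), le_add_of_nonneg_left (by positivity)⟩
  rw [div_le_iff₀ (by positivity)] at hQE
  obtain ⟨ξ, T, r, R, hξα, hT, hr, hRQ, hrT⟩ := exists_rothHypotheses_of_liouvilleWith
    hαp (by linarith) (by linarith) hκp n hρ hε hQ
  obtain ⟨P, hP0, hdeg, hnorm, hindex⟩ := hauxiliary hr.pos hr.le
  have hCT : C * (Real.log (l1Norm P) + R) ≤ T := by
    have hlogR : Real.log (l1Norm P) + R ≤ (C₀ + 1) * R := by linarith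
    have := mul_le_mul_of_nonneg_left hlogR hC.le
    have := mul_le_mul_of_nonneg_left hQC (Nat.cast_nonneg (α := ℝ) R)
    linarith
  obtain ⟨μ, hμ, hμ0⟩ : ∃ μ, scaledDegree r μ < ε * n ∧
      coeff μ (translate (fun i => ξ i) P) ≠ 0 := by
    simpa only [IndexGE, not_forall, exists_prop] using
      hroth hr (by simp [supported_univ]) hP0 hdeg hCT
  -- The choice of `ε` makes `κ * (1 / 2 - 2 * ε)` larger than `1 + 3 * ε`.
  have hkey := mul_sub_le_log_l1Norm_add hr.pos hr.le hdeg hindex hμ.le hμ0 (by linarith) hT.le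
    hr.le_mul_log hrT hξα
  rw [Fintype.card_fin] at hkey
  have hRE : R * (C₀ + n * E) ≤ 2 * T * (ε * n) := by
    have := mul_le_mul_of_nonneg_left hQE (Nat.cast_nonneg (α := ℝ) R)
    have := mul_le_mul_of_nonneg_right hRQ (mul_pos hε hn').le
    linarith
  have hle : n * T * (ε * (2 * κ + 1)) ≤ 0 := by
    have : ε * (2 * κ + 1) = κ / 2 - 1 - 2 * ε * κ - 3 * ε := by linarith
    rw [this]
    linarith
  exact hle.not_gt (by positivity)

theorem not_liouvilleWith_of_isAlgebraic {x p : ℝ} (hx : IsAlgebraic ℚ x) (hp : 2 < p) :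
    ¬ LiouvilleWith p x := by
  obtain ⟨m, hm, hint⟩ :=
    ((IsFractionRing.isAlgebraic_iff ℤ ℚ ℝ).mpr hx).exists_integral_multiple
  rw [zsmul_eq_mul] at hint
  exact fun h => not_liouvilleWith_of_isIntegral hint hp (h.int_mul hm)

end DiophantineApproximation

section GrowthGap

lemma exists_last_of_not {P : ℕ → Prop} {m n : ℕ} (hmn : m ≤ n) (hm : P m) (hn : ¬ P n) :
    ∃ i, m ≤ i ∧ i < n ∧ P i ∧ ∀ j, i < j → j ≤ n → ¬ P j := by
  classical
  have hP : P (Nat.findGreatest P n) := Nat.findGreatest_spec hmn hm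
  exact ⟨Nat.findGreatest P n, Nat.le_findGreatest hmn hm,
    (Nat.findGreatest_le n).lt_of_ne fun h => hn (h ▸ hP), hP,
    fun _ => Nat.findGreatest_is_greatest⟩

lemma exists_window_of_eventually_lt {ℓ : ℕ → ℝ} (hℓ : ∀ i, 0 ≤ ℓ i) {D : ℝ} (hD : 1 ≤ D)
    (hfreq : ∀ G, ∃ᶠ n in atTop, G * D ^ n < ℓ n) (hlarge : ∀ᶠ i : ℕ in atTop, i < ℓ i)
    {G : ℝ} (hG : 0 ≤ G) (K : ℕ) :
    ∃ k n, K ≤ k ∧ k ≤ n ∧ (∀ i, k ≤ i → i ≤ n → i < ℓ i) ∧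
      G * (∑ i ∈ Finset.range k, ℓ i) * D ^ (n + 1 - k) ≤ ℓ n := by
  obtain ⟨k, hk⟩ := eventually_atTop.mp (hlarge.and (eventually_ge_atTop K))
  obtain ⟨n, hn, hkn⟩ := ((hfreq (G * (∑ i ∈ Finset.range k, ℓ i) * D)).and_eventually
    (eventually_ge_atTop k)).exists
  refine ⟨k, n, (hk k le_rfl).2, hkn, fun i hi _ => (hk i hi).1, le_trans ?_ hn.le⟩
  rw [mul_assoc _ D, ← pow_succ']
  have := Finset.sum_nonneg fun i (_ : i ∈ Finset.range k) => hℓ i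
  gcongr
  omega

-- If `ℓ i ≤ i`, then `∑ j ≤ i, ℓ j` is at most quadratic in `i`, hence negligible against `D ^ i`.
lemma exists_window_of_frequently_le {ℓ : ℕ → ℝ} (hmono : Monotone ℓ) {D : ℝ} (hD : 1 < D)
    (hfreq : ∀ G, ∃ᶠ n in atTop, G * D ^ n < ℓ n) (hsmall : ∃ᶠ i : ℕ in atTop, ℓ i ≤ i)
    {G : ℝ} (hG : 0 ≤ G) (K : ℕ) :
    ∃ k n, K ≤ k ∧ k ≤ n ∧ (∀ i, k ≤ i → i ≤ n → i < ℓ i) ∧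
      G * (∑ i ∈ Finset.range k, ℓ i) * D ^ (n + 1 - k) ≤ ℓ n := by
  have hpoly : ∀ᶠ i : ℕ in atTop, G * ((i + 1 : ℕ) : ℝ) ^ 2 ≤ D ^ (i + 1) := by
    have hlim := (tendsto_pow_const_div_const_pow_of_one_lt 2 hD).const_mul G
    rw [mul_zero] at hlim
    filter_upwards [(tendsto_add_atTop_nat 1).eventually (hlim.eventually_le_const one_pos)]
      with i hi
    rwa [← mul_div_assoc, div_le_one (by positivity)] at hi
  have hself : ∀ᶠ n : ℕ in atTop, (n : ℝ) ≤ D ^ n := by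
    filter_upwards [(tendsto_pow_const_div_const_pow_of_one_lt 1 hD).eventually_le_const one_pos]
      with n hn
    rwa [pow_one, div_le_one (by positivity)] at hn
  obtain ⟨k₀, hk₀⟩ := eventually_atTop.mp hpoly
  obtain ⟨i₀, hi₀, hk₀i₀⟩ := (hsmall.and_eventually (eventually_ge_atTop (max K k₀))).exists
  obtain ⟨n, hn, hnD, hi₀n⟩ :=
    ((hfreq D).and_eventually (hself.and (eventually_ge_atTop i₀))).exists
  have hnℓ : (n : ℝ) < ℓ n := (hnD.trans (le_mul_of_one_le_left (by positivity) hD.le)).trans_lt hn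
  obtain ⟨i, hi₀i, hin, hi, hilast⟩ :=
    exists_last_of_not (P := fun i : ℕ => ℓ i ≤ i) hi₀n hi₀ hnℓ.not_ge
  refine ⟨i + 1, n, by omega, hin, fun j hij hjn => not_le.mp (hilast j hij hjn), ?_⟩
  have hsum : ∑ j ∈ Finset.range (i + 1), ℓ j ≤ ((i + 1 : ℕ) : ℝ) ^ 2 := by
    calc ∑ j ∈ Finset.range (i + 1), ℓ j ≤ ∑ j ∈ Finset.range (i + 1), ((i + 1 : ℕ) : ℝ) := by
          refine Finset.sum_le_sum fun j hj => (hmono (Finset.mem_range_succ_iff.mp hj)).trans ?_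
          exact hi.trans (by norm_num)
      _ = _ := by rw [Finset.sum_const, Finset.card_range, nsmul_eq_mul, sq]
  calc G * (∑ j ∈ Finset.range (i + 1), ℓ j) * D ^ (n + 1 - (i + 1))
      ≤ G * ((i + 1 : ℕ) : ℝ) ^ 2 * D ^ (n + 1 - (i + 1)) := by gcongr
    _ ≤ D ^ (i + 1) * D ^ (n + 1 - (i + 1)) := by gcongr; exact hk₀ i (by omega)
    _ = D * D ^ n := by rw [← pow_add, ← pow_succ']; congr 1; omega
    _ ≤ ℓ n := hn.le

lemma exists_window {ℓ : ℕ → ℝ} (hℓ : ∀ i, 0 ≤ ℓ i) (hmono : Monotone ℓ) {D : ℝ} (hD : 1 < D)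
    (hfreq : ∀ G, ∃ᶠ n in atTop, G * D ^ n < ℓ n) {G : ℝ} (hG : 0 ≤ G) (K : ℕ) :
    ∃ k n, K ≤ k ∧ k ≤ n ∧ (∀ i, k ≤ i → i ≤ n → i < ℓ i) ∧
      G * (∑ i ∈ Finset.range k, ℓ i) * D ^ (n + 1 - k) ≤ ℓ n := by
  by_cases hlarge : ∀ᶠ i : ℕ in atTop, i < ℓ i
  · exact exists_window_of_eventually_lt hℓ hD.le hfreq hlarge hG K
  · have hsmall : ∃ᶠ i : ℕ in atTop, ℓ i ≤ i := by
      simpa only [not_eventually, not_lt] using hlarge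
    exact exists_window_of_frequently_le hmono hD hfreq hsmall hG K

lemma exists_jump {ℓ : ℕ → ℝ} (hℓ : ∀ i, 0 ≤ ℓ i) {D : ℝ} (hD : 1 ≤ D) {k n : ℕ} (hkn : k ≤ n)
    (hn : (∑ i ∈ Finset.range k, ℓ i) * D ^ (n + 1 - k) ≤ ℓ n) :
    ∃ N, k ≤ N ∧ (D - 1) * ∑ i ∈ Finset.range N, ℓ i ≤ ℓ N ∧
      ∑ i ∈ Finset.range N, ℓ i ≤ (∑ i ∈ Finset.range k, ℓ i) * D ^ (n + 1 - k) := by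
  have hsum (k : ℕ) : 0 ≤ ∑ i ∈ Finset.range k, ℓ i := Finset.sum_nonneg fun i _ => hℓ i
  induction hkn using Nat.decreasingInduction with
  | self =>
    rw [show n + 1 - n = 1 by omega, pow_one] at hn ⊢
    exact ⟨n, le_rfl, by linarith [hsum n], le_mul_of_one_le_right (hsum n) hD⟩
  | of_succ k hk ih =>
    by_cases hjump : (D - 1) * ∑ i ∈ Finset.range k, ℓ i ≤ ℓ k
    · exact ⟨k, le_rfl, hjump, le_mul_of_one_le_right (hsum k) (one_le_pow₀ hD)⟩
    · have hstep : (∑ i ∈ Finset.range (k + 1), ℓ i) * D ^ (n + 1 - (k + 1)) ≤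
          (∑ i ∈ Finset.range k, ℓ i) * D ^ (n + 1 - k) := by
        rw [show n + 1 - k = n + 1 - (k + 1) + 1 by omega, pow_succ', ← mul_assoc,
          Finset.sum_range_succ]
        gcongr
        linarith
      obtain ⟨N, hkN, hN, hNk⟩ := ih (hstep.trans hn)
      exact ⟨N, by omega, hN, hNk.trans hstep⟩

lemma frequently_forall_sum_le {ℓ : ℕ → ℝ} (hℓ : ∀ i, 0 ≤ ℓ i) (hmono : Monotone ℓ) {D : ℝ}
    (hD : 1 < D) (hfreq : ∀ G, ∃ᶠ n in atTop, G * D ^ n < ℓ n) (G : ℝ) :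
    ∃ᶠ N in atTop, ∀ i, N ≤ i →
      ((D - 1) * ∑ j ∈ Finset.range N, ℓ j ≤ ℓ i ∧ i ≤ ℓ i) ∨
        G * ∑ j ∈ Finset.range N, ℓ j ≤ ℓ i := by
  refine frequently_atTop.mpr fun K => ?_
  obtain ⟨k, n, hKk, hkn, hwindow, hn⟩ :=
    exists_window hℓ hmono hD hfreq (zero_le_one.trans (le_max_left 1 G)) K
  have hsum (k : ℕ) : 0 ≤ ∑ i ∈ Finset.range k, ℓ i := Finset.sum_nonneg fun i _ => hℓ i
  have hbase : 0 ≤ (∑ i ∈ Finset.range k, ℓ i) * D ^ (n + 1 - k) :=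
    mul_nonneg (hsum k) (by positivity)
  rw [mul_assoc] at hn
  obtain ⟨N, hkN, hN, hNk⟩ := exists_jump hℓ hD.le hkn
    ((le_mul_of_one_le_left hbase (le_max_left 1 G)).trans hn)
  refine ⟨N, hKk.trans hkN, fun i hNi => ?_⟩
  rcases le_or_gt i n with hin | hni
  · exact .inl ⟨hN.trans (hmono hNi), (hwindow i (hkN.trans hNi) hin).le⟩
  · right
    calc G * ∑ j ∈ Finset.range N, ℓ j ≤ max 1 G * ∑ j ∈ Finset.range N, ℓ j := by
          gcongr
          · exact hsum N
          · exact le_max_right 1 G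
      _ ≤ max 1 G * ((∑ i ∈ Finset.range k, ℓ i) * D ^ (n + 1 - k)) := by gcongr
      _ ≤ ℓ i := hn.trans (hmono hni.le)

end GrowthGap

section PartialProducts

lemma exists_summable_frequently_rpow_neg_le {S : ℕ → ℝ} (hS : ∀ i, 1 ≤ S i) (hmono : Monotone S)
    {θ σ κ p : ℝ} (hθ : 0 < θ) (hσθ : σ < θ) (hsum : Summable fun i => S i ^ (-σ))
    (hκ : 0 < κ) (hp : 0 ≤ p) (hpκ : p < κ)
    (hfreq : ∀ G, ∃ᶠ n in atTop, G * (κ / θ + 1) ^ n < Real.log (S n)) :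
    ∃ w : ℕ → ℝ, (∀ i, 0 ≤ w i) ∧ Summable w ∧ ∃ᶠ N in atTop, ∀ i, N ≤ i →
      S i ^ (-θ) ≤ (∏ j ∈ Finset.range N, S j) ^ (-p) * w i := by
  have hS0 (i : ℕ) : 0 < S i := zero_lt_one.trans_le (hS i)
  set η := θ * (1 - p / κ)
  have hη : 0 < η := mul_pos hθ (sub_pos.mpr ((div_lt_one hκ).mpr hpκ))
  refine ⟨fun i => Real.exp (-η) ^ i + S i ^ (-σ),
    fun i => add_nonneg (by positivity) (Real.rpow_nonneg (hS0 i).le _),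
    (summable_geometric_of_lt_one (by positivity) (by simpa using hη)).add hsum, ?_⟩
  refine (frequently_forall_sum_le (fun i => Real.log_nonneg (hS i))
    (fun i j hij => Real.log_le_log (hS0 i) (hmono hij)) (lt_add_of_pos_left 1 (by positivity))
    hfreq (p / (θ - σ))).mono fun N hN i hNi => ?_
  beta_reduce
  rw [Real.rpow_def_of_pos (hS0 i), Real.rpow_def_of_pos (Finset.prod_pos fun j _ => hS0 j),
    Real.rpow_def_of_pos (hS0 i), Real.log_prod fun j _ => (hS0 j).ne', ← Real.exp_nat_mul]
  set ℓ := Real.log (S i)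
  set s := ∑ j ∈ Finset.range N, Real.log (S j)
  rw [mul_add, ← Real.exp_add, ← Real.exp_add]
  rcases hN i hNi with ⟨hs, hi⟩ | hs
  · refine le_add_of_le_of_nonneg (Real.exp_le_exp.mpr ?_) (Real.exp_pos _).le
    rw [add_sub_cancel_right, div_mul_eq_mul_div, div_le_iff₀ hθ] at hs
    have hps : p * s ≤ (θ - η) * ℓ := by
      calc p * s = p / κ * (κ * s) := by rw [← mul_assoc, div_mul_cancel₀ _ hκ.ne']
        _ ≤ p / κ * (ℓ * θ) := by gcongr
        _ = (θ - η) * ℓ := by simp only [η]; ring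
    linarith [mul_le_mul_of_nonneg_left hi hη.le]
  · refine le_add_of_nonneg_of_le (Real.exp_pos _).le (Real.exp_le_exp.mpr ?_)
    rw [div_mul_eq_mul_div, div_le_iff₀ (sub_pos.mpr hσθ)] at hs
    linarith

lemma strictMono_prod_one_add {v : ℕ → ℝ} (hv : ∀ i, 0 < v i) :
    StrictMono fun N => ∏ i ∈ Finset.range N, (1 + v i) :=
  strictMono_nat_of_lt_succ fun N => by
    simp only [Finset.prod_range_succ]
    exact lt_mul_of_one_lt_right (Finset.prod_pos fun i _ => by linarith [hv i])
      (lt_add_of_pos_right 1 (hv N))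

lemma sub_prod_range_le {v w : ℕ → ℝ} {L K : ℝ} {N : ℕ} (hv : ∀ i, 0 < v i)
    (hL : Tendsto (fun N => ∏ i ∈ Finset.range N, (1 + v i)) atTop (nhds L))
    (hw : ∀ i, 0 ≤ w i) (hsum : Summable w) (hK : 0 ≤ K) (hvw : ∀ i, N ≤ i → v i ≤ K * w i) :
    L - ∏ i ∈ Finset.range N, (1 + v i) ≤ L * K * ∑' i, w i := by
  set x : ℕ → ℝ := fun N => ∏ i ∈ Finset.range N, (1 + v i)
  have hstep (i : ℕ) : x (i + 1) - x i = x i * v i := by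
    simp only [x, Finset.prod_range_succ]
    ring
  have hxL (i : ℕ) : x i ≤ L := (strictMono_prod_one_add hv).monotone.ge_of_tendsto hL i
  have hL0 : 0 ≤ L := zero_le_one.trans (hxL 0)
  refine le_of_tendsto (hL.sub_const (x N)) (eventually_atTop.mpr ⟨N, fun M hNM => ?_⟩)
  calc x M - x N = ∑ i ∈ Finset.Ico N M, x i * v i := by
        simp only [← hstep, Finset.sum_Ico_sub _ hNM]
    _ ≤ ∑ i ∈ Finset.Ico N M, L * K * w i := by
        refine Finset.sum_le_sum fun i hi => ?_
        rw [mul_assoc]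
        exact mul_le_mul (hxL i) (hvw i (Finset.mem_Ico.mp hi).1) (hv i).le hL0
    _ ≤ L * K * ∑' i, w i := by
        rw [← Finset.mul_sum]
        gcongr
        exact hsum.sum_le_tsum _ fun i _ => hw i

lemma prod_one_add_div_eq_div {S B : ℕ → ℕ} (hS : ∀ i, S i ≠ 0) (N : ℕ) :
    ∏ i ∈ Finset.range N, (1 + (B i : ℝ) / S i) =
      (∏ i ∈ Finset.range N, (S i + B i) : ℤ) / (∏ i ∈ Finset.range N, S i : ℕ) := by
  push_cast
  rw [← Finset.prod_div_distrib]
  exact Finset.prod_congr rfl fun i _ => one_add_div (Nat.cast_ne_zero.mpr (hS i))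

lemma liouvilleWith_of_tendsto_prod {S B : ℕ → ℕ} (hS : ∀ i, 1 < S i) (hmono : Monotone S)
    (hB : ∀ i, 0 < B i) {C θ σ κ p L : ℝ} (hθ : 0 < θ) (hσθ : σ < θ)
    (hsum : Summable fun i => (S i : ℝ) ^ (-σ)) (hκ : 0 < κ) (hp : 0 ≤ p) (hpκ : p < κ)
    (hBS : ∀ i, (B i : ℝ) / S i ≤ C * (S i : ℝ) ^ (-θ))
    (hfreq : ∀ G, ∃ᶠ n in atTop, G * (κ / θ + 1) ^ n < Real.log (S n))
    (hL : Tendsto (fun N => ∏ i ∈ Finset.range N, (1 + (B i : ℝ) / S i)) atTop (nhds L)) :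
    LiouvilleWith p L := by
  have hS1 (i : ℕ) : (1 : ℝ) ≤ S i := Nat.one_le_cast.mpr (hS i).le
  obtain ⟨w, hw, hwsum, hfreqw⟩ := exists_summable_frequently_rpow_neg_le hS1
    (fun i j hij => Nat.cast_le.mpr (hmono hij)) hθ hσθ hsum hκ hp hpκ hfreq
  set q : ℕ → ℕ := fun N => ∏ i ∈ Finset.range N, S i
  set x : ℕ → ℝ := fun N => ∏ i ∈ Finset.range N, (1 + (B i : ℝ) / S i)
  have hq0 (N : ℕ) : 0 < q N := Finset.prod_pos fun i _ => zero_lt_one.trans (hS i)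
  have hq : Tendsto q atTop atTop := StrictMono.tendsto_atTop <| strictMono_nat_of_lt_succ
    fun N => by simpa only [q, Finset.prod_range_succ] using lt_mul_of_one_lt_right (hq0 N) (hS N)
  have hv (i : ℕ) : 0 < (B i : ℝ) / S i :=
    div_pos (Nat.cast_pos.mpr (hB i)) (zero_lt_one.trans_le (hS1 i))
  have hx : StrictMono x := strictMono_prod_one_add hv
  have hC : 0 ≤ C := nonneg_of_mul_nonneg_left ((hv 0).le.trans (hBS 0))
    (Real.rpow_pos_of_pos (zero_lt_one.trans_le (hS1 0)) _)
  refine ⟨L * C * ∑' i, w i + 1, hq.frequently (hfreqw.mono fun N hN =>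
    ⟨∏ i ∈ Finset.range N, (S i + B i), ?_⟩)⟩
  rw [← prod_one_add_div_eq_div fun i => (zero_lt_one.trans (hS i)).ne']
  have hxL : x N < L := (hx N.lt_succ_self).trans_le (hx.monotone.ge_of_tendsto hL _)
  refine ⟨hxL.ne', ?_⟩
  have hqp : 0 < (q N : ℝ) ^ (-p) := Real.rpow_pos_of_pos (Nat.cast_pos.mpr (hq0 N)) _
  rw [abs_of_pos (sub_pos.mpr hxL), div_eq_mul_inv, ← Real.rpow_neg (Nat.cast_nonneg _)]
  calc L - x N ≤ L * (C * (q N : ℝ) ^ (-p)) * ∑' i, w i := by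
        refine sub_prod_range_le hv hL hw hwsum (by positivity) fun i hi => ?_
        rw [mul_assoc]
        refine (hBS i).trans (mul_le_mul_of_nonneg_left ?_ hC)
        simpa only [q, Nat.cast_prod] using hN i hi
    _ = L * C * (∑' i, w i) * (q N : ℝ) ^ (-p) := by ring
    _ < (L * C * ∑' i, w i + 1) * (q N : ℝ) ^ (-p) := by gcongr; exact lt_add_one _

end PartialProducts

section Reordering

lemma exists_equiv_monotone_comp {A : ℕ → ℕ} (hA : ∀ n, n < A n) :
    ∃ σ : ℕ ≃ ℕ, Monotone (A ∘ σ) := by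
  -- Ordering by this key is ordering by `A n` first and by `n` next.
  set key : ℕ → ℕ := fun n => A n ^ 2 + n with hkey
  have hle {m n : ℕ} (h : key m ≤ key n) : A m ≤ A n := by
    by_contra! hlt
    have := hA n
    simp only [hkey] at h
    nlinarith
  have hinj : Function.Injective key := fun m n h => by
    have hmn : A m = A n := le_antisymm (hle h.le) (hle h.ge)
    simpa only [hkey, hmn, Nat.add_left_cancel_iff] using h
  have : Infinite (Set.range key) := (Set.infinite_range_of_injective hinj).to_subtype
  set e := Nat.Subtype.orderIsoOfNat (Set.range key)
  refine ⟨e.toEquiv.trans (Equiv.ofInjective key hinj).symm, fun i j hij => hle ?_⟩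
  have hkey_apply (i : ℕ) : key ((Equiv.ofInjective key hinj).symm (e i)) = e i :=
    congrArg Subtype.val ((Equiv.ofInjective key hinj).apply_symm_apply (e i))
  exact (hkey_apply i).le.trans
    ((Subtype.coe_le_coe.mpr (e.monotone hij)).trans (hkey_apply j).ge)

lemma exists_le_le_apply {σ : ℕ → ℕ} (hσ : Function.Injective σ) (i : ℕ) : ∃ j ≤ i, i ≤ σ j := by
  by_contra! h
  have := Finset.card_le_card_of_injOn σ (s := Finset.range (i + 1)) (t := Finset.range i)
    (fun j hj => Finset.mem_coe.mpr (Finset.mem_range.mpr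
      (h j (Finset.mem_range_succ_iff.mp hj)))) hσ.injOn
  simp at this

lemma le_apply_of_monotone_comp {β : Type*} [Preorder β] {a A : ℕ → β} (ha : Monotone a)
    (haA : ∀ n, a n ≤ A n) {σ : ℕ → ℕ} (hσ : Function.Injective σ)
    (hAσ : Monotone (A ∘ σ)) (i : ℕ) : a i ≤ A (σ i) := by
  obtain ⟨j, hji, hj⟩ := exists_le_le_apply hσ i
  exact (ha hj).trans ((haA _).trans (hAσ hji))

end Reordering

section Growth

lemma exists_rpow_le_mul_add {α h : ℝ} (hα0 : 0 ≤ α) (hα1 : α < 1) (hh : 0 < h) :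
    ∃ K, ∀ y, 0 ≤ y → y ^ α ≤ h * y + K := by
  have hα : 0 < 1 - α := sub_pos.mpr hα1
  set K := (h ^ (-α)) ^ (1 - α)⁻¹
  have hK : 0 ≤ K := by positivity
  refine ⟨K, fun y hy => ?_⟩
  calc y ^ α = (h * y) ^ α * K ^ (1 - α) := by
        rw [Real.rpow_inv_rpow (by positivity) hα.ne', Real.mul_rpow hh.le hy, mul_right_comm,
          ← Real.rpow_add hh, add_neg_cancel, Real.rpow_zero, one_mul]
    _ ≤ α * (h * y) + (1 - α) * K :=
        Real.geom_mean_le_arith_mean2_weighted hα0 hα.le (by positivity) hK (by ring)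
    _ ≤ h * y + K := add_le_add (mul_le_of_le_one_left (by positivity) hα1.le)
        (mul_le_of_le_one_left hK (by linarith))

lemma exists_rpow_mul_two_rpow_le {α β β' : ℝ} (hα0 : 0 ≤ α) (hα1 : α < 1) (hβ : β < β') :
    ∃ C : ℝ, 0 < C ∧ ∀ x : ℝ, 1 ≤ x → x ^ β * 2 ^ (Real.logb 2 x ^ α) ≤ C * x ^ β' := by
  obtain ⟨K, hK⟩ := exists_rpow_le_mul_add hα0 hα1 (sub_pos.mpr hβ)
  refine ⟨2 ^ K, by positivity, fun x hx => ?_⟩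
  have hx0 : 0 < x := zero_lt_one.trans_le hx
  calc x ^ β * 2 ^ (Real.logb 2 x ^ α)
      ≤ x ^ β * 2 ^ ((β' - β) * Real.logb 2 x + K) := by
        gcongr
        · exact one_le_two
        · exact hK _ (Real.logb_nonneg one_lt_two hx)
    _ = 2 ^ K * (x ^ β * x ^ (β' - β)) := by
        rw [Real.rpow_add two_pos, mul_comm (β' - β), Real.rpow_mul two_pos.le,
          Real.rpow_logb two_pos (by norm_num) hx0]
        ring
    _ = 2 ^ K * x ^ β' := by rw [← Real.rpow_add hx0, add_sub_cancel]

lemma frequently_lt_log_succ_of_limsup_eq_top {a : ℕ → ℝ} (ha : ∀ n, 1 ≤ n → 0 < a n) {D : ℝ}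
    (hD : 0 < D)
    (h : limsup (fun n : ℕ => ((a n ^ (D ^ (-(n : ℝ))) : ℝ) : EReal)) atTop = ⊤) (G : ℝ) :
    ∃ᶠ n in atTop, G * D ^ n < Real.log (a (n + 1)) := by
  have hlt : ((Real.exp (G / D) : ℝ) : EReal) <
      limsup (fun n : ℕ => ((a n ^ (D ^ (-(n : ℝ))) : ℝ) : EReal)) atTop :=
    h ▸ EReal.coe_lt_top _
  have hfreq := frequently_lt_of_lt_limsup (by isBoundedDefault) hlt
  rw [← map_add_atTop_eq_nat 1, frequently_map] at hfreq
  refine hfreq.mono fun n hn => ?_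
  have han := ha (n + 1) (by omega)
  rw [EReal.coe_lt_coe_iff, ← Real.lt_log_iff_exp_lt (Real.rpow_pos_of_pos han _),
    Real.log_rpow han, Real.rpow_neg hD.le, Real.rpow_natCast, inv_mul_eq_div,
    div_lt_div_iff₀ hD (by positivity), pow_succ, ← mul_assoc] at hn
  exact lt_of_mul_lt_mul_right hn hD.le

lemma div_le_mul_rpow_neg {a A b C θ : ℝ} (ha : 0 < a) (haA : a ≤ A) (hθ : θ ≤ 1) (hC : 0 ≤ C)
    (hb : b ≤ C * a ^ (1 - θ)) : b / A ≤ C * A ^ (-θ) := by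
  have hA : 0 < A := ha.trans_le haA
  rw [div_le_iff₀ hA, mul_assoc, ← Real.rpow_add_one hA.ne', neg_add_eq_sub]
  exact hb.trans (by gcongr)

lemma summable_rpow_neg {A : ℕ → ℝ} {ε σ : ℝ} (hσ : 0 ≤ σ) (hεσ : 1 < (1 + ε) * σ)
    (hA : ∀ i : ℕ, ((i + 1 : ℕ) : ℝ) ^ (1 + ε) ≤ A i) : Summable fun i => A i ^ (-σ) := by
  have hpow (i : ℕ) : 0 < ((i + 1 : ℕ) : ℝ) ^ (1 + ε) := by positivity
  refine Summable.of_nonneg_of_le (fun i => Real.rpow_nonneg ((hpow i).le.trans (hA i)) _)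
    (fun i => ?_) ((summable_nat_add_iff 1).mpr (Real.summable_one_div_nat_rpow.mpr hεσ))
  calc A i ^ (-σ) ≤ (((i + 1 : ℕ) : ℝ) ^ (1 + ε)) ^ (-σ) :=
        Real.rpow_le_rpow_of_nonpos (hpow i) (hA i) (neg_nonpos.mpr hσ)
    _ = 1 / ((i + 1 : ℕ) : ℝ) ^ ((1 + ε) * σ) := by
        rw [← Real.rpow_mul (Nat.cast_nonneg _), mul_neg, Real.rpow_neg (Nat.cast_nonneg _),
          one_div]

end Growth

section Transcendence

lemma exists_roth_exponents {ε β δ : ℝ} (hε : 0 < ε) (hβ : β < ε / (1 + ε)) (hδ : 0 < δ) :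
    ∃ θ κ, θ < 1 - β ∧ 1 < (1 + ε) * θ ∧ 2 < κ ∧ κ / θ = (2 + δ) / (1 - β) := by
  have hβ' : 1 / (1 + ε) < 1 - β := by
    rw [div_lt_iff₀ (by linarith), sub_mul]
    rw [lt_div_iff₀ (by linarith)] at hβ
    linarith
  have hβ1 : 0 < 1 - β := (by positivity : 0 < 1 / (1 + ε)).trans hβ'
  have hδβ : 2 / ((2 + δ) / (1 - β)) < 1 - β := by
    rw [div_div_eq_mul_div, div_lt_iff₀ (by linarith), mul_comm]
    gcongr
    linarith
  obtain ⟨θ, hθ, hθβ⟩ := exists_between (max_lt hβ' hδβ)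
  obtain ⟨hθε, hθδ⟩ := max_lt_iff.mp hθ
  have hθ0 : 0 < θ := (by positivity : 0 < 1 / (1 + ε)).trans hθε
  rw [div_lt_iff₀' (by linarith)] at hθε
  rw [div_lt_iff₀' (by positivity)] at hθδ
  exact ⟨θ, (2 + δ) / (1 - β) * θ, hθβ, hθε, hθδ, mul_div_cancel_right₀ _ hθ0.ne'⟩

theorem transcendental_of_tendsto_prod {S B : ℕ → ℕ} (hmono : Monotone S) (hB : ∀ i, 0 < B i)
    {ε θ κ C L : ℝ} (hε : 0 < ε) (hεθ : 1 < (1 + ε) * θ) (hκ : 2 < κ)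
    (hS : ∀ i : ℕ, ((i + 1 : ℕ) : ℝ) ^ (1 + ε) < S i)
    (hBS : ∀ i, (B i : ℝ) / S i ≤ C * (S i : ℝ) ^ (-θ))
    (hfreq : ∀ G, ∃ᶠ n in atTop, G * (κ / θ + 1) ^ n < Real.log (S n))
    (hL : Tendsto (fun N => ∏ i ∈ Finset.range N, (1 + (B i : ℝ) / S i)) atTop (nhds L)) :
    Transcendental ℚ L := by
  obtain ⟨p, hp, hpκ⟩ := exists_between hκ
  obtain ⟨σ, hσ, hσθ⟩ : ∃ σ, 1 / (1 + ε) < σ ∧ σ < θ :=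
    exists_between ((div_lt_iff₀' (by linarith)).mpr hεθ)
  have hσ0 : 0 < σ := (by positivity : 0 < 1 / (1 + ε)).trans hσ
  have hS1 (i : ℕ) : 1 < S i := by
    have hi : (1 : ℝ) ≤ ((i + 1 : ℕ) : ℝ) := Nat.one_le_cast.mpr (by omega)
    exact Nat.one_lt_cast.mp ((Real.one_le_rpow hi (by linarith)).trans_lt (hS i))
  exact fun halg => not_liouvilleWith_of_isAlgebraic halg hp <|
    liouvilleWith_of_tendsto_prod hS1 hmono hB (hσ0.trans hσθ) hσθ
      (summable_rpow_neg hσ0.le ((div_lt_iff₀' (by linarith)).mp hσ) fun i => (hS i).le)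
      (by linarith) (by linarith) hpκ hBS hfreq hL

theorem exists_tendsto_prod_and_transcendental {a A B : ℕ → ℕ} (ha : Monotone a)
    (haA : ∀ i, a i ≤ A i) (hB : ∀ i, 0 < B i) {ε θ κ C : ℝ} (hε : 0 < ε)
    (hεθ : 1 < (1 + ε) * θ) (hκ : 2 < κ)
    (hpow : ∀ i : ℕ, ((i + 1 : ℕ) : ℝ) ^ (1 + ε) < a i)
    (hBA : ∀ i, (B i : ℝ) / A i ≤ C * (A i : ℝ) ^ (-θ))
    (hfreq : ∀ G, ∃ᶠ n in atTop, G * (κ / θ + 1) ^ n < Real.log (a n)) :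
    ∃ L : ℝ, Tendsto (fun N => ∏ i ∈ Finset.range N, (1 + (B i : ℝ) / A i)) atTop (nhds L) ∧
      Transcendental ℚ L := by
  have hθ : 0 < θ := pos_of_mul_pos_right (zero_lt_one.trans hεθ) (by linarith)
  have ha0 (i : ℕ) : (0 : ℝ) < a i := lt_of_le_of_lt (by positivity) (hpow i)
  have hA (i : ℕ) : i < A i := by
    have hi : ((i + 1 : ℕ) : ℝ) < a i :=
      (Real.self_le_rpow_of_one_le (Nat.one_le_cast.mpr (by omega)) (by linarith)).trans_lt (hpow i)
    exact (Nat.lt_succ_self i).trans ((Nat.cast_lt.mp hi).trans_le (haA i))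
  have hsum : Summable fun i => (B i : ℝ) / A i :=
    Summable.of_nonneg_of_le (fun i => by positivity) hBA
      ((summable_rpow_neg hθ.le hεθ fun i =>
        (hpow i).le.trans (Nat.cast_le.mpr (haA i))).mul_left C)
  have hprod := (Real.multipliable_one_add_of_summable hsum).hasProd
  obtain ⟨σ, hσ⟩ := exists_equiv_monotone_comp hA
  have haσ (i : ℕ) : (a i : ℝ) ≤ A (σ i) :=
    Nat.cast_le.mpr (le_apply_of_monotone_comp ha haA σ.injective hσ i)
  refine ⟨_, hprod.tendsto_prod_nat, ?_⟩
  exact transcendental_of_tendsto_prod hσ (fun i => hB (σ i)) hε hεθ hκ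
    (fun i => (hpow i).trans_le (haσ i)) (fun i => hBA (σ i))
    (fun G => (hfreq G).mono fun n hn => hn.trans_le (Real.log_le_log (ha0 n) (haσ n)))
    ((Equiv.hasProd_iff σ).mpr hprod).tendsto_prod_nat

lemma prod_Icc_one_eq_prod_range {M : Type*} [CommMonoid M] (f : ℕ → M) (N : ℕ) :
    ∏ n ∈ Finset.Icc 1 N, f n = ∏ i ∈ Finset.range N, f (i + 1) := by
  rw [Finset.range_eq_Ico, Finset.prod_Ico_add' f, zero_add, Finset.Ico_add_one_right_eq_Icc]

end Transcendence

end

end RothTheorem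

/-- (Theorem `products over Q`, transcendence part.)
If `{a_n}` and `{b_n}` are positive integers with `n^(1+ε) < a_n ≤ a_{n+1}`,
`b_n ≤ a_n^β · 2^((log₂ a_n)^α)`, and there is `δ > 0` with
`limsup a_n^(((2+δ)/(1-β)+1)^(-n)) = ∞`, then for every sequence `{c_n}` of positive
integers the product `∏ (1 + b_n/(a_n c_n))` converges to a transcendental number. -/
theorem stmt_1 (ε α β : ℝ) (hε : 0 < ε) (hα : 0 < α ∧ α < 1)
    (hβ : 0 ≤ β ∧ β < ε / (1 + ε))
    (a b : ℕ → ℕ)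
    (hpos : ∀ n : ℕ, 1 ≤ n → 0 < a n ∧ 0 < b n)
    (ha : ∀ n : ℕ, 1 ≤ n → (n : ℝ) ^ (1 + ε) < (a n : ℝ) ∧ a n ≤ a (n + 1))
    (hb : ∀ n : ℕ, 1 ≤ n →
      (b n : ℝ) ≤ (a n : ℝ) ^ β * 2 ^ (Real.logb 2 (a n : ℝ) ^ α))
    (hlimsup : ∃ δ : ℝ, 0 < δ ∧ Filter.limsup (fun n : ℕ =>
        (((a n : ℝ) ^ (((2 + δ) / (1 - β) + 1) ^ (-(n : ℝ))) : ℝ) : EReal))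
        Filter.atTop = ⊤) :
    ∀ c : ℕ → ℕ, (∀ n, 0 < c n) →
      ∃ L : ℝ,
        Tendsto (fun N => ∏ n ∈ Finset.Icc 1 N,
          (1 + (b n : ℝ) / ((a n : ℝ) * (c n : ℝ)))) atTop (nhds L) ∧
        Transcendental ℚ L := by
  intro c hc
  obtain ⟨δ, hδ, hlim⟩ := hlimsup
  obtain ⟨θ, κ, hθβ, hεθ, hκ, hκθ⟩ := RothTheorem.exists_roth_exponents hε hβ.2 hδ
  obtain ⟨C, hC, hgrowth⟩ := RothTheorem.exists_rpow_mul_two_rpow_le hα.1.le hα.2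
    (lt_sub_comm.mp hθβ)
  have ha0 (n : ℕ) (hn : 1 ≤ n) : (0 : ℝ) < a n := Nat.cast_pos.mpr (hpos n hn).1
  have haA (i : ℕ) : a (i + 1) ≤ a (i + 1) * c (i + 1) := Nat.le_mul_of_pos_right _ (hc _)
  have hB (i : ℕ) : (b (i + 1) : ℝ) ≤ C * (a (i + 1) : ℝ) ^ (1 - θ) :=
    (hb _ (by omega)).trans (hgrowth _ (Nat.one_le_cast.mpr (hpos _ (by omega)).1))
  have hD : 0 < (2 + δ) / (1 - β) + 1 := by
    have : 0 < θ := pos_of_mul_pos_right (zero_lt_one.trans hεθ) (by linarith)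
    rw [← hκθ]
    positivity
  have hfreq := RothTheorem.frequently_lt_log_succ_of_limsup_eq_top ha0 hD hlim
  obtain ⟨L, hL, htrans⟩ := RothTheorem.exists_tendsto_prod_and_transcendental
    (monotone_nat_of_le_succ fun i => (ha (i + 1) (by omega)).2) haA
    (fun i => (hpos (i + 1) (by omega)).2) hε hεθ hκ (fun i => (ha (i + 1) (by omega)).1)
    (fun i => RothTheorem.div_le_mul_rpow_neg (ha0 _ (by omega)) (Nat.cast_le.mpr (haA i))
      (by linarith [hβ.1]) hC.le (hB i))
    (hκθ ▸ hfreq)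
  exact ⟨L, by simpa only [RothTheorem.prod_Icc_one_eq_prod_range, Nat.cast_mul] using hL, htrans⟩
end
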